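/- Let G be a finite group of odd order and let p be an odd prime with p ≡ 2 (mod 3) such that (p-1)/2 is even. If acd_{ℚ(ζ_p)}(G) < 3p²/(p²+2), then G is p-nilpotent. -/

import Mathlib

/-!
Write `k = ℚ(ζ_p)`. By `exists_par` and `irrT_eq` there is an exponent `t` (acting as `1 + p` on `p`-elements and as
inversion on `p'`-elements) such that the `k`-valued irreducible characters of `G` are exactly those fixed by
`g ↦ g ^ t`. The linear ones are the homomorphisms to the `p`-th roots of unity, forming the group `AA p G`; let
`n₁` be its order. As `|G|` is odd, all degrees are odd (`irr_deg_odd`), so they are `1`, `3` or at least `5`.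

*Some `k`-valued `χ` has degree `3`.* Trace computations with `3 × 3` matrices (`eq_one_of_traces`,
`trace_zero_or_one`) show that the Sylow `p`-subgroup of `G / ker χ` is abelian of exponent `p` and normal of index
`3`, and it has a non-invariant linear character; pulling back gives a normal subgroup `U` of index `3` of `G` with a
non-invariant linear character `l` of order `p` (`deg3`). Let `θ` be the conjugation by an element `γ` that moves `l`,
and let `ν = θ l / l`; then `ν · θ ν · θ² ν = 1`. As `p ≡ 2 (mod 3)`, the form `x² - xy + y²` is anisotropic over
`𝔽_p`, so `⟨ν, θ ν⟩` has order `p²` and no nontrivial `θ`-fixed point. Multiplying its nontrivial elements by the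
restrictions of `AA p G` gives `(p² - 1) n₁` non-invariant linear characters of `U`, hence at least `(p² - 1) n₁ / 3`
`k`-valued characters of `G` of degree `3` (`count3`). The average degree is then at least `3p² / (p² + 2)`,
contradicting the hypothesis.

*No `k`-valued character has degree `3`.* An average below `3`, with all nonlinear degrees at least `5`, means that
there are fewer than `2 n₁` characters. That this forces `p`-nilpotence (`claim`) is proved by induction on `|G|`. The
number of `k`-valued characters equals the number of classes stable under `g ↦ g ^ t` (`count_T`), and these consist
of `p`-elements. Let `P` be a Sylow `p`-subgroup and `W(P)` the intersection of its abelian subgroups of maximal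
order. If `N(W(P)) < G`, control of fusion shows that `N(W(P))` inherits the hypothesis (`ClT_le`, `AA_card_le`), and
its normal `p`-complement yields one of `G` (`pnil_of_nrm`). If `W(P)` is normal, take a minimal normal subgroup `V`
of `G` inside it. The hypothesis passes to `G / V` (`quot_hyp`); if the complement does not lift, then `G = V ⋊ R` with
`V` noncentral, and Clifford theory over a linear character of `V` fixed by `P` gives `n₁` nonlinear characters
(`split_case`).

The group-theoretic input is `fusion_theorem`: in a group of odd order, `N(W(P))` controls fusion in `P`. It is a
version of Glauberman's `ZJ`-theorem. Odd order is used directly, through `quadratic_pair`, to obtain `p`-stability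
without solvability; replacement of abelian subgroups then makes `W(P)` normal when `C(O_p(G)) ≤ O_p(G)`
(`W_normal`), and Alperin's argument (`alperin`) reduces the general case to this one.
-/

/-- The set of irreducible complex characters of `G`. -/
noncomputable def Irr (G : Type) [Group G] : Set (G → ℂ) :=
  {χ | ∃ V : FDRep ℂ G, CategoryTheory.Simple V ∧ χ = FDRep.character V}

/-- A group `G` has a normal `p`-complement: a normal subgroup of order coprime
to `p` whose index is a power of `p`. -/
def HasNormalPComplement (G : Type) [Group G] (p : ℕ) : Prop :=
  ∃ N : Subgroup G, N.Normal ∧ Nat.Coprime (Nat.card N) p ∧ ∃ n : ℕ, N.index = p ^ n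

/-- The irreducible complex characters of `G` all of whose values lie in `k`. -/
noncomputable def IrrK (G : Type) [Group G] (k : Subfield ℂ) : Set (G → ℂ) :=
  {χ ∈ Irr G | ∀ g, χ g ∈ k}

/-- The average of the degrees of the `k`-valued irreducible characters of `G`. -/
noncomputable def acdK (G : Type) [Group G] (k : Subfield ℂ) : ℝ :=
  (∑ᶠ χ ∈ IrrK G k, (χ 1).re) / (Nat.card (IrrK G k))

/-- The subfield `ℚ(ζ_p)` of `ℂ` generated by the `p`-th roots of unity. -/
noncomputable def Qzeta (p : ℕ) : Subfield ℂ :=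
  Subfield.closure {z : ℂ | z ^ p = 1}

set_option linter.all false

/-! ### Conjugates, normalizers and Sylow subgroups of subgroups -/

namespace OddP
open Subgroup

variable {G : Type} [Group G]

/-- The conjugate `g A g⁻¹` of a subgroup. -/
def cj (g : G) (A : Subgroup G) : Subgroup G := A.map (MulAut.conj g).toMonoidHom

lemma mem_cj {g x : G} {A : Subgroup G} : x ∈ cj g A ↔ g⁻¹ * x * g ∈ A := by
  unfold cj
  constructor
  · rintro ⟨a, ha, rfl⟩
    simpa [mul_assoc] using ha
  · intro h
    exact ⟨_, h, by simp [mul_assoc]⟩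

lemma conj_mem_cj {g a : G} {A : Subgroup G} (h : a ∈ A) : g * a * g⁻¹ ∈ cj g A := by
  rw [mem_cj]; simpa [mul_assoc] using h

@[simp] lemma cj_one (A : Subgroup G) : cj 1 A = A := by ext; simp [mem_cj]

lemma cj_cj (g h : G) (A : Subgroup G) : cj g (cj h A) = cj (g * h) A := by
  ext; simp [mem_cj, mul_assoc]

@[simp] lemma cj_inv_cj (g : G) (A : Subgroup G) : cj g⁻¹ (cj g A) = A := by
  rw [cj_cj]; simp

@[simp] lemma cj_cj_inv (g : G) (A : Subgroup G) : cj g (cj g⁻¹ A) = A := by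
  rw [cj_cj]; simp

lemma cj_mono {g : G} {A B : Subgroup G} (h : A ≤ B) : cj g A ≤ cj g B := Subgroup.map_mono h

lemma cj_le_cj {g : G} {A B : Subgroup G} : cj g A ≤ cj g B ↔ A ≤ B :=
  ⟨fun h => by simpa using cj_mono (g := g⁻¹) h, cj_mono⟩

lemma cj_le_iff {g : G} {A B : Subgroup G} : cj g A ≤ B ↔ ∀ a ∈ A, g * a * g⁻¹ ∈ B :=
  ⟨fun h _ ha => h (conj_mem_cj ha), fun h x hx => by
    have := h _ (mem_cj.1 hx); simpa [mul_assoc] using this⟩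

lemma cj_le_comm {g : G} {A B : Subgroup G} : cj g A ≤ B ↔ A ≤ cj g⁻¹ B := by
  rw [← cj_le_cj (g := g⁻¹)]; simp

lemma cj_inf (g : G) (A B : Subgroup G) : cj g (A ⊓ B) = cj g A ⊓ cj g B := by
  ext; simp [mem_cj]

lemma cj_sup (g : G) (A B : Subgroup G) : cj g (A ⊔ B) = cj g A ⊔ cj g B := Subgroup.map_sup _ _ _

lemma card_cj (g : G) (A : Subgroup G) : Nat.card (cj g A) = Nat.card A :=
  (Nat.card_congr (A.equivMapOfInjective _ (MulAut.conj g).injective).toEquiv).symm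

lemma pg_cj {p : ℕ} {g : G} {A : Subgroup G} (h : IsPGroup p A) : IsPGroup p (cj g A) := h.map _

lemma cj_eq_of_mem {g : G} {A : Subgroup G} (h : g ∈ A) : cj g A = A := by
  ext x
  rw [mem_cj, Subgroup.mul_mem_cancel_right _ h, Subgroup.mul_mem_cancel_left _ (A.inv_mem h)]

lemma cj_normal {g : G} {A : Subgroup G} [hA : A.Normal] : cj g A = A := by
  ext x
  rw [mem_cj]
  constructor
  · intro h; simpa [mul_assoc] using hA.conj_mem _ h g
  · intro h; simpa [mul_assoc] using hA.conj_mem _ h g⁻¹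

/-- The normalizer of a subgroup. -/
abbrev nrm (A : Subgroup G) : Subgroup G := Subgroup.normalizer (A : Set G)

lemma mem_nrm {g : G} {A : Subgroup G} : g ∈ nrm A ↔ cj g A = A := by
  rw [Subgroup.mem_normalizer_iff]
  constructor
  · intro h
    ext x
    rw [mem_cj, h]
    simp [mul_assoc]
  · intro h x
    conv_rhs => rw [← h]
    rw [mem_cj]
    simp [mul_assoc]

lemma eq_of_le_card [Finite G] {A B : Subgroup G} (h : A ≤ B) (hc : Nat.card B ≤ Nat.card A) :
    A = B := Subgroup.eq_of_le_of_card_ge h hc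

lemma card_lt [Finite G] {A B : Subgroup G} (h : A < B) : Nat.card A < Nat.card B := by
  by_contra hc
  exact h.ne (eq_of_le_card h.le (not_lt.1 hc))

lemma card_mono [Finite G] {A B : Subgroup G} (h : A ≤ B) : Nat.card A ≤ Nat.card B :=
  Subgroup.card_le_of_le h

lemma mem_nrm_of_le [Finite G] {g : G} {A : Subgroup G} (h : cj g A ≤ A) : g ∈ nrm A :=
  mem_nrm.2 (eq_of_le_card h (card_cj g A).ge)

lemma nrm_cj (g : G) (A : Subgroup G) : nrm (cj g A) = cj g (nrm A) := by
  ext x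
  rw [mem_cj, mem_nrm, mem_nrm, cj_cj]
  constructor
  · intro h
    rw [mul_assoc, ← cj_cj, h]; simp
  · intro h
    have := congrArg (cj g) h
    rw [cj_cj] at this
    simpa [mul_assoc] using this

lemma le_nrm (A : Subgroup G) : A ≤ nrm A := Subgroup.le_normalizer

lemma nrm_inf_le {A B : Subgroup G} : nrm A ⊓ nrm B ≤ nrm (A ⊓ B) := by
  rintro x ⟨h1, h2⟩
  rw [mem_nrm, cj_inf, mem_nrm.1 h1, mem_nrm.1 h2]

lemma nrm_sup_le {A B : Subgroup G} : nrm A ⊓ nrm B ≤ nrm (A ⊔ B) := by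
  rintro x ⟨h1, h2⟩
  rw [mem_nrm, cj_sup, mem_nrm.1 h1, mem_nrm.1 h2]

lemma nrm_eq_top {A : Subgroup G} : nrm A = ⊤ ↔ A.Normal := Subgroup.normalizer_eq_top_iff

lemma normal_of_cj {A : Subgroup G} (h : ∀ g, cj g A ≤ A) : A.Normal :=
  ⟨fun a ha g => cj_le_iff.1 (h g) a ha⟩

/-- `P` is a Sylow `p`-subgroup of the subgroup `L`, i.e. a maximal `p`-subgroup of it. Both are kept as
subgroups of the ambient group `G`. -/
structure IsSyl (p : ℕ) (P L : Subgroup G) : Prop where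
  le : P ≤ L
  pg : IsPGroup p P
  max : ∀ Q ≤ L, IsPGroup p Q → P ≤ Q → Q = P

lemma isSyl_of_sylow {p : ℕ} {L : Subgroup G} (S : Sylow p L) :
    IsSyl p (S.1.map L.subtype) L where
  le := Subgroup.map_subtype_le _
  pg := S.2.map _
  max := by
    intro Q hQ hp hle
    have h1 : S.1 ≤ Q.subgroupOf L := by
      intro x hx
      exact hle ⟨x, hx, rfl⟩
    have h2 : IsPGroup p (Q.subgroupOf L) := hp.comap_subtype
    rw [← S.3 h2 h1, Subgroup.subgroupOf_map_subtype, inf_eq_left.2 hQ]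

/-- A Sylow subgroup of `L` as an element of the library's type `Sylow p L`. -/
def IsSyl.toSylow {p : ℕ} {P L : Subgroup G} (h : IsSyl p P L) : Sylow p L where
  toSubgroup := P.subgroupOf L
  isPGroup' := h.pg.comap_subtype
  is_maximal' := by
    intro Q hQ hle
    have := h.max (Q.map L.subtype) (Subgroup.map_subtype_le _) (hQ.map _) (by
      have := Subgroup.map_mono (f := L.subtype) hle
      rwa [Subgroup.subgroupOf_map_subtype, inf_eq_left.2 h.le] at this)
    rw [← this]
    exact (Subgroup.comap_map_eq_self_of_injective L.subtype_injective Q).symm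

lemma isSyl_top {p : ℕ} (S : Sylow p G) : IsSyl p S.1 ⊤ where
  le := le_top
  pg := S.2
  max := fun _ _ h hle => S.3 h hle

variable {p : ℕ}

lemma exists_syl {Q L : Subgroup G} (hQ : Q ≤ L) (hp : IsPGroup p Q) :
    ∃ S, Q ≤ S ∧ IsSyl p S L := by
  obtain ⟨S, hS⟩ := (hp.comap_subtype (K := L)).exists_le_sylow
  refine ⟨_, ?_, isSyl_of_sylow S⟩
  intro x hx
  exact ⟨⟨x, hQ hx⟩, hS hx, rfl⟩

lemma IsSyl.cj {P L : Subgroup G} (h : IsSyl p P L) (g : G) :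
    IsSyl p (cj g P) (OddP.cj g L) where
  le := cj_mono h.le
  pg := pg_cj h.pg
  max := by
    intro Q hQ hp hle
    have := h.max (OddP.cj g⁻¹ Q) (by simpa using cj_mono (g := g⁻¹) hQ) (pg_cj hp)
      (by simpa using cj_mono (g := g⁻¹) hle)
    rw [← this]; simp

lemma IsSyl.of_le {P L M : Subgroup G} (h : IsSyl p P L) (h1 : P ≤ M) (h2 : M ≤ L) :
    IsSyl p P M := ⟨h1, h.pg, fun Q hQ => h.max Q (hQ.trans h2)⟩

section
variable [Finite G] [Fact p.Prime]

lemma IsSyl.conj {P L Q : Subgroup G} (h : IsSyl p P L) (hQ : Q ≤ L) (hp : IsPGroup p Q) :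
    ∃ l ∈ L, OddP.cj l Q ≤ P := by
  obtain ⟨S, hQS⟩ := (hp.comap_subtype (K := L)).exists_le_sylow
  obtain ⟨l, hl⟩ := MulAction.exists_smul_eq L S h.toSylow
  refine ⟨l, l.2, cj_le_iff.2 fun a ha => ?_⟩
  have h1 : (⟨a, hQ ha⟩ : L) ∈ S.1 := hQS (by simpa [Subgroup.mem_subgroupOf] using ha)
  have h2 : l * ⟨a, hQ ha⟩ * l⁻¹ ∈ (l • S).1 := by
    rw [Sylow.coe_subgroup_smul]
    exact ⟨_, h1, by simp [MulAut.conj_apply]⟩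
  rw [hl] at h2
  exact h2

lemma IsSyl.conj_eq {P L Q : Subgroup G} (h : IsSyl p P L) (hQ : IsSyl p Q L) :
    ∃ l ∈ L, OddP.cj l Q = P := by
  obtain ⟨l, hl, h1⟩ := h.conj hQ.le hQ.pg
  refine ⟨l, hl, ?_⟩
  have := hQ.cj l
  rw [cj_eq_of_mem hl] at this
  exact (this.max P h.le h.pg h1).symm

lemma IsSyl.card_eq {P L Q : Subgroup G} (h : IsSyl p P L) (hQ : IsSyl p Q L) :
    Nat.card P = Nat.card Q := by
  obtain ⟨l, hl, rfl⟩ := h.conj_eq hQ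
  exact card_cj _ _

lemma IsSyl.of_card {P L Q : Subgroup G} (h : IsSyl p P L) (hQ : Q ≤ L) (hp : IsPGroup p Q)
    (hc : Nat.card P ≤ Nat.card Q) : IsSyl p Q L := by
  obtain ⟨S, hS, hS'⟩ := exists_syl hQ hp
  rw [eq_of_le_card hS (by rw [← h.card_eq hS']; exact hc)]
  exact hS'

lemma IsSyl.le_of_nrm {P L Q : Subgroup G} (h : IsSyl p P L) (hQ : Q ≤ L) (hp : IsPGroup p Q)
    (hn : L ≤ nrm Q) : Q ≤ P := by
  obtain ⟨l, hl, h1⟩ := h.conj hQ hp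
  rwa [mem_nrm.1 (hn hl)] at h1

lemma IsSyl.inf_normal {P L N : Subgroup G} (h : IsSyl p P L) (hN : N ≤ L) (hn : L ≤ nrm N) :
    IsSyl p (P ⊓ N) N := by
  obtain ⟨S, -, hS⟩ := exists_syl (p := p) (bot_le : ⊥ ≤ N) IsPGroup.of_bot
  obtain ⟨l, hl, h1⟩ := h.conj (hS.le.trans hN) hS.pg
  have h2 := hS.cj l
  rw [mem_nrm.1 (hn hl)] at h2
  have h3 := h2.max (P ⊓ N) inf_le_right h.pg.to_inf_left (le_inf h1 h2.le)
  rwa [h3]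

/-- The Frattini argument. -/
lemma frattini_arg {P L N : Subgroup G} (h : IsSyl p P N) (hn : L ≤ nrm N) {l : G} (hl : l ∈ L) :
    ∃ n ∈ N, n * l ∈ nrm P := by
  have h1 := h.cj l
  rw [mem_nrm.1 (hn hl)] at h1
  obtain ⟨n, hn, h2⟩ := h.conj_eq h1
  exact ⟨n, hn, mem_nrm.2 (by rw [← cj_cj, h2])⟩

lemma pg_sup {A B : Subgroup G} (hA : IsPGroup p A) (hB : IsPGroup p B) (h : A ≤ nrm B) :
    IsPGroup p (A ⊔ B : Subgroup G) := hA.to_sup_of_normal_right' hB h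

lemma lt_nrm {D P : Subgroup G} (hP : IsPGroup p P) (h : D < P) : D < P ⊓ nrm D := by
  have := hP.isNilpotent
  have h1 := Group.normalizerCondition_of_isNilpotent (G := P) (D.subgroupOf P) (by
    rw [lt_top_iff_ne_top, Ne, Subgroup.subgroupOf_eq_top]; exact h.not_ge)
  refine lt_of_le_of_ne (le_inf h.le (le_nrm _)) fun he => ?_
  obtain ⟨x, hx, hx'⟩ := SetLike.exists_of_lt h1
  apply hx'
  rw [Subgroup.mem_subgroupOf, he]
  refine ⟨x.2, ?_⟩
  refine mem_nrm_of_le (cj_le_iff.2 fun a ha => ?_)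
  rw [Subgroup.mem_normalizer_iff] at hx
  simpa [Subgroup.mem_subgroupOf] using (hx ⟨a, h.le ha⟩).1 (by simpa [Subgroup.mem_subgroupOf])

lemma IsSyl.not_dvd {P L : Subgroup G} (h : IsSyl p P L) : ¬ p ∣ P.relIndex L :=
  h.toSylow.not_dvd_index

lemma isSyl_of_not_dvd {P L : Subgroup G} (hle : P ≤ L) (hp : IsPGroup p P)
    (h : ¬ p ∣ P.relIndex L) : IsSyl p P L := by
  obtain ⟨S, hS, hS'⟩ := exists_syl hle hp
  have h1 : P.relIndex S ∣ P.relIndex L := ⟨_, (Subgroup.relIndex_mul_relIndex P S L hS hS'.le).symm⟩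
  obtain ⟨n, hn⟩ := hS'.pg.index (P.subgroupOf S)
  have hn0 : n = 0 := by
    by_contra h0
    exact h (((dvd_pow_self p h0).trans (dvd_of_eq hn.symm)).trans h1)
  have : P = S := le_antisymm hS (by
    rw [← Subgroup.subgroupOf_eq_top, ← Subgroup.index_eq_one, hn, hn0, pow_zero])
  rwa [this]

lemma IsSyl.map {H : Type} [Group H] [Finite H] {P L : Subgroup G} (h : IsSyl p P L) (f : G →* H) :
    IsSyl p (P.map f) (L.map f) := by
  have hle := h.le
  refine isSyl_of_not_dvd (Subgroup.map_mono h.le) (h.pg.map f) fun hd => h.not_dvd (hd.trans ?_)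
  have h1 := Subgroup.index_map_dvd (P.subgroupOf L) (f.subgroupMap_surjective L)
  have h2 : (P.subgroupOf L).map (f.subgroupMap L) = (P.map f).subgroupOf (L.map f) := by
    ext ⟨x, hx⟩
    rw [Subgroup.mem_subgroupOf]
    constructor
    · rintro ⟨a, ha, h⟩
      exact ⟨a, ha, congrArg Subtype.val h⟩
    · rintro ⟨a, ha, h⟩
      exact ⟨⟨a, hle ha⟩, ha, Subtype.ext h⟩
  rwa [h2] at h1
end
end OddP

/-! ### The Baer–Suzuki theorem -/

namespace OddP
open Subgroup
variable {G : Type} [Group G] {p : ℕ}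

lemma closure_le_nrm {K : Set G} {n : G} (hK : ∀ k ∈ K, n * k * n⁻¹ ∈ K) [Finite G] :
    n ∈ nrm (closure K) := by
  refine mem_nrm_of_le ?_
  unfold cj
  rw [MonoidHom.map_closure, closure_le]
  rintro _ ⟨k, hk, rfl⟩
  exact subset_closure (hK k hk)

section
variable [Finite G] [Fact p.Prime]

/-- If a normal subset `K` of a group meets the `p`-group `P` outside the subgroup `D` generated by
part of `K`, some element of `K ∩ P` outside `D` normalizes `D`. -/
lemma exists_normalizing {K : Set G} (hK : ∀ g : G, ∀ u ∈ K, g * u * g⁻¹ ∈ K) {P D : Subgroup G}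
    (hP : IsPGroup p P) (hDP : D ≤ P) (hD : D = closure (K ∩ D))
    (hne : ¬ K ∩ P ⊆ D) : ∃ u ∈ K, u ∈ P ∧ u ∉ D ∧ u ∈ nrm D := by
  classical
  let S : Set (Subgroup G) := {E | D ≤ E ∧ E ≤ P ∧ K ∩ E ⊆ D}
  have hS : S.Nonempty := ⟨D, le_rfl, hDP, fun x hx => hx.2⟩
  obtain ⟨E, hE, hmax⟩ := Set.exists_max_image S (fun E => Nat.card E) (Set.toFinite _) hS
  obtain ⟨hDE, hEP, hKE⟩ := hE
  have hlt : E < P := lt_of_le_of_ne hEP (by rintro rfl; exact hne hKE)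
  have h1 := lt_nrm hP hlt
  have h2 : ¬ K ∩ (P ⊓ nrm E : Subgroup G) ⊆ D := fun h =>
    absurd (hmax _ ⟨hDE.trans h1.le, inf_le_left, h⟩) (not_le.2 (card_lt h1))
  obtain ⟨u, ⟨huK, huP, huE⟩, huD⟩ := Set.not_subset.1 h2
  refine ⟨u, huK, huP, huD, ?_⟩
  have h3 : K ∩ E = K ∩ D := by
    ext x
    exact ⟨fun hx => ⟨hx.1, hKE hx⟩, fun hx => ⟨hx.1, hDE hx.2⟩⟩
  rw [hD, ← h3]
  refine closure_le_nrm fun k hk => ⟨hK _ _ hk.1, ?_⟩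
  exact ((Subgroup.mem_normalizer_iff.1 huE) k).1 hk.2

/-- The Baer–Suzuki theorem, for a normal subset. -/
theorem baer_suzuki {K : Set G} (hK : ∀ g : G, ∀ u ∈ K, g * u * g⁻¹ ∈ K)
    (h2 : ∀ u ∈ K, ∀ v ∈ K, IsPGroup p (closure {u, v})) : IsPGroup p (closure K) := by
  classical
  by_cases hall : ∀ P Q : Sylow p G, K ∩ (P : Set G) = K ∩ (Q : Set G)
  · obtain ⟨P⟩ : Nonempty (Sylow p G) := inferInstance
    refine P.2.to_le (closure_le _ |>.2 fun u hu => ?_)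
    obtain ⟨Q, hQ⟩ := (h2 u hu u hu).exists_le_sylow
    have : u ∈ K ∩ (Q : Set G) := ⟨hu, hQ (subset_closure (by simp))⟩
    rw [hall Q P] at this
    exact this.2
  exfalso
  push Not at hall
  let S : Set (Sylow p G × Sylow p G) := {x | K ∩ (x.1 : Set G) ≠ K ∩ (x.2 : Set G)}
  have hS : S.Nonempty := by obtain ⟨P, Q, h⟩ := hall; exact ⟨(P, Q), h⟩
  obtain ⟨⟨P, Q⟩, hPQ, hmax⟩ := Set.exists_max_image S
    (fun x => (K ∩ (x.1 : Set G) ∩ (x.2 : Set G)).ncard) (Set.toFinite _) hS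
  have hPQ : K ∩ (P : Set G) ≠ K ∩ (Q : Set G) := hPQ
  set D : Subgroup G := closure (K ∩ (P : Set G) ∩ (Q : Set G)) with hDdef
  have hDP : D ≤ P.1 := closure_le _ |>.2 fun x hx => hx.1.2
  have hDQ : D ≤ Q.1 := closure_le _ |>.2 fun x hx => hx.2
  have hKD : K ∩ (D : Set G) = K ∩ (P : Set G) ∩ (Q : Set G) := by
    ext x
    exact ⟨fun hx => ⟨⟨hx.1, hDP hx.2⟩, hDQ hx.2⟩, fun hx => ⟨hx.1.1, subset_closure hx⟩⟩
  have hD : D = closure (K ∩ D) := by rw [hKD]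
  have hcard : ∀ P Q : Sylow p G, (K ∩ (P : Set G)).ncard = (K ∩ (Q : Set G)).ncard := by
    intro P Q
    obtain ⟨g, rfl⟩ := MulAction.exists_smul_eq G P Q
    have : K ∩ ((g • P : Sylow p G) : Set G) = (fun x => g * x * g⁻¹) '' (K ∩ (P : Set G)) := by
      ext x
      constructor
      · rintro ⟨hx, hx'⟩
        obtain ⟨y, hy, rfl⟩ : ∃ y ∈ P.1, g * y * g⁻¹ = x := hx'
        refine ⟨y, ⟨?_, hy⟩, rfl⟩
        have := hK g⁻¹ _ hx
        simpa [mul_assoc] using this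
      · rintro ⟨y, hy, rfl⟩
        exact ⟨hK _ _ hy.1, ⟨y, hy.2, rfl⟩⟩
    rw [this, Set.ncard_image_of_injective]
    intro a b hab
    simpa using hab
  have hne : ∀ P Q : Sylow p G, K ∩ (P : Set G) ≠ K ∩ (Q : Set G) →
      ¬ K ∩ (P : Set G) ⊆ K ∩ (Q : Set G) := fun P Q h hs =>
    h (Set.eq_of_subset_of_ncard_le hs (hcard Q P).le (Set.toFinite _))
  obtain ⟨u, huK, huP, huD, huN⟩ := exists_normalizing hK P.2 hDP hD (fun hs =>
    hne P Q hPQ fun x hx => ⟨hx.1, hDQ (hs hx)⟩)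
  obtain ⟨v, hvK, hvQ, hvD, hvN⟩ := exists_normalizing hK Q.2 hDQ hD (fun hs =>
    hne Q P hPQ.symm fun x hx => ⟨hx.1, hDP (hs hx)⟩)
  have huv : closure {u, v} ≤ nrm D := by
    rw [closure_le]
    rintro x (rfl | rfl) <;> assumption
  have hpg := pg_sup (h2 u huK v hvK) (P.2.to_le hDP) huv
  obtain ⟨R, hR⟩ := hpg.exists_le_sylow
  have hDR : D ≤ R.1 := le_sup_right.trans hR
  have huR : u ∈ R.1 := hR (mem_sup_left (subset_closure (by simp)))
  have hvR : v ∈ R.1 := hR (mem_sup_left (subset_closure (by simp)))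
  have key : ∀ (T : Sylow p G) (w : G), D ≤ T.1 → w ∈ K → w ∈ T.1 → w ∈ R.1 → w ∉ D →
      K ∩ (T : Set G) = K ∩ (R : Set G) := by
    intro T w hDT hwK hwT hwR hwD
    by_contra hne'
    have h1 := hmax (T, R) hne'
    have h3 : (K ∩ (P : Set G) ∩ (Q : Set G)) ⊂ (K ∩ (T : Set G) ∩ (R : Set G)) := by
      rw [← hKD]
      refine ⟨fun x hx => ⟨⟨hx.1, hDT hx.2⟩, hDR hx.2⟩, fun hs => hwD ?_⟩
      exact (hs ⟨⟨hwK, hwT⟩, hwR⟩).2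
    exact absurd (Set.ncard_lt_ncard h3 (Set.toFinite _)) (not_lt.2 h1)
  exact hPQ ((key P u hDP huK huP huR huD).trans (key Q v hDQ hvK hvQ hvR hvD).symm)
end
end OddP

/-! ### Pairs of quadratic automorphisms generating a group of odd order -/

namespace OddP
open Subgroup

/-- Two commuting involutions of a finite set of odd cardinality have a common fixed point. -/
lemma exists_common_fixed {Ω : Type} [Finite Ω] (hodd : Odd (Nat.card Ω)) (f g : Ω → Ω)
    (hf : ∀ x, f (f x) = x) (hg : ∀ x, g (g x) = x) (hfg : ∀ x, f (g x) = g (f x)) :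
    ∃ x, f x = x ∧ g x = x := by
  classical
  have key : ∀ {Ω : Type} [Finite Ω] (_ : Odd (Nat.card Ω)) (f : Ω → Ω)
      (_ : ∀ x, f (f x) = x), Odd (Nat.card {x // f x = x}) := by
    intro Ω _ ho f hf
    have := Fintype.ofFinite Ω
    let e : Function.End Ω := f
    have h1 := Equiv.Perm.card_fixedPoints_modEq (p := 2) (n := 1) (f := e) (by
      funext x; exact hf x)
    rw [Nat.odd_iff, Nat.card_eq_fintype_card] at ho ⊢
    rw [← ho]
    have h2 : Fintype.card (Function.fixedPoints e) = Fintype.card {x // f x = x} :=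
      Fintype.card_congr (Equiv.subtypeEquivRight fun x => Iff.rfl)
    rw [← h2]
    exact h1.symm
  have h1 := key hodd f hf
  let g' : {x // f x = x} → {x // f x = x} := fun x => ⟨g x, by rw [hfg, x.2]⟩
  have h2 := key h1 g' (fun x => Subtype.ext (hg x))
  obtain ⟨x⟩ : Nonempty {x // g' x = x} := by
    by_contra h
    rw [not_nonempty_iff] at h
    simp at h2
  exact ⟨x, x.1.2, congrArg Subtype.val x.2⟩

lemma odd_card_syl {G : Type} [Group G] [Finite G] {p : ℕ} [Fact p.Prime] (L : Subgroup G)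
    (hL : Odd (Nat.card L)) : Odd (Nat.card {S : Subgroup G // IsSyl p S L}) := by
  let e : {S : Subgroup G // IsSyl p S L} ≃ Sylow p L :=
    { toFun := fun S => S.2.toSylow
      invFun := fun S => ⟨_, isSyl_of_sylow S⟩
      left_inv := fun S => Subtype.ext (by
        change (S.1.subgroupOf L).map L.subtype = S.1
        rw [Subgroup.subgroupOf_map_subtype, inf_eq_left.2 S.2.le])
      right_inv := fun S => Sylow.ext
        (Subgroup.comap_map_eq_self_of_injective L.subtype_injective S.1) }
  rw [Nat.card_congr e]
  obtain ⟨P⟩ : Nonempty (Sylow p L) := inferInstance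
  exact hL.of_dvd_nat (P.card_dvd_index.trans P.1.index_dvd_card)

/-- A group of odd order generated by two elements acting quadratically on a finite abelian
`p`-group (`p` odd) has nonzero coinvariants. This replaces the classification of quadratic pairs in
`SL₂`: if there were none, then `T = AB + BA` would be invertible, the elements `(AB - BA) T⁻¹` and
`A + B` would induce commuting involutory automorphisms of the group, and these would fix a common
Sylow `p`-subgroup, whose fixed points would form an invariant subgroup with trivial action. -/
theorem quadratic_pair {M : Type} [AddCommGroup M] [Finite M] {p : ℕ} [hp : Fact p.Prime]
    (hpo : Odd p) (k : ℕ) (hM : ∀ m : M, p ^ k • m = 0) (X Y : (AddMonoid.End M)ˣ)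
    (hX : ((X : AddMonoid.End M) - 1) * (X - 1) = 0)
    (hY : ((Y : AddMonoid.End M) - 1) * (Y - 1) = 0)
    (hodd : Odd (Nat.card (closure {X, Y})))
    (hsurj : ∀ m : M, ∃ a b, m = ((X : AddMonoid.End M) - 1) a + ((Y : AddMonoid.End M) - 1) b) :
    Subsingleton M := by
  classical
  have : Finite (AddMonoid.End M) := DFunLike.finite (AddMonoid.End M)
  set A : AddMonoid.End M := X - 1 with hA
  set B : AddMonoid.End M := Y - 1 with hB
  set L := closure {X, Y} with hL
  set T : AddMonoid.End M := A * B + B * A with hT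
  have hA2 : ∀ z, A * (A * z) = 0 := fun z => by rw [← mul_assoc, hX, zero_mul]
  have hB2 : ∀ z, B * (B * z) = 0 := fun z => by rw [← mul_assoc, hY, zero_mul]
  have hTA : A * T = T * A := by
    have h1 : A * T = A * B * A := by rw [hT]; simp [mul_add, add_mul, mul_sub, sub_mul, mul_assoc, hX, hY, hA2, hB2]
    have h2 : T * A = A * B * A := by rw [hT]; simp [mul_add, add_mul, mul_sub, sub_mul, mul_assoc, hX, hY, hA2, hB2]
    rw [h1, h2]
  have hTB : B * T = T * B := by
    have h1 : B * T = B * A * B := by rw [hT]; simp [mul_add, add_mul, mul_sub, sub_mul, mul_assoc, hX, hY, hA2, hB2]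
    have h2 : T * B = B * A * B := by rw [hT]; simp [mul_add, add_mul, mul_sub, sub_mul, mul_assoc, hX, hY, hA2, hB2]
    rw [h1, h2]
  -- every `A b` is `A (B c)`, and then `A b = A (B (A d)) = T (A d)`
  have hA1 : ∀ m, ∃ c, A m = A (B c) := by
    intro m
    obtain ⟨a, b, rfl⟩ := hsurj m
    refine ⟨b, ?_⟩
    have : A (A a) = 0 := DFunLike.congr_fun hX a
    rw [map_add, this, zero_add]
  have hB1 : ∀ m, ∃ c, B m = B (A c) := by
    intro m
    obtain ⟨a, b, rfl⟩ := hsurj m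
    refine ⟨a, ?_⟩
    have : B (B b) = 0 := DFunLike.congr_fun hY b
    rw [map_add, this, add_zero]
  have hTs : Function.Surjective T := by
    have h1 : ∀ m, ∃ c, A m = T c := by
      intro m
      obtain ⟨c, hc⟩ := hA1 m
      obtain ⟨d, hd⟩ := hB1 c
      refine ⟨A d, ?_⟩
      have : A (A d) = 0 := DFunLike.congr_fun hX d
      change A m = A (B (A d)) + B (A (A d))
      rw [this, map_zero, add_zero, hc, hd]
    have h2 : ∀ m, ∃ c, B m = T c := by
      intro m
      obtain ⟨c, hc⟩ := hB1 m
      obtain ⟨d, hd⟩ := hA1 c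
      refine ⟨B d, ?_⟩
      have : B (B d) = 0 := DFunLike.congr_fun hY d
      change B m = A (B (B d)) + B (A (B d))
      rw [this, map_zero, zero_add, hc, hd]
    intro m
    obtain ⟨a, b, rfl⟩ := hsurj m
    obtain ⟨c, hc⟩ := h1 a
    obtain ⟨d, hd⟩ := h2 b
    exact ⟨c + d, by rw [map_add, hc, hd]⟩
  have hTi : Function.Injective T := Finite.injective_iff_surjective.2 hTs
  let eT : M ≃+ M := AddEquiv.ofBijective T ⟨hTi, hTs⟩
  let T' : AddMonoid.End M := eT.symm.toAddMonoidHom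
  have hTT' : T * T' = 1 := by ext m; exact eT.apply_symm_apply m
  have hT'T : T' * T = 1 := by ext m; exact eT.symm_apply_apply m
  have hT'A : A * T' = T' * A := by
    calc A * T' = T' * T * (A * T') := by rw [hT'T, one_mul]
      _ = T' * (T * A) * T' := by simp only [mul_assoc]
      _ = T' * A * (T * T') := by rw [← hTA]; simp only [mul_assoc]
      _ = T' * A := by rw [hTT', mul_one]
  have hT'B : B * T' = T' * B := by
    calc B * T' = T' * T * (B * T') := by rw [hT'T, one_mul]
      _ = T' * (T * B) * T' := by simp only [mul_assoc]
      _ = T' * B * (T * T') := by rw [← hTB]; simp only [mul_assoc]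
      _ = T' * B := by rw [hTT', mul_one]
  set al : AddMonoid.End M := (A * B - B * A) * T' with hal
  have halA : al * A = A := by
    have : (A * B - B * A) * A = A * T := by rw [hT]; simp [mul_add, add_mul, mul_sub, sub_mul, mul_assoc, hX, hY, hA2, hB2]
    rw [hal, mul_assoc, ← hT'A, ← mul_assoc, this, mul_assoc, hTT', mul_one]
  have hAal : A * al = -A := by
    have : A * (A * B - B * A) = -(A * T) := by rw [hT]; simp [mul_add, add_mul, mul_sub, sub_mul, mul_assoc, hX, hY, hA2, hB2]
    rw [hal, ← mul_assoc, this, neg_mul, mul_assoc, hTT', mul_one]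
  have halB : al * B = -B := by
    have : (A * B - B * A) * B = -(B * T) := by rw [hT]; simp [mul_add, add_mul, mul_sub, sub_mul, mul_assoc, hX, hY, hA2, hB2]
    rw [hal, mul_assoc, ← hT'B, ← mul_assoc, this, neg_mul, mul_assoc, hTT', mul_one]
  have hBal : B * al = B := by
    have : B * (A * B - B * A) = (B * T) := by rw [hT]; simp [mul_add, add_mul, mul_sub, sub_mul, mul_assoc, hX, hY, hA2, hB2]
    rw [hal, ← mul_assoc, this, mul_assoc, hTT', mul_one]
  have halal : al * al = 1 := by
    have h1 : al * (A * B - B * A) = T := by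
      rw [mul_sub, ← mul_assoc, ← mul_assoc, halA, halB, hT]; simp
    calc al * al = al * ((A * B - B * A) * T') := congrArg (al * ·) hal
      _ = al * (A * B - B * A) * T' := (mul_assoc _ _ _).symm
      _ = 1 := by rw [h1, hTT']
  set w : AddMonoid.End M := A + B with hw
  have hww : w * w = T := by
    rw [hw, hT]; simp [mul_add, add_mul, hX, hY, add_comm]
  have hwT' : w * T' = T' * w := by rw [hw, add_mul, mul_add, hT'A, hT'B]
  let ua : (AddMonoid.End M)ˣ := ⟨al, al, halal, halal⟩
  let uw : (AddMonoid.End M)ˣ := ⟨w, w * T', by rw [← mul_assoc, hww, hTT'],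
    by rw [hwT', mul_assoc, hww, hT'T]⟩
  have haX : ua * X * ua⁻¹ = X⁻¹ := by
    rw [eq_inv_iff_mul_eq_one]
    ext1
    change al * (X : AddMonoid.End M) * al * X = 1
    have : (X : AddMonoid.End M) = A + 1 := by rw [hA]; simp
    rw [this]
    have h1 : al * (A + 1) * al = 1 - A := by
      rw [mul_add, halA, mul_one, add_mul, hAal, halal]; abel
    rw [h1]; simp [mul_add, add_mul, mul_sub, sub_mul, mul_assoc, hX, hY, hA2, hB2]
  have haY : ua * Y * ua⁻¹ = Y⁻¹ := by
    rw [eq_inv_iff_mul_eq_one]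
    ext1
    change al * (Y : AddMonoid.End M) * al * Y = 1
    have : (Y : AddMonoid.End M) = B + 1 := by rw [hB]; simp
    rw [this]
    have h1 : al * (B + 1) * al = 1 - B := by
      rw [mul_add, halB, mul_one, add_mul, neg_mul, hBal, halal]; abel
    rw [h1]; simp [mul_add, add_mul, mul_sub, sub_mul, mul_assoc, hX, hY, hA2, hB2]
  have hwX : uw * X * uw⁻¹ = Y := by
    rw [mul_inv_eq_iff_eq_mul]
    ext1
    change w * (X : AddMonoid.End M) = Y * w
    have h1 : (X : AddMonoid.End M) = A + 1 := by rw [hA]; simp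
    have h2 : (Y : AddMonoid.End M) = B + 1 := by rw [hB]; simp
    rw [h1, h2, hw]; simp [mul_add, add_mul, mul_sub, sub_mul, mul_assoc, hX, hY, hA2, hB2]; abel
  have hwY : uw * Y * uw⁻¹ = X := by
    rw [mul_inv_eq_iff_eq_mul]
    ext1
    change w * (Y : AddMonoid.End M) = X * w
    have h1 : (X : AddMonoid.End M) = A + 1 := by rw [hA]; simp
    have h2 : (Y : AddMonoid.End M) = B + 1 := by rw [hB]; simp
    rw [h1, h2, hw]; simp [mul_add, add_mul, mul_sub, sub_mul, mul_assoc, hX, hY, hA2, hB2]; abel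
  have hXL : X ∈ L := subset_closure (by simp)
  have hYL : Y ∈ L := subset_closure (by simp)
  have nrmL : ∀ u : (AddMonoid.End M)ˣ, u * X * u⁻¹ ∈ L → u * Y * u⁻¹ ∈ L → cj u L = L := by
    intro u h1 h2
    refine mem_nrm.1 (mem_nrm_of_le ?_)
    unfold cj
    rw [hL, MonoidHom.map_closure, closure_le]
    rintro _ ⟨z, (rfl | rfl), rfl⟩
    · exact h1
    · exact h2
  have naL : cj ua L = L := nrmL ua (by rw [haX]; exact L.inv_mem hXL)
    (by rw [haY]; exact L.inv_mem hYL)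
  have nwL : cj uw L = L := nrmL uw (by rw [hwX]; exact hYL) (by rw [hwY]; exact hXL)
  have hcent : ∀ u : (AddMonoid.End M)ˣ, u * X * u⁻¹ = X → u * Y * u⁻¹ = Y →
      ∀ S ≤ L, cj u S = S := by
    intro u h1 h2 S hS
    have h3 : L ≤ centralizer {u} := by
      rw [hL, closure_le]
      rintro z (rfl | rfl)
      · rw [SetLike.mem_coe, mem_centralizer_singleton_iff]
        exact (mul_inv_eq_iff_eq_mul.1 h1).symm
      · rw [SetLike.mem_coe, mem_centralizer_singleton_iff]
        exact (mul_inv_eq_iff_eq_mul.1 h2).symm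
    refine mem_nrm.1 (mem_nrm_of_le (cj_le_iff.2 fun s hs => ?_))
    have := mem_centralizer_singleton_iff.1 (h3 (hS hs))
    rw [← this]; simpa [mul_assoc] using hs
  let f : {S : Subgroup (AddMonoid.End M)ˣ // IsSyl p S L} →
      {S : Subgroup (AddMonoid.End M)ˣ // IsSyl p S L} := fun S =>
    ⟨cj ua S.1, by have := S.2.cj ua; rwa [naL] at this⟩
  let g : {S : Subgroup (AddMonoid.End M)ˣ // IsSyl p S L} →
      {S : Subgroup (AddMonoid.End M)ˣ // IsSyl p S L} := fun S =>
    ⟨cj uw S.1, by have := S.2.cj uw; rwa [nwL] at this⟩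
  obtain ⟨⟨S, hS⟩, hfS, hgS⟩ := exists_common_fixed (odd_card_syl L hodd) f g
    (fun S => Subtype.ext (by
      change cj ua (cj ua S.1) = S.1
      have : ua * ua = 1 := Units.ext halal
      rw [cj_cj, this, cj_one]))
    (fun S => Subtype.ext (by
      change cj uw (cj uw S.1) = S.1
      rw [cj_cj]
      refine hcent _ ?_ ?_ _ S.2.le
      · calc uw * uw * X * (uw * uw)⁻¹ = uw * (uw * X * uw⁻¹) * uw⁻¹ := by group
          _ = X := by rw [hwX, hwY]
      · calc uw * uw * Y * (uw * uw)⁻¹ = uw * (uw * Y * uw⁻¹) * uw⁻¹ := by group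
          _ = Y := by rw [hwY, hwX]))
    (fun S => Subtype.ext (by
      change cj ua (cj uw S.1) = cj uw (cj ua S.1)
      have h1 : ua * uw = -1 * (uw * ua) := by
        ext1
        change al * w = -1 * (w * al)
        rw [hw, mul_add, add_mul, halA, halB, hAal, hBal]; simp; abel
      have h2 : ∀ S : Subgroup (AddMonoid.End M)ˣ, cj (-1) S = S := by
        intro S; ext z; rw [mem_cj]; simp
      rw [cj_cj, cj_cj, h1, ← cj_cj, h2]))
  have hfS : cj ua S = S := congrArg Subtype.val hfS
  have hgS : cj uw S = S := congrArg Subtype.val hgS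
  let F : AddSubgroup M :=
    { carrier := {m | ∀ s ∈ S, (s : AddMonoid.End M) m = m}
      add_mem' := fun {a b} ha hb s hs => by rw [map_add, ha s hs, hb s hs]
      zero_mem' := fun s _ => map_zero _
      neg_mem' := fun {a} ha s hs => by rw [map_neg, ha s hs] }
  have hF : ∀ u : (AddMonoid.End M)ˣ, cj u S = S → ∀ m ∈ F, (u : AddMonoid.End M) m ∈ F := by
    intro u hu m hm s hs
    rw [← hu, mem_cj] at hs
    have h1 := hm _ hs
    have h2 : (s : AddMonoid.End M) * u = u * ((u⁻¹ * s * u : (AddMonoid.End M)ˣ) : AddMonoid.End M) := by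
      rw [← Units.val_mul, ← Units.val_mul]; congr 1; group
    have h3 := DFunLike.congr_fun h2 m
    change (s : AddMonoid.End M) (u.1 m) = u.1 _ at h3
    exact h3.trans (congrArg _ h1)
  have hhalf : ∀ z : M, z + z ∈ F → z ∈ F := by
    intro z hz
    obtain ⟨j, hj⟩ := (hpo.pow : Odd (p ^ k))
    have h1 : z = (j + 1) • (z + z) := by
      have h2 : (2 * j + 1) • z = 0 := by rw [← hj]; exact hM z
      have h3 : (j + 1) • (z + z) = (2 * j + 1) • z + z := by
        rw [← two_nsmul, ← mul_nsmul]
        rw [show 2 * (j + 1) = 2 * j + 1 + 1 by ring, add_nsmul, one_nsmul]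
      rw [h3, h2, zero_add]
    rw [h1]; exact F.nsmul_mem hz _
  have hFA : ∀ m ∈ F, A m ∈ F := by
    intro m hm
    apply hhalf
    have h1 := hF uw hgS m hm
    have h2 := hF ua hfS _ h1
    have h3 : A m + A m = w m + (al * w) m := by
      have : al * w = A - B := by rw [hw, mul_add, halA, halB]; abel
      rw [this, hw]
      change _ = (A m + B m) + (A m - B m)
      abel
    rw [h3]; exact F.add_mem h1 h2
  have hFB : ∀ m ∈ F, B m ∈ F := by
    intro m hm
    apply hhalf
    have h1 := hF uw hgS m hm
    have h2 := hF ua hfS _ h1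
    have h3 : B m + B m = w m - (al * w) m := by
      have : al * w = A - B := by rw [hw, mul_add, halA, halB]; abel
      rw [this, hw]
      change _ = (A m + B m) - (A m - B m)
      abel
    rw [h3]; exact F.sub_mem h1 h2
  have hXinv : ((X⁻¹ : (AddMonoid.End M)ˣ) : AddMonoid.End M) = 1 - A := by
    rw [Units.inv_eq_of_mul_eq_one_right (a := 1 - A)]
    have : (X : AddMonoid.End M) = A + 1 := by rw [hA]; simp
    rw [this]; simp [mul_add, add_mul, mul_sub, sub_mul, mul_assoc, hX, hY, hA2, hB2]
  have hYinv : ((Y⁻¹ : (AddMonoid.End M)ˣ) : AddMonoid.End M) = 1 - B := by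
    rw [Units.inv_eq_of_mul_eq_one_right (a := 1 - B)]
    have : (Y : AddMonoid.End M) = B + 1 := by rw [hB]; simp
    rw [this]; simp [mul_add, add_mul, mul_sub, sub_mul, mul_assoc, hX, hY, hA2, hB2]
  have hFL : ∀ l ∈ L, (∀ m ∈ F, (l : AddMonoid.End M) m ∈ F) ∧
      (∀ m ∈ F, ((l⁻¹ : (AddMonoid.End M)ˣ) : AddMonoid.End M) m ∈ F) := by
    intro l hl
    refine closure_induction (p := fun (l : (AddMonoid.End M)ˣ) _ => (∀ m ∈ F, (l : AddMonoid.End M) m ∈ F) ∧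
      (∀ m ∈ F, ((l⁻¹ : (AddMonoid.End M)ˣ) : AddMonoid.End M) m ∈ F)) ?_ ?_ ?_ ?_ hl
    · rintro z (rfl | rfl)
      · refine ⟨fun m hm => ?_, fun m hm => ?_⟩
        · have : (z : AddMonoid.End M) = A + 1 := by rw [hA]; simp
          rw [this]; exact F.add_mem (hFA m hm) hm
        · rw [hXinv]; exact F.sub_mem hm (hFA m hm)
      · refine ⟨fun m hm => ?_, fun m hm => ?_⟩
        · have : (z : AddMonoid.End M) = B + 1 := by rw [hB]; simp
          rw [this]; exact F.add_mem (hFB m hm) hm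
        · rw [hYinv]; exact F.sub_mem hm (hFB m hm)
    · exact ⟨fun m hm => hm, fun m hm => by simpa using hm⟩
    · rintro a b - - ⟨h1, h2⟩ ⟨h3, h4⟩
      refine ⟨fun m hm => h1 _ (h3 m hm), fun m hm => ?_⟩
      rw [mul_inv_rev]; exact h4 _ (h2 m hm)
    · rintro a - ⟨h1, h2⟩
      exact ⟨h2, by simpa using h1⟩
  have htriv : ∀ z ∈ L, z ^ p ^ k = 1 → ∀ m ∈ F, (z : AddMonoid.End M) m = m := by
    intro z hz hzp m hm
    have hpz : IsPGroup p (zpowers z) := by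
      rintro ⟨_, n, rfl⟩
      refine ⟨k, Subtype.ext ?_⟩
      simp only [SubmonoidClass.coe_pow, OneMemClass.coe_one]
      rw [← zpow_natCast, zpow_comm, zpow_natCast, hzp, one_zpow]
    obtain ⟨l, hl, hlS⟩ := hS.conj (zpowers_le.2 hz) hpz
    have h1 := cj_le_iff.1 hlS z (mem_zpowers z)
    have h2 := (hFL l hl).1 m hm _ h1
    have h3 : ((l * z * l⁻¹ : (AddMonoid.End M)ˣ) : AddMonoid.End M) * l = l * z := by
      rw [← Units.val_mul, ← Units.val_mul]; congr 1; group
    have h4 : (l : AddMonoid.End M) (z.1 m) = l.1 m := by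
      rw [← h2]; exact (DFunLike.congr_fun h3 m).symm
    have h5 := congrArg (fun m => ((l⁻¹ : (AddMonoid.End M)ˣ) : AddMonoid.End M) m) h4
    have h6 : ∀ m, ((l⁻¹ : (AddMonoid.End M)ˣ) : AddMonoid.End M) (l.1 m) = m := by
      intro m
      have : ((l⁻¹ : (AddMonoid.End M)ˣ) : AddMonoid.End M) * l = 1 := by simp
      exact DFunLike.congr_fun this m
    simpa only [h6] using h5
  have hpow : ∀ (C : AddMonoid.End M), C * C = 0 → (C + 1) ^ p ^ k = 1 := by
    intro C hC
    have h1 : ∀ n : ℕ, (C + 1) ^ n = n • C + 1 := by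
      intro n
      induction n with
      | zero => simp
      | succ n ih =>
        rw [pow_succ, ih, add_mul, mul_add, smul_mul_assoc, hC, succ_nsmul]; simp
        abel
    rw [h1]
    ext m
    change p ^ k • C m + m = m
    rw [hM, zero_add]
  have hF0 : ∀ m ∈ F, m = 0 := by
    intro m hm
    have h1 := htriv X hXL (by
      ext1
      have : (X : AddMonoid.End M) = A + 1 := by rw [hA]; simp
      rw [Units.val_pow_eq_pow_val, this]; exact hpow A hX) m hm
    have h2 := htriv Y hYL (by
      ext1
      have : (Y : AddMonoid.End M) = B + 1 := by rw [hB]; simp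
      rw [Units.val_pow_eq_pow_val, this]; exact hpow B hY) m hm
    apply hTi
    have hA0 : A m = 0 := by
      change X.1 m - m = 0
      rw [h1, sub_self]
    have hB0 : B m = 0 := by
      change Y.1 m - m = 0
      rw [h2, sub_self]
    change A (B m) + B (A m) = _
    rw [hA0, hB0]; simp
  by_contra hns
  rw [not_subsingleton_iff_nontrivial] at hns
  have hcard : p ∣ Nat.card M := by
    have : IsPGroup p (Multiplicative M) := fun g => ⟨k, hM (Multiplicative.toAdd g)⟩
    rcases this.card_eq_or_dvd with h | h
    · exact absurd h Finite.one_lt_card.ne'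
    · exact h
  obtain ⟨m, hm, hm0⟩ := hS.pg.exists_fixed_point_of_prime_dvd_card_of_fixed_point M hcard
    (a := 0) (by intro s; exact map_zero (s.1 : AddMonoid.End M))
  exact hm0 (hF0 m (fun s hs => hm ⟨s, hs⟩)).symm
end OddP

/-! ### `p`-stability in groups of odd order -/

namespace OddP
open Subgroup
variable {G : Type} [Group G] {p : ℕ}

lemma ab_surj (B : Subgroup G) (m : Additive (Abelianization B)) :
    ∃ b : B, m = Additive.ofMul (Abelianization.of b) := by
  obtain ⟨b, hb⟩ := QuotientGroup.mk_surjective (Additive.toMul m)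
  exact ⟨b, congrArg Additive.ofMul hb.symm⟩

/-- The action of the normalizer of `B` on the abelianization of `B`, written additively. -/
noncomputable def abAct (B : Subgroup G) :
    nrm B →* AddMonoid.End (Additive (Abelianization B)) where
  toFun n := (Abelianization.map (B.normalizerMonoidHom n).toMonoidHom).toAdditive
  map_one' := by
    refine AddMonoidHom.ext fun m => ?_
    obtain ⟨b, rfl⟩ := ab_surj B m
    change Additive.ofMul (Abelianization.of (B.normalizerMonoidHom 1 b)) = _
    rw [map_one]
    rfl
  map_mul' x y := by
    refine AddMonoidHom.ext fun m => ?_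
    obtain ⟨b, rfl⟩ := ab_surj B m
    change Additive.ofMul (Abelianization.of (B.normalizerMonoidHom (x * y) b)) = _
    rw [map_mul]
    rfl

lemma abAct_apply (B : Subgroup G) (n : nrm B) (b : B) :
    abAct B n (Additive.ofMul (Abelianization.of b)) =
      Additive.ofMul (Abelianization.of (B.normalizerMonoidHom n b)) := rfl

lemma normalizerMonoidHom_coe (B : Subgroup G) (n : nrm B) (b : B) :
    ((B.normalizerMonoidHom n b : B) : G) = n * b * n⁻¹ := rfl

lemma abAct_sub (B : Subgroup G) (n : nrm B) (b : B) (h : (n : G) * b * (n : G)⁻¹ * (b : G)⁻¹ ∈ B) :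
    (abAct B n - 1) (Additive.ofMul (Abelianization.of b)) =
      Additive.ofMul (Abelianization.of (⟨_, h⟩ : B)) := by
  change abAct B n _ - Additive.ofMul (Abelianization.of b) = _
  rw [abAct_apply, ← ofMul_div, ← map_div]
  congr 2
  ext
  simp [normalizerMonoidHom_coe, div_eq_mul_inv]

lemma comm_mem {B : Subgroup G} {n b : G} (hn : n ∈ nrm B) (hb : b ∈ B) :
    n * b * n⁻¹ * b⁻¹ ∈ B :=
  B.mul_mem ((Subgroup.mem_normalizer_iff.1 hn b).1 hb) (B.inv_mem hb)

lemma abAct_quad (B : Subgroup G) (n : nrm B)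
    (h : ∀ b ∈ B, Commute (n : G) (n * b * (n : G)⁻¹ * b⁻¹)) :
    (abAct B n - 1) * (abAct B n - 1) = 0 := by
  refine AddMonoidHom.ext fun m => ?_
  obtain ⟨b, rfl⟩ := ab_surj B m
  change (abAct B n - 1) ((abAct B n - 1) _) = 0
  have h1 := comm_mem n.2 b.2
  rw [abAct_sub B n b h1, abAct_sub B n _ (comm_mem n.2 h1)]
  have : (⟨_, comm_mem n.2 h1⟩ : B) = 1 := by
    ext
    change (n : G) * (n * b * (n : G)⁻¹ * (b : G)⁻¹) * (n : G)⁻¹ *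
      (n * b * (n : G)⁻¹ * (b : G)⁻¹ : G)⁻¹ = 1
    rw [(h b b.2).eq]
    group
  rw [this]
  simp

/-- If `x` and `y` act quadratically on a `p`-group `B`, then every element of `⟨x, y⟩` has a `p`-power
centralizing `B`. Induction on `|B|`: `quadratic_pair`, applied to the abelianization of `B`, produces a
proper subgroup of `B` modulo which the action is trivial. -/
theorem quad_pow [Finite G] [hp : Fact p.Prime] (hpo : Odd p) (hG : Odd (Nat.card G)) (x y : G) :
    ∀ (n : ℕ) (B : Subgroup G), Nat.card B ≤ n → IsPGroup p B → x ∈ nrm B → y ∈ nrm B →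
      (∀ b ∈ B, Commute x (x * b * x⁻¹ * b⁻¹)) → (∀ b ∈ B, Commute y (y * b * y⁻¹ * b⁻¹)) →
      ∀ l ∈ closure {x, y}, ∃ k, ∀ b ∈ B, Commute (l ^ (p ^ k)) b := by
  intro n
  induction n with
  | zero => intro B hB; exact absurd (Nat.card_pos (α := B)) (by omega)
  | succ n ih =>
  intro B hB hpB hx hy hqx hqy l hl
  set L := closure {x, y} with hL
  have hLB : L ≤ nrm B := by
    rw [hL, closure_le]; rintro z (rfl | rfl) <;> assumption
  have hB1 : ⁅L, B⁆ ≤ B := by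
    rw [commutator_le]
    intro g hg b hb
    exact comm_mem (hLB hg) hb
  have hLB1 : L ≤ nrm ⁅L, B⁆ := by
    intro g hg
    rw [mem_nrm]
    have := map_commutator L B (MulAut.conj g).toMonoidHom
    change cj g _ = ⁅cj g L, cj g B⁆ at this
    rw [this, cj_eq_of_mem hg, mem_nrm.1 (hLB hg)]
  by_cases hlt : ⁅L, B⁆ < B
  · have hc := card_lt hlt
    obtain ⟨k, hk⟩ := ih ⁅L, B⁆ (by omega) (hpB.to_le hB1) (hLB1 (subset_closure (by simp)))
      (hLB1 (subset_closure (by simp))) (fun b hb => hqx b (hB1 hb)) (fun b hb => hqy b (hB1 hb)) l hl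
    obtain ⟨j, hj⟩ := IsPGroup.iff_card.1 hpB
    refine ⟨k + j, fun b hb => ?_⟩
    set l' := l ^ p ^ k with hl'
    have hl'L : l' ∈ L := L.pow_mem hl _
    set c := l' * b * l'⁻¹ * b⁻¹ with hcd
    have hcB1 : c ∈ ⁅L, B⁆ := commutator_mem_commutator hl'L hb
    have hcc := hk c hcB1
    have hform : ∀ n : ℕ, l' ^ n * b = c ^ n * b * l' ^ n := by
      intro n
      induction n with
      | zero => simp
      | succ n ihn =>
        have h1 : l' * b = c * b * l' := by rw [hcd]; group
        have h2 : l' * c ^ n = c ^ n * l' := (hcc.pow_right n).eq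
        calc l' ^ (n+1) * b = l' * (l' ^ n * b) := by rw [pow_succ']; group
          _ = l' * c ^ n * b * l' ^ n := by rw [ihn]; group
          _ = c ^ n * (l' * b) * l' ^ n := by rw [h2]; group
          _ = c ^ (n+1) * b * l' ^ (n+1) := by rw [h1, pow_succ c, pow_succ' l']; group
    have hcj : c ^ p ^ j = 1 := by
      have : (⟨c, hB1 hcB1⟩ : B) ^ Nat.card B = 1 := pow_card_eq_one'
      rw [hj] at this
      simpa using congrArg Subtype.val this
    have := hform (p ^ j)
    rw [hcj, one_mul] at this
    rw [pow_add, pow_mul]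
    exact this
  · have hEq : ⁅L, B⁆ = B := by
      by_contra hne
      exact hlt (lt_of_le_of_ne hB1 hne)
    -- here `B` must be trivial
    have hsub : Subsingleton (Additive (Abelianization B)) := by
      have : Finite (Abelianization B) := Quotient.finite _
      have : Finite (Additive (Abelianization B)) := this
      obtain ⟨j, hj⟩ := IsPGroup.iff_card.1 hpB
      let X : nrm B := ⟨x, hx⟩
      let Y : nrm B := ⟨y, hy⟩
      let φ := (abAct B).toHomUnits
      refine quadratic_pair (p := p) hpo j ?_ (φ X) (φ Y) (abAct_quad B X hqx) (abAct_quad B Y hqy)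
        ?_ ?_
      · intro m
        obtain ⟨b, rfl⟩ := ab_surj B m
        rw [← ofMul_pow, ← map_pow, ← hj, pow_card_eq_one']
        simp
      · have h1 : closure {φ X, φ Y} = (closure {X, Y}).map φ := by
          rw [MonoidHom.map_closure, Set.image_pair]
        rw [h1]
        refine hG.of_dvd_nat ((card_map_dvd _ _).trans ?_)
        exact (Subgroup.card_subgroup_dvd_card _).trans (Subgroup.card_subgroup_dvd_card _)
      · let N : AddSubgroup (Additive (Abelianization B)) :=
          (abAct B X - 1).range ⊔ (abAct B Y - 1).range
        have hN : ∀ l : nrm B, l ∈ closure {X, Y} → ∀ m, (abAct B l - 1) m ∈ N := by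
          intro l hl
          induction hl using closure_induction with
          | mem l h =>
            intro m
            rcases h with rfl | h
            · exact AddSubgroup.mem_sup_left ⟨m, rfl⟩
            · rw [h]; exact AddSubgroup.mem_sup_right ⟨m, rfl⟩
          | one => intro m; simp [N]
          | mul a b _ _ ha hb =>
            intro m
            have : (abAct B (a * b) - 1) m = (abAct B a - 1) (abAct B b m) + (abAct B b - 1) m := by
              rw [map_mul]
              change abAct B a (abAct B b m) - m = (abAct B a (abAct B b m) - abAct B b m) +
                (abAct B b m - m)
              abel
            rw [this]
            exact N.add_mem (ha _) (hb _)
          | inv a _ ha =>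
            intro m
            have : (abAct B a⁻¹ - 1) m = -((abAct B a - 1) (abAct B a⁻¹ m)) := by
              change abAct B a⁻¹ m - m = -(abAct B a (abAct B a⁻¹ m) - abAct B a⁻¹ m)
              have : abAct B a (abAct B a⁻¹ m) = m := by
                
                change (abAct B a * abAct B a⁻¹) m = m
                rw [← map_mul, mul_inv_cancel, map_one]; rfl
              rw [this]; abel
            rw [this]
            exact N.neg_mem (ha _)
        -- the preimage of `N` in `B`
        let f : B →* Multiplicative (Additive (Abelianization B)) := Abelianization.of
        let B0 : Subgroup G := ((AddSubgroup.toSubgroup N).comap f).map B.subtype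
        have hB0 : ⁅L, B⁆ ≤ B0 := by
          rw [commutator_le]
          intro g hg b hb
          have hgc : (⟨g, hLB hg⟩ : nrm B) ∈ closure {X, Y} := by
            have : (closure {X, Y}).map (nrm B).subtype = L := by
              rw [MonoidHom.map_closure, Set.image_pair]; rfl
            rw [← this] at hg
            obtain ⟨g', hg', rfl⟩ := hg
            exact hg'
          have := hN _ hgc (Additive.ofMul (Abelianization.of ⟨b, hb⟩))
          rw [abAct_sub B _ _ (comm_mem (hLB hg) hb)] at this
          exact ⟨⟨_, comm_mem (hLB hg) hb⟩, this, rfl⟩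
        intro m
        obtain ⟨b, rfl⟩ := ab_surj B m
        have hb0 : (b : G) ∈ B0 := hB0 (hEq.symm ▸ b.2)
        obtain ⟨b', hb', hbb⟩ := hb0
        have : b' = b := Subtype.ext hbb
        subst this
        have h3 : Additive.ofMul (Abelianization.of b') ∈ N := hb'
        rw [AddSubgroup.mem_sup] at h3
        obtain ⟨_, ⟨a, rfl⟩, _, ⟨c, rfl⟩, hac⟩ := h3
        exact ⟨a, c, hac.symm⟩
    have htop : commutator B = ⊤ := by
      rw [eq_top_iff]
      intro b _
      rw [← Abelianization.ker_of, MonoidHom.mem_ker]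
      exact @Subsingleton.elim (Additive (Abelianization B)) hsub _ _
    have hnil : Group.IsNilpotent B := hpB.isNilpotent
    have hBb : Subsingleton B := by
      by_contra hns
      rw [not_subsingleton_iff_nontrivial] at hns
      exact (IsSolvable.commutator_lt_top_of_nontrivial B).ne htop
    refine ⟨0, fun b hb => ?_⟩
    have : (⟨b, hb⟩ : B) = 1 := Subsingleton.elim _ _
    have : b = 1 := congrArg Subtype.val this
    rw [this]
    exact Commute.one_right _

/-- The elements acting quadratically on a normal `p`-subgroup generate, modulo the centralizer,
a `p`-group: groups of odd order are `p`-stable. -/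
theorem p_stable [Finite G] [hp : Fact p.Prime] (hpo : Odd p) (hG : Odd (Nat.card G))
    (B : Subgroup G) [hBn : B.Normal] (hpB : IsPGroup p B) :
    ∀ n ∈ closure {x : G | ∀ b ∈ B, Commute x (x * b * x⁻¹ * b⁻¹)},
      ∃ k, n ^ p ^ k ∈ centralizer (B : Set G) := by
  set K := {x : G | ∀ b ∈ B, Commute x (x * b * x⁻¹ * b⁻¹)} with hK
  let φ : G →* MulAut B := MulAut.conjNormal
  have hmem : ∀ g : G, φ g = 1 ↔ g ∈ centralizer (B : Set G) := by
    intro g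
    rw [mem_centralizer_iff, MulEquiv.ext_iff, Subtype.forall]
    refine forall_congr' fun b => forall_congr' fun hb => ?_
    rw [Subtype.ext_iff]
    change g * b * g⁻¹ = b ↔ _
    rw [mul_inv_eq_iff_eq_mul, eq_comm]
  have hKc : ∀ g, ∀ u ∈ K, g * u * g⁻¹ ∈ K := by
    intro g u hu b hb
    have := hu (g⁻¹ * b * g) (by simpa using hBn.conj_mem b hb g⁻¹)
    have h2 := congrArg (fun z => g * z * g⁻¹) this.eq
    change _ = _
    calc _ = g * (u * (u * (g⁻¹ * b * g) * u⁻¹ * (g⁻¹ * b * g)⁻¹)) * g⁻¹ := by group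
      _ = _ := h2
      _ = _ := by group
  have hfin : Finite φ.range := Finite.of_surjective φ.rangeRestrict φ.rangeRestrict_surjective
  have hbs := baer_suzuki (p := p) (G := φ.range) (K := φ.rangeRestrict '' K) (by
    rintro ⟨_, g, rfl⟩ _ ⟨u, hu, rfl⟩
    exact ⟨g * u * g⁻¹, hKc g u hu, by simp; rfl⟩) (by
    rintro _ ⟨u, hu, rfl⟩ _ ⟨v, hv, rfl⟩
    rintro ⟨z, hz⟩
    have : closure {φ.rangeRestrict u, φ.rangeRestrict v} = (closure {u, v}).map φ.rangeRestrict := by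
      rw [MonoidHom.map_closure, Set.image_pair]
    rw [this] at hz
    obtain ⟨l, hl, rfl⟩ := hz
    obtain ⟨k, hk⟩ := quad_pow hpo hG u v _ B le_rfl hpB (by rw [nrm_eq_top.2 hBn]; trivial)
      (by rw [nrm_eq_top.2 hBn]; trivial) hu hv l hl
    refine ⟨k, Subtype.ext (Subtype.ext ?_)⟩
    change (φ l) ^ p ^ k = 1
    rw [← map_pow, hmem, mem_centralizer_iff]
    intro b hb
    exact (hk b hb).eq.symm)
  intro n hn
  have : φ.rangeRestrict n ∈ closure (φ.rangeRestrict '' K) := by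
    rw [← MonoidHom.map_closure]
    exact mem_map_of_mem _ hn
  obtain ⟨k, hk⟩ := hbs ⟨_, this⟩
  refine ⟨k, ?_⟩
  rw [← hmem, map_pow]
  exact congrArg (fun z => z.1.1) hk

end OddP

/-! ### Abelian subgroups of maximal order and replacement -/

namespace OddP
open Subgroup
open scoped commutatorElement
variable {G : Type} [Group G] {p : ℕ}

/-- `A` is commutative, stated inside the ambient group. -/
def Ab (A : Subgroup G) : Prop := ∀ a ∈ A, ∀ b ∈ A, Commute a b

/-- `A` is an abelian subgroup of `S` of maximal order. -/
structure IsMA (S A : Subgroup G) : Prop where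
  le : A ≤ S
  ab : Ab A
  max : ∀ C ≤ S, Ab C → Nat.card C ≤ Nat.card A

/-- The intersection of all abelian subgroups of `S` of maximal order; it plays the role of the
subgroup `Z(J(S))`. -/
def W (S : Subgroup G) : Subgroup G := sInf {A | IsMA S A}

lemma Ab.mono {A B : Subgroup G} (h : Ab B) (hAB : A ≤ B) : Ab A :=
  fun a ha b hb => h a (hAB ha) b (hAB hb)

lemma Ab.map {H : Type} [Group H] {A : Subgroup G} (h : Ab A) (f : G →* H) : Ab (A.map f) := by
  rintro _ ⟨a, ha, rfl⟩ _ ⟨b, hb, rfl⟩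
  exact (h a ha b hb).map f

lemma Ab.sup {A B : Subgroup G} (hA : Ab A) (hB : Ab B) (h : ∀ a ∈ A, ∀ b ∈ B, Commute a b) :
    Ab (A ⊔ B) := by
  have h1 : A ⊔ B ≤ centralizer (A : Set G) := sup_le
    (fun a ha => mem_centralizer_iff.2 fun b hb => (hA b hb a ha).eq)
    (fun b hb => mem_centralizer_iff.2 fun a ha => (h a ha b hb).eq)
  have h2 : A ⊔ B ≤ centralizer (B : Set G) := sup_le
    (fun a ha => mem_centralizer_iff.2 fun b hb => (h a ha b hb).eq.symm)
    (fun b hb => mem_centralizer_iff.2 fun a ha => (hB a ha b hb).eq)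
  have h3 : A ⊔ B ≤ centralizer ((A ⊔ B : Subgroup G) : Set G) := by
    refine sup_le (fun a ha => mem_centralizer_iff.2 fun b hb => ?_)
      (fun a ha => mem_centralizer_iff.2 fun b hb => ?_)
    · exact (mem_centralizer_iff.1 (h1 hb) a ha).symm
    · exact (mem_centralizer_iff.1 (h2 hb) a ha).symm
  intro a ha b hb
  exact mem_centralizer_iff.1 (h3 hb) a ha

lemma ab_zpowers (x : G) : Ab (zpowers x) := by
  rintro _ ⟨m, rfl⟩ _ ⟨n, rfl⟩
  exact (Commute.refl x).zpow_zpow m n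

variable [Finite G]

lemma exists_ma (S : Subgroup G) : ∃ A, IsMA S A := by
  obtain ⟨A, hA, hm⟩ := Set.exists_max_image {A : Subgroup G | A ≤ S ∧ Ab A} (fun A => Nat.card A)
    (Set.toFinite _) ⟨⊥, bot_le, by
      intro a ha b hb
      rw [mem_bot.1 ha]; exact Commute.one_left _⟩
  exact ⟨A, hA.1, hA.2, fun C h1 h2 => hm C ⟨h1, h2⟩⟩

lemma W_le_ma {S A : Subgroup G} (h : IsMA S A) : W S ≤ A := sInf_le h

lemma W_le (S : Subgroup G) : W S ≤ S := by
  obtain ⟨A, hA⟩ := exists_ma S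
  exact (W_le_ma hA).trans hA.le

lemma W_ab (S : Subgroup G) : Ab (W S) := by
  obtain ⟨A, hA⟩ := exists_ma S
  exact hA.ab.mono (W_le_ma hA)

lemma IsMA.mem_of_commute {S A : Subgroup G} (h : IsMA S A) {x : G} (hx : x ∈ S)
    (hc : ∀ a ∈ A, Commute x a) : x ∈ A := by
  have h1 : Ab (A ⊔ zpowers x) := h.ab.sup (ab_zpowers x) (by
    rintro a ha _ ⟨n, rfl⟩
    exact ((hc a ha).symm.zpow_right n))
  have h2 := h.max _ (sup_le h.le (by rwa [zpowers_le])) h1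
  have h3 := eq_of_le_card (le_sup_left) h2
  rw [h3]
  exact mem_sup_right (mem_zpowers x)

lemma mem_W_of_central {S : Subgroup G} {x : G} (hx : x ∈ S) (hc : ∀ a ∈ S, Commute x a) :
    x ∈ W S := by
  rw [W, mem_sInf]
  exact fun A hA => hA.mem_of_commute hx fun a ha => hc a (hA.le ha)

lemma W_commute {S A : Subgroup G} (h : IsMA S A) {w a : G} (hw : w ∈ W S) (ha : a ∈ A) :
    Commute w a := h.ab w (W_le_ma h hw) a ha

lemma W_ne_bot [hp : Fact p.Prime] {S : Subgroup G} (hS : IsPGroup p S) (hne : S ≠ ⊥) : W S ≠ ⊥ := by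
  have : Nontrivial S := (nontrivial_iff_ne_bot S).2 hne
  have := hS.center_nontrivial
  obtain ⟨z, hz⟩ := exists_ne (1 : center S)
  intro hb
  have h1 : (z : G) ∈ W S := mem_W_of_central z.1.2 fun a ha => by
    have := mem_center_iff.1 z.2 ⟨a, ha⟩
    exact (congrArg Subtype.val this).symm
  rw [hb, mem_bot] at h1
  exact hz (Subtype.ext (Subtype.ext h1))

lemma IsMA.of_le {S T A : Subgroup G} (h : IsMA S A) (h1 : A ≤ T) (h2 : T ≤ S) : IsMA T A :=
  ⟨h1, h.ab, fun C hC => h.max C (hC.trans h2)⟩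

/-- If one maximal abelian subgroup of `S` lies in `T ≤ S`, then those of `T` are those of `S`
contained in `T`. -/
lemma IsMA.of_ge {S T A C : Subgroup G} (h : IsMA S A) (h1 : A ≤ T) (h2 : T ≤ S) (hC : IsMA T C) :
    IsMA S C :=
  ⟨hC.le.trans h2, hC.ab, fun D hD hab => (h.max D hD hab).trans (hC.max A h1 h.ab)⟩

lemma IsMA.W_le_W {S T A : Subgroup G} (h : IsMA S A) (h1 : A ≤ T) (h2 : T ≤ S) : W S ≤ W T :=
  le_sInf fun _ hC => W_le_ma (h.of_ge h1 h2 hC)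

lemma W_eq_of_all {S T : Subgroup G} (h2 : T ≤ S) (h : ∀ A, IsMA S A → A ≤ T) : W S = W T := by
  obtain ⟨A, hA⟩ := exists_ma S
  exact le_antisymm (hA.W_le_W (h A hA) h2)
    (le_sInf fun C hC => W_le_ma (hC.of_le (h C hC) h2))

lemma card_map_injOn {H : Type} [Group H] {f : G →* H} {A : Subgroup G} (hf : Set.InjOn f A) :
    Nat.card (A.map f) = Nat.card A :=
  Nat.card_image_of_injOn hf

lemma IsMA.map {H : Type} [Group H] [Finite H] {f : G →* H} {S A : Subgroup G}
    (hf : Set.InjOn f S) : IsMA S A → IsMA (S.map f) (A.map f) := by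
  intro h
  refine ⟨map_mono h.le, h.ab.map f, fun C hC hab => ?_⟩
  have h1 : (S ⊓ C.comap f).map f = C := by
    apply le_antisymm
    · rintro _ ⟨x, hx, rfl⟩; exact hx.2
    · intro c hc
      obtain ⟨s, hs, rfl⟩ := hC hc
      exact ⟨s, ⟨hs, hc⟩, rfl⟩
  rw [← h1, card_map_injOn (hf.mono inf_le_left), card_map_injOn (hf.mono h.le)]
  refine h.max _ inf_le_left fun a ha b hb => hf (S.mul_mem ha.1 hb.1) (S.mul_mem hb.1 ha.1) ?_
  rw [map_mul, map_mul]
  exact hab _ ha.2 _ hb.2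

lemma IsMA.of_map {H : Type} [Group H] [Finite H] {f : G →* H} {S : Subgroup G} {C : Subgroup H}
    (hf : Set.InjOn f S) (h : IsMA (S.map f) C) : ∃ A, IsMA S A ∧ A.map f = C := by
  have h1 : (S ⊓ C.comap f).map f = C := by
    apply le_antisymm
    · rintro _ ⟨x, hx, rfl⟩; exact hx.2
    · intro c hc
      obtain ⟨s, hs, rfl⟩ := h.le hc
      exact ⟨s, ⟨hs, hc⟩, rfl⟩
  refine ⟨S ⊓ C.comap f, ⟨inf_le_left, fun a ha b hb =>
    hf (S.mul_mem ha.1 hb.1) (S.mul_mem hb.1 ha.1) ?_, fun D hD hab => ?_⟩, h1⟩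
  · rw [map_mul, map_mul]
    exact h.ab _ ha.2 _ hb.2
  · rw [← card_map_injOn (hf.mono (inf_le_left : S ⊓ C.comap f ≤ S)), h1,
      ← card_map_injOn (hf.mono hD)]
    exact h.max _ (map_mono hD) (hab.map f)

lemma W_map {H : Type} [Group H] [Finite H] {f : G →* H} {S : Subgroup G} (hf : Set.InjOn f S) :
    W (S.map f) = (W S).map f := by
  apply le_antisymm
  · intro y hy
    obtain ⟨s, hs, rfl⟩ := W_le _ hy
    refine ⟨s, ?_, rfl⟩
    change s ∈ W S
    rw [W, mem_sInf]
    intro A hA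
    obtain ⟨a, ha, has⟩ := W_le_ma (hA.map hf) hy
    rwa [← hf (hA.le ha) hs has]
  · refine le_sInf fun C hC => ?_
    obtain ⟨A, hA, rfl⟩ := hC.of_map hf
    exact map_mono (W_le_ma hA)

lemma W_cj (g : G) (S : Subgroup G) : W (cj g S) = cj g (W S) :=
  W_map (f := (MulAut.conj g).toMonoidHom) (MulAut.conj g).injective.injOn

lemma nrm_le_nrm_W (S : Subgroup G) : nrm S ≤ nrm (W S) := by
  intro g hg
  rw [mem_nrm] at hg ⊢
  rw [← W_cj, hg]

lemma card_relIndex_aux {A B : Subgroup G} (h : A ≤ B) : A.relIndex B * Nat.card A = Nat.card B := by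
  rw [mul_comm, ← relIndex_bot_left, relIndex_mul_relIndex _ _ _ bot_le h, relIndex_bot_left]

/-- Thompson's replacement lemma. -/
lemma thompson_repl {P A M : Subgroup G} (hA : IsMA P A) {x : G} (hMP : M ≤ P) (hM : Ab M)
    (hMc : M = closure {d | ∃ u ∈ A, d = u * x * u⁻¹ * x⁻¹}) :
    IsMA P (M ⊔ (A ⊓ centralizer (M : Set G))) := by
  set C := A ⊓ centralizer (M : Set G) with hC
  have hd : ∀ u ∈ A, u * x * u⁻¹ * x⁻¹ ∈ M := fun u hu => by
    rw [hMc]; exact subset_closure ⟨u, hu, rfl⟩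
  have hDab : Ab (M ⊔ C) := hM.sup (hA.ab.mono inf_le_left)
    fun a ha b hb => mem_centralizer_iff.1 hb.2 a ha
  have hDP : M ⊔ C ≤ P := sup_le hMP (inf_le_left.trans hA.le)
  have key : ∀ u ∈ A, ∀ w ∈ A, (u * x * u⁻¹ * x⁻¹)⁻¹ * (w * x * w⁻¹ * x⁻¹) ∈ C → u⁻¹ * w ∈ C := by
    intro u hu w hw hz
    set z := (u * x * u⁻¹ * x⁻¹)⁻¹ * (w * x * w⁻¹ * x⁻¹) with hzd
    have hzM : z ∈ M := M.mul_mem (M.inv_mem (hd u hu)) (hd w hw)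
    have hzA : z ∈ A := hz.1
    set t := u⁻¹ * w with ht
    have htA : t ∈ A := A.mul_mem (A.inv_mem hu) hw
    have e1 : w * x * w⁻¹ * x⁻¹ = z * (u * x * u⁻¹ * x⁻¹) := by
      rw [(hM z hzM _ (hd u hu)).eq, hzd]; group
    have e2 : t * x * t⁻¹ = z * x := by
      have h1 : w * x * w⁻¹ = z * u * x * u⁻¹ := by
        have := congrArg (· * x) e1
        simpa [mul_assoc] using this
      calc t * x * t⁻¹ = u⁻¹ * (w * x * w⁻¹) * u := by rw [ht]; group
        _ = u⁻¹ * (z * u) * x := by rw [h1]; group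
        _ = z * x := by rw [(hA.ab z hzA u hu).eq]; group
    refine ⟨htA, ?_⟩
    have hcent : M ≤ centralizer {t} := by
      rw [hMc, closure_le]
      rintro _ ⟨v, hv, rfl⟩
      rw [SetLike.mem_coe, mem_centralizer_singleton_iff]
      have h1 : t * v = v * t := hA.ab t htA v hv
      have h3 : t * (v * x * v⁻¹ * x⁻¹) * t⁻¹ = v * x * v⁻¹ * x⁻¹ := by
        calc t * (v * x * v⁻¹ * x⁻¹) * t⁻¹
            = (t * v) * x * (t * v)⁻¹ * (t * x * t⁻¹)⁻¹ := by group
          _ = v * (t * x * t⁻¹) * v⁻¹ * (t * x * t⁻¹)⁻¹ := by rw [h1]; group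
          _ = (v * z) * x * v⁻¹ * x⁻¹ * z⁻¹ := by rw [e2]; group
          _ = z * (v * x * v⁻¹ * x⁻¹) * z⁻¹ := by rw [(hA.ab v hv z hzA).eq]; group
          _ = v * x * v⁻¹ * x⁻¹ := by rw [(hM z hzM _ (hd v hv)).eq]; group
      rw [mul_inv_eq_iff_eq_mul] at h3
      exact h3.symm
    refine mem_centralizer_iff.2 fun m hm => ?_
    exact mem_centralizer_singleton_iff.1 (hcent hm)
  refine ⟨hDP, hDab, fun E hE hab => (hA.max E hE hab).trans ?_⟩
  have hCA : C ≤ A := inf_le_left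
  have hCD : C ≤ M ⊔ C := le_sup_right
  rw [← card_relIndex_aux hCA, ← card_relIndex_aux hCD]
  refine Nat.mul_le_mul_right _ ?_
  let f : (A ⧸ C.subgroupOf A) → ((M ⊔ C : Subgroup G) ⧸ C.subgroupOf (M ⊔ C)) := fun q =>
    QuotientGroup.mk ⟨(q.out : G) * x * (q.out : G)⁻¹ * x⁻¹, mem_sup_left (hd _ q.out.2)⟩
  refine Nat.card_le_card_of_injective f fun q r hqr => ?_
  have := QuotientGroup.eq.1 hqr
  rw [mem_subgroupOf] at this
  have h2 := key _ q.out.2 _ r.out.2 this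
  rw [← QuotientGroup.out_eq' q, ← QuotientGroup.out_eq' r, QuotientGroup.eq, mem_subgroupOf]
  exact h2

lemma eq_one_of_sq (hG : Odd (Nat.card G)) {z : G} (h : z * z = 1) : z = 1 := by
  rw [← pow_two] at h
  have h1 : orderOf z ∣ 2 := orderOf_dvd_of_pow_eq_one h
  have h2 : Odd (orderOf z) := hG.of_dvd_nat (orderOf_dvd_natCard z)
  rcases (Nat.dvd_prime Nat.prime_two).1 h1 with h3 | h3
  · exact orderOf_eq_one_iff.1 h3
  · rw [h3] at h2; exact absurd h2 (by decide)

/-- Glauberman's replacement theorem. -/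
lemma glauberman_repl (hG : Odd (Nat.card G)) {P A B : Subgroup G} (hP : IsPGroup p P) [Fact p.Prime]
    (hA : IsMA P A) (hBP : B ≤ P) (hPB : P ≤ nrm B)
    (hE : ∀ a ∈ B, ∀ b ∈ B, ∀ z, z ∈ A ∨ z ∈ B → Commute ⁅a, b⁆ z)
    (hn : ¬ B ≤ nrm A) :
    ∃ A', IsMA P A' ∧ A ⊓ B < A' ⊓ B ∧ A' ≤ nrm A := by
  set N := B ⊓ nrm A with hN
  have hAB : A ⊓ B ≤ N := le_inf inf_le_right (inf_le_left.trans (le_nrm A))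
  have hAN : A ≤ nrm N := (le_inf (hA.le.trans hPB) ((le_nrm A).trans (le_nrm _))).trans nrm_inf_le
  have hNA : ∀ y ∈ N ⊔ A, y ∈ B → y ∈ N := by
    intro y hy hyB
    rw [sup_comm, ← SetLike.mem_coe, Subgroup.coe_mul_of_left_le_normalizer_right _ _ hAN] at hy
    obtain ⟨a, ha, n, hn, rfl⟩ := hy
    refine N.mul_mem (hAB ⟨ha, ?_⟩) hn
    have := B.mul_mem hyB (B.inv_mem hn.1)
    simpa using this
  -- an element of `B` outside `N` normalizing `N` modulo `A`
  obtain ⟨x, hxB, hxN, hx⟩ : ∃ x ∈ B, x ∉ N ∧ ∀ u ∈ A, u * x * u⁻¹ * x⁻¹ ∈ N := by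
    have hlt : N ⊔ A < B ⊔ A := by
      refine lt_of_le_of_ne (sup_le_sup_right inf_le_left _) fun h => hn fun b hb => ?_
      exact (hNA b (h ▸ mem_sup_left hb) hb).2
    have hT : IsPGroup p (B ⊔ A : Subgroup G) := hP.to_le (sup_le hBP hA.le)
    obtain ⟨y, hy, hyn⟩ := SetLike.exists_of_lt (lt_nrm hT hlt)
    have hy1 : y ∈ B ⊔ A := hy.1
    rw [sup_comm, ← SetLike.mem_coe, Subgroup.coe_mul_of_left_le_normalizer_right _ _
      (hA.le.trans hPB)] at hy1
    obtain ⟨a, ha, b, hb, rfl⟩ := hy1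
    have haN : a ∈ nrm (N ⊔ A) := le_nrm _ (mem_sup_right ha)
    have hbN : b ∈ nrm (N ⊔ A) := by
      have := (nrm (N ⊔ A)).mul_mem ((nrm (N ⊔ A)).inv_mem haN) hy.2
      simpa using this
    refine ⟨b, hb, fun hbN' => hyn ((N ⊔ A).mul_mem (mem_sup_right ha) (mem_sup_left hbN')), ?_⟩
    intro u hu
    apply hNA
    · have h1 : b * u⁻¹ * b⁻¹ ∈ N ⊔ A :=
        (Subgroup.mem_normalizer_iff.1 hbN _).1 (mem_sup_right (A.inv_mem hu))
      have := (N ⊔ A).mul_mem (mem_sup_right hu) h1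
      convert this using 1; group
    · exact comm_mem (hPB (hA.le hu)) hb
  set M := closure {d | ∃ u ∈ A, d = u * x * u⁻¹ * x⁻¹} with hM
  have hMN : M ≤ N := by
    rw [hM, closure_le]; rintro _ ⟨u, hu, rfl⟩; exact hx u hu
  have hcj : ∀ u ∈ A, ∀ b ∈ B, u * b * u⁻¹ ∈ B := fun u hu b hb =>
    (Subgroup.mem_normalizer_iff.1 (hPB (hA.le hu)) b).1 hb
  -- the commutator form on `B`
  have bl : ∀ a ∈ B, ∀ b ∈ B, ∀ c ∈ B, ⁅a * b, c⁆ = ⁅a, c⁆ * ⁅b, c⁆ := by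
    intro a ha b hb c hc
    have h1 := (hE b hb c hc a (Or.inr ha)).eq
    calc ⁅a * b, c⁆ = a * ⁅b, c⁆ * (c * a⁻¹ * c⁻¹) := by simp only [commutatorElement_def]; group
      _ = ⁅b, c⁆ * ⁅a, c⁆ := by rw [← h1]; simp only [commutatorElement_def]; group
      _ = _ := (hE b hb c hc _ (Or.inr (by
          rw [commutatorElement_def]
          exact B.mul_mem (B.mul_mem (B.mul_mem ha hc) (B.inv_mem ha)) (B.inv_mem hc)))).eq
  have br : ∀ a ∈ B, ∀ b ∈ B, ∀ c ∈ B, ⁅c, a * b⁆ = ⁅c, a⁆ * ⁅c, b⁆ := by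
    intro a ha b hb c hc
    rw [← commutatorElement_inv, bl a ha b hb c hc, mul_inv_rev, commutatorElement_inv,
      commutatorElement_inv]
    exact (hE c hc b hb _ (Or.inr (by
          rw [commutatorElement_def]
          exact B.mul_mem (B.mul_mem (B.mul_mem hc ha) (B.inv_mem hc)) (B.inv_mem ha)))).eq
  have bri : ∀ a ∈ B, ∀ c ∈ B, ⁅c, a⁻¹⁆ = ⁅c, a⁆⁻¹ := by
    intro a ha c hc
    have := br a ha a⁻¹ (B.inv_mem ha) c hc
    rw [mul_inv_cancel, commutatorElement_one_right] at this
    exact eq_inv_of_mul_eq_one_right this.symm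
  have binv : ∀ u ∈ A, ∀ b ∈ B, ∀ c ∈ B, ⁅u * b * u⁻¹, u * c * u⁻¹⁆ = ⁅b, c⁆ := by
    intro u hu b hb c hc
    rw [← conjugate_commutatorElement, ← (hE b hb c hc u (Or.inl hu)).eq]
    group
  have hMZ : ∀ m ∈ M, ∀ z ∈ A ⊓ B, Commute m z := by
    intro m hm z hz
    have : M ≤ centralizer {z} := by
      rw [hM, closure_le]
      rintro _ ⟨u, hu, rfl⟩
      rw [SetLike.mem_coe, mem_centralizer_singleton_iff]
      have h1 : z * u = u * z := hA.ab z hz.1 u hu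
      set e := ⁅z, x⁆ with he
      have h2 : z * x = e * x * z := by rw [he, commutatorElement_def]; group
      have hd : u * x * u⁻¹ * x⁻¹ ∈ B := (hx u hu).1
      have h4 : z * (u * x * u⁻¹ * x⁻¹) * z⁻¹ = u * x * u⁻¹ * x⁻¹ := by
        calc z * (u * x * u⁻¹ * x⁻¹) * z⁻¹
            = (z * u) * x * (z * u)⁻¹ * (z * x * z⁻¹)⁻¹ := by group
          _ = u * (z * x) * z⁻¹ * u⁻¹ * (z * x * z⁻¹)⁻¹ := by rw [h1]; group
          _ = (u * e) * x * u⁻¹ * x⁻¹ * e⁻¹ := by rw [h2]; group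
          _ = e * (u * x * u⁻¹ * x⁻¹) * e⁻¹ := by
              have h5 : e * u = u * e := (hE z hz.2 x hxB u (Or.inl hu)).eq
              rw [← h5]; group
          _ = u * x * u⁻¹ * x⁻¹ := by
              have h5 : e * (u * x * u⁻¹ * x⁻¹) = (u * x * u⁻¹ * x⁻¹) * e :=
                (hE z hz.2 x hxB _ (Or.inr hd)).eq
              rw [h5]; group
      rw [mul_inv_eq_iff_eq_mul] at h4
      exact h4.symm
    exact mem_centralizer_singleton_iff.1 (this hm)
  have hform : ∀ u ∈ A, ∀ v ∈ A,
      ⁅u * x * u⁻¹ * x⁻¹, v * x * v⁻¹ * x⁻¹⁆ =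
        (⁅x, (u * v) * x * (u * v)⁻¹⁆ * ⁅x, u * x * u⁻¹⁆⁻¹ * ⁅x, v * x * v⁻¹⁆⁻¹)⁻¹ := by
    intro u hu v hv
    set y := v * x * v⁻¹ * x⁻¹ with hy
    set d := u * x * u⁻¹ * x⁻¹ with hd
    have hyB : y ∈ B := (hx v hv).1
    have hdB : d ∈ B := (hx u hu).1
    set e := u * y * u⁻¹ * y⁻¹ with he
    have heB : e ∈ B := comm_mem (hPB (hA.le hu)) hyB
    have heA : e ∈ A := by
      have h1 : y * u⁻¹ * y⁻¹ ∈ A :=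
        (Subgroup.mem_normalizer_iff.1 (hx v hv).2 u⁻¹).1 (A.inv_mem hu)
      have := A.mul_mem hu h1
      rw [he]; convert this using 1; group
    have hxu : u * x * u⁻¹ = d * x := by rw [hd]; group
    have hyu : u * y * u⁻¹ = e * y := by rw [he]; group
    have heu : u * e * u⁻¹ = e := by rw [(hA.ab u hu e heA).eq]; group
    have h1 : ⁅x, y⁆ = ⁅x, e⁆ * (⁅d, y⁆ * ⁅x, y⁆) := by
      conv_lhs => rw [← binv u hu x hxB y hyB, hyu, br e heB y hyB _ (hcj u hu x hxB)]
      rw [hxu, bl d hdB x hxB y hyB, ← hxu]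
      congr 1
      conv_lhs => rw [← heu]
      exact binv u hu x hxB e heB
    have h2 : ⁅x, e⁆ * ⁅d, y⁆ = 1 := by
      rw [← mul_assoc] at h1
      exact mul_eq_right.1 h1.symm
    have hee : e = ((u * v) * x * (u * v)⁻¹) * (u * x * u⁻¹)⁻¹ * x * (v * x * v⁻¹)⁻¹ := by
      have h3 : e = u * (v * x * v⁻¹ * x⁻¹) * u⁻¹ * (v * x * v⁻¹ * x⁻¹)⁻¹ := rfl
      rw [h3]; group
    have huvB := hcj (u * v) (A.mul_mem hu hv) x hxB
    have huB := hcj u hu x hxB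
    have hvB := hcj v hv x hxB
    rw [eq_inv_of_mul_eq_one_right h2, hee,
      br _ (B.mul_mem (B.mul_mem huvB (B.inv_mem huB)) hxB) _ (B.inv_mem hvB) x hxB,
      br _ (B.mul_mem huvB (B.inv_mem huB)) _ hxB x hxB,
      br _ huvB _ (B.inv_mem huB) x hxB, bri _ huB x hxB, bri _ hvB x hxB,
      commutatorElement_self, mul_one]
  have hMab0 : ∀ u ∈ A, ∀ v ∈ A, Commute (u * x * u⁻¹ * x⁻¹) (v * x * v⁻¹ * x⁻¹) := by
    intro u hu v hv
    have h1 := hform u hu v hv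
    have h2 := hform v hv u hu
    have hc : Commute ⁅x, v * x * v⁻¹⁆⁻¹ ⁅x, u * x * u⁻¹⁆⁻¹ :=
      (hE x hxB _ (hcj v hv x hxB) _ (Or.inr (by
        rw [commutatorElement_def]
        exact B.mul_mem (B.mul_mem (B.mul_mem hxB (hcj u hu x hxB)) (B.inv_mem hxB))
          (B.inv_mem (hcj u hu x hxB))))).inv_inv
    rw [(hA.ab v hv u hu).eq, mul_assoc ⁅x, _⁆, hc.eq, ← mul_assoc, ← h1] at h2
    have h3 : ⁅u * x * u⁻¹ * x⁻¹, v * x * v⁻¹ * x⁻¹⁆ = 1 :=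
      eq_one_of_sq hG (by
        nth_rw 1 [← h2]
        rw [← commutatorElement_inv, inv_mul_cancel])
    exact commutatorElement_eq_one_iff_commute.1 h3
  have hMab : Ab M := by
    have h1 : M ≤ centralizer {d | ∃ u ∈ A, d = u * x * u⁻¹ * x⁻¹} := by
      rw [hM, closure_le]
      rintro _ ⟨u, hu, rfl⟩
      rw [SetLike.mem_coe, mem_centralizer_iff]
      rintro _ ⟨v, hv, rfl⟩
      exact (hMab0 v hv u hu).eq
    have h2 : M ≤ centralizer (M : Set G) := by
      rw [le_centralizer_iff] 
      conv_lhs => rw [hM]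
      rw [closure_le]
      intro d hd
      rw [SetLike.mem_coe, mem_centralizer_iff]
      intro m hm
      exact (mem_centralizer_iff.1 (h1 hm) d hd).symm
    intro a ha b hb
    exact mem_centralizer_iff.1 (h2 hb) a ha
  have hMP : M ≤ P := hMN.trans (inf_le_left.trans hBP)
  refine ⟨_, thompson_repl hA hMP hMab hM, ?_, ?_⟩
  · have hle : A ⊓ B ≤ (M ⊔ A ⊓ centralizer (M : Set G)) ⊓ B := by
      refine le_inf (le_trans (le_inf inf_le_left fun z hz => ?_) le_sup_right) inf_le_right
      rw [mem_centralizer_iff]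
      exact fun m hm => (hMZ m hm z hz).eq
    refine lt_of_le_of_ne hle fun heq => hxN ⟨hxB, mem_nrm_of_le ?_⟩
    rw [cj_le_iff]
    intro u hu
    have h1 : u⁻¹ * x * u⁻¹⁻¹ * x⁻¹ ∈ M := subset_closure ⟨u⁻¹, A.inv_mem hu, rfl⟩
    have h2 : u⁻¹ * x * u⁻¹⁻¹ * x⁻¹ ∈ A ⊓ B := by
      rw [heq]; exact ⟨mem_sup_left h1, (hMN h1).1⟩
    have := A.mul_mem hu h2.1
    simpa [mul_assoc] using this
  · exact sup_le (hMN.trans inf_le_right) (inf_le_left.trans (le_nrm A))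

end OddP

/-! ### Normality of `W(P)` -/

namespace OddP
open Subgroup
open scoped commutatorElement
variable {G : Type} [Group G] {p : ℕ} [Finite G]

lemma closure_normal {K : Set G} (hK : ∀ g : G, ∀ u ∈ K, g * u * g⁻¹ ∈ K) : (closure K).Normal := by
  rw [← nrm_eq_top, eq_top_iff]
  intro g _
  exact closure_le_nrm (fun k hk => hK g k hk)

lemma quad_conj {B : Subgroup G} [hB : B.Normal] (g u : G)
    (hu : ∀ b ∈ B, Commute u (u * b * u⁻¹ * b⁻¹)) :
    ∀ b ∈ B, Commute (g * u * g⁻¹) (g * u * g⁻¹ * b * (g * u * g⁻¹)⁻¹ * b⁻¹) := by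
  intro b hb
  have := hu (g⁻¹ * b * g) (by simpa using hB.conj_mem b hb g⁻¹)
  have h2 := congrArg (fun z => g * z * g⁻¹) this.eq
  change _ = _
  calc _ = g * (u * (u * (g⁻¹ * b * g) * u⁻¹ * (g⁻¹ * b * g)⁻¹)) * g⁻¹ := by group
    _ = _ := h2
    _ = _ := by group

/-- Glauberman's theorem on `Z(J(P))`, relative to a normal `p`-subgroup. -/
theorem W_inf_normal [hp : Fact p.Prime] (hpo : Odd p) (hG : Odd (Nat.card G)) {P : Subgroup G}
    (hP : IsSyl p P ⊤) : ∀ (m : ℕ) (B : Subgroup G), Nat.card B ≤ m → B.Normal → IsPGroup p B →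
      (W P ⊓ B).Normal := by
  intro m
  induction m with
  | zero => intro B hB; exact absurd (Nat.card_pos (α := B)) (by omega)
  | succ m ih =>
  intro B hBm hBn hBp
  set Z := W P with hZ
  have hPZ : P ≤ nrm Z := (le_nrm P).trans (nrm_le_nrm_W P)
  have hBP : B ≤ P := hP.le_of_nrm le_top hBp (by rw [nrm_eq_top.2 hBn])
  by_cases hB1 : normalClosure ((Z ⊓ B : Subgroup G) : Set G) < B
  · have h1 : Z ⊓ B = Z ⊓ normalClosure ((Z ⊓ B : Subgroup G) : Set G) := by
      apply le_antisymm
      · exact le_inf inf_le_left subset_normalClosure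
      · exact inf_le_inf_left _ hB1.le
    rw [h1]
    exact ih _ (by have := card_lt hB1; omega) inferInstance (hBp.to_le hB1.le)
  have hBcl : normalClosure ((Z ⊓ B : Subgroup G) : Set G) = B := by
    have : normalClosure ((Z ⊓ B : Subgroup G) : Set G) ≤ B := normalClosure_le_normal inf_le_right
    by_contra hne
    exact hB1 (lt_of_le_of_ne this hne)
  by_cases hBb : B = ⊥
  · rw [hBb, inf_bot_eq]; infer_instance
  -- the derived subgroup of `B` lies in `Z`
  have hB'lt : ⁅B, B⁆ < B := by
    have : Group.IsNilpotent B := hBp.isNilpotent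
    have : Nontrivial B := (nontrivial_iff_ne_bot B).2 hBb
    have h1 := IsSolvable.commutator_lt_top_of_nontrivial B
    refine lt_of_le_of_ne (commutator_le_self B) fun h => h1.ne ?_
    apply map_injective B.subtype_injective
    rw [_root_.commutator_def, map_commutator, ← MonoidHom.range_eq_map, range_subtype, h]
  have hN := ih ⁅B, B⁆ (by have := card_lt hB'lt; omega) inferInstance (hBp.to_le hB'lt.le)
  have hB'Z : ⁅B, B⁆ ≤ Z := by
    set N := Z ⊓ ⁅B, B⁆ with hNd
    let π := QuotientGroup.mk' N
    have hmn : (B.map π).Normal := hBn.map π (QuotientGroup.mk'_surjective N)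
    have h1 : normalClosure ((Z ⊓ B : Subgroup G) : Set G) ≤
        (centralizer ((B.map π : Subgroup (G ⧸ N)) : Set (G ⧸ N))).comap π := by
      apply normalClosure_le_normal
      intro z hz
      rw [SetLike.mem_coe, mem_comap, mem_centralizer_iff]
      rintro _ ⟨b, hb, rfl⟩
      rw [← map_mul, ← map_mul]
      refine (QuotientGroup.eq.2 ?_)
      have hbz : ⁅z⁻¹, b⁻¹⁆ ∈ N := by
        refine ⟨?_, commutator_mem_commutator (B.inv_mem hz.2) (B.inv_mem hb)⟩
        rw [commutatorElement_def]
        have := (Subgroup.mem_normalizer_iff.1 (hPZ (P.inv_mem (hBP hb))) z).1 hz.1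
        simpa [mul_assoc] using Z.mul_mem (Z.inv_mem hz.1) this
      convert hbz using 1
      rw [commutatorElement_def]; group
    rw [hBcl] at h1
    rw [commutator_le]
    intro a ha b hb
    have h2 := mem_centralizer_iff.1 (h1 ha) (π b) ⟨b, hb, rfl⟩
    rw [← map_mul, ← map_mul] at h2
    have h3 := (QuotientGroup.eq.1 h2)
    have h4 : N.Normal := hN
    have h5 := h4.conj_mem _ h3 (b * a)
    have h6 : ⁅a, b⁆ ∈ N := by
      rw [commutatorElement_def]; convert h5 using 1; group
    exact h6.1
  have hB'B : B ≤ centralizer ((⁅B, B⁆ : Subgroup G) : Set G) := by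
    have : normalClosure ((Z ⊓ B : Subgroup G) : Set G) ≤ centralizer ((⁅B, B⁆ : Subgroup G) : Set G) := by
      apply normalClosure_le_normal
      intro z hz
      rw [SetLike.mem_coe, mem_centralizer_iff]
      intro b hb
      exact (W_ab P) b (hB'Z hb) z hz.1
    rwa [hBcl] at this
  set L := (nrm (Z ⊓ B)).normalCore with hL
  have hLn : L ≤ nrm (Z ⊓ B) := normalCore_le _
  have hLnorm : L.Normal := normalCore_normal _
  have hBnt : nrm B = ⊤ := nrm_eq_top.2 hBn
  have hnZB : nrm Z ≤ nrm (Z ⊓ B) := by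
    refine le_trans ?_ nrm_inf_le
    rw [hBnt, inf_top_eq]
  have hP1 : IsSyl p (P ⊓ L) L := hP.inf_normal le_top (by rw [nrm_eq_top.2 hLnorm])
  have hfr : ∀ g : G, ∃ n ∈ L, n * g ∈ nrm (P ⊓ L) := fun g =>
    frattini_arg (L := ⊤) hP1 (by rw [nrm_eq_top.2 hLnorm]) (mem_top g)
  by_cases hall : ∀ A, IsMA P A → A ≤ L
  · have hW : W P = W (P ⊓ L) := W_eq_of_all inf_le_left fun A hA => le_inf hA.le (hall A hA)
    rw [← nrm_eq_top, eq_top_iff]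
    intro g _
    obtain ⟨n, hn, hng⟩ := hfr g
    have h1 : n * g ∈ nrm (Z ⊓ B) := by
      apply hnZB
      rw [hZ, hW]
      exact nrm_le_nrm_W _ hng
    have := (nrm (Z ⊓ B)).mul_mem ((nrm (Z ⊓ B)).inv_mem (hLn hn)) h1
    simpa using this
  exfalso
  push Not at hall
  obtain ⟨A, ⟨hA, hAL⟩, hAmax⟩ := Set.exists_max_image {A : Subgroup G | IsMA P A ∧ ¬ A ≤ L}
    (fun A => Nat.card (A ⊓ B : Subgroup G)) (Set.toFinite _) hall
  by_cases hBA : B ≤ nrm A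
  · set K := {x : G | ∀ b ∈ B, Commute x (x * b * x⁻¹ * b⁻¹)} with hK
    have hst := p_stable hpo hG B hBp
    have hKn : (closure K).Normal := closure_normal fun g u hu => quad_conj g u hu
    have hAK : A ≤ closure K := by
      intro a ha
      refine subset_closure fun b hb => hA.ab a ha _ ?_
      have := (Subgroup.mem_normalizer_iff.1 (hBA hb) a⁻¹).1 (A.inv_mem ha)
      simpa [mul_assoc] using A.mul_mem ha this
    have hKL : closure K ≤ L := by
      let C := centralizer (B : Set G)
      let π := QuotientGroup.mk' C
      have hS : IsSyl p (P ⊓ closure K) (closure K) :=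
        hP.inf_normal le_top (by rw [nrm_eq_top.2 hKn])
      have hpg : IsPGroup p ((closure K).map π) := by
        rintro ⟨_, n, hn, rfl⟩
        obtain ⟨k, hk⟩ := hst n hn
        refine ⟨k, Subtype.ext ?_⟩
        change (π n) ^ p ^ k = 1
        rw [← map_pow]
        exact (QuotientGroup.eq_one_iff _).2 hk
      have hS2 := hS.map π
      have heq := (hS2.max _ le_rfl hpg hS2.le).le
      rw [hL]
      rw [normal_le_normalCore]
      intro k hk
      have h1 : π k ∈ (P ⊓ closure K).map π := heq (mem_map_of_mem π hk)
      obtain ⟨q, hq, hqk⟩ := h1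
      have h2 := QuotientGroup.eq.1 hqk
      have h3 : q⁻¹ * k ∈ nrm (Z ⊓ B) := by
        apply mem_nrm_of_le
        rw [cj_le_iff]
        intro z hz
        rw [← mem_centralizer_iff.1 h2 z hz.2, mul_inv_cancel_right]
        exact hz
      have := (nrm (Z ⊓ B)).mul_mem (hnZB (hPZ hq.1)) h3
      simpa using this
    exact hAL (hAK.trans hKL)
  · obtain ⟨A', hA', hlt, hAstn⟩ := glauberman_repl hG hP.pg hA hBP
      (by rw [hBnt]; exact le_top) (by
        intro a ha b hb z hz
        have hab : ⁅a, b⁆ ∈ ⁅B, B⁆ := commutator_mem_commutator ha hb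
        rcases hz with hz | hz
        · exact W_commute hA (hB'Z hab) hz
        · exact mem_centralizer_iff.1 (hB'B hz) _ hab) hBA
    have hA'L : A' ≤ L := by
      by_contra h
      have := hAmax A' ⟨hA', h⟩
      have h2 := card_lt hlt
      omega
    have hA'P : A' ≤ P ⊓ L := le_inf hA'.le hA'L
    have hZW : Z ≤ W (P ⊓ L) := hA'.W_le_W hA'P inf_le_left
    have hBW : B ≤ W (P ⊓ L) := by
      rw [← hBcl, normalClosure, closure_le]
      intro y hy
      rw [Group.mem_conjugatesOfSet_iff] at hy
      obtain ⟨z, hz, hzy⟩ := hy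
      obtain ⟨g, rfl⟩ := isConj_iff.1 hzy
      obtain ⟨n, hn, hng⟩ := hfr g⁻¹
      have h1 : n * z * n⁻¹ ∈ Z ⊓ B := (Subgroup.mem_normalizer_iff.1 (hLn hn) z).1 hz
      have h2 := nrm_le_nrm_W _ ((nrm _).inv_mem hng)
      have h3 := (Subgroup.mem_normalizer_iff.1 h2 _).1 (hZW h1.1)
      simpa [mul_assoc] using h3
    exact hBA (hBW.trans ((W_le_ma (hA'.of_le hA'P inf_le_left)).trans hAstn))

/-- If `O_p(G)` (here `Q`) contains its centralizer, then `W(P)` is normal in `G`. -/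
theorem W_normal [hp : Fact p.Prime] (hpo : Odd p) (hG : Odd (Nat.card G)) {P Q : Subgroup G}
    (hP : IsSyl p P ⊤) (hQn : Q.Normal) (hQp : IsPGroup p Q)
    (hQmax : ∀ N : Subgroup G, N.Normal → IsPGroup p N → N ≤ Q)
    (hC : centralizer (Q : Set G) ≤ Q) : (W P).Normal := by
  have hPZ : P ≤ nrm (W P) := (le_nrm P).trans (nrm_le_nrm_W P)
  have hQP : Q ≤ P := hP.le_of_nrm le_top hQp (by rw [nrm_eq_top.2 hQn])
  have h1 : W P ≤ Q := by
    have hst := p_stable hpo hG Q hQp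
    refine le_trans ?_ (hQmax _ (closure_normal fun g u hu => quad_conj (B := Q) g u hu) ?_)
    · intro z hz
      refine subset_closure fun b hb => W_ab P z hz _ ?_
      have := (Subgroup.mem_normalizer_iff.1 (hPZ (hQP hb)) z⁻¹).1 ((W P).inv_mem hz)
      simpa [mul_assoc] using (W P).mul_mem hz this
    · rintro ⟨n, hn⟩
      obtain ⟨k, hk⟩ := hst n hn
      obtain ⟨j, hj⟩ := hQp ⟨_, hC hk⟩
      refine ⟨k + j, Subtype.ext ?_⟩
      rw [pow_add, pow_mul]
      have h2 : (n ^ p ^ k) ^ p ^ j = 1 := congrArg Subtype.val hj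
      exact h2
  have := W_inf_normal hpo hG hP _ Q le_rfl hQn hQp
  rwa [inf_eq_left.2 h1] at this

end OddP

/-! ### Control of fusion: reductions -/

namespace OddP
open Subgroup
open scoped commutatorElement
variable {G : Type} [Group G] {p : ℕ}

/-- The elements of `H` realize every conjugation of `A` into `P`. -/
def Good (P H A : Subgroup G) : Prop :=
  ∀ g, cj g A ≤ P → ∃ h ∈ H, ∀ a ∈ A, h * a * h⁻¹ = g * a * g⁻¹

/-- The normalizer of `W(P)` controls fusion in each Sylow `p`-subgroup `P`. -/
def FF (p : ℕ) (G : Type) [Group G] : Prop :=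
  ∀ P : Subgroup G, IsSyl p P ⊤ → ∀ A ≤ P, Good P (nrm (W P)) A

lemma IsSyl.subgroupOf {S L : Subgroup G} (h : IsSyl p S L) : IsSyl p (S.subgroupOf L) ⊤ :=
  isSyl_top h.toSylow

lemma conj_act {g h k : G} : ∀ {a : G}, (g * h) * a * (g * h)⁻¹ = g * (h * a * h⁻¹) * g⁻¹ := by
  intro a; group

lemma cj_congr {g h : G} {A : Subgroup G} (H : ∀ a ∈ A, h * a * h⁻¹ = g * a * g⁻¹) :
    cj h A = cj g A := by
  apply le_antisymm <;> rw [cj_le_iff] <;> intro a ha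
  · rw [H a ha]; exact conj_mem_cj ha
  · rw [← H a ha]; exact conj_mem_cj ha

variable [Finite G]

/-- Fusion control in a proper subgroup, expressed inside the ambient group. -/
lemma FF.rel {L S A : Subgroup G} (hF : FF p L) (hS : IsSyl p S L) (hA : A ≤ S) {g : G} (hg : g ∈ L)
    (hgA : OddP.cj g A ≤ S) :
    ∃ n ∈ L, n ∈ nrm (W S) ∧ ∀ a ∈ A, n * a * n⁻¹ = g * a * g⁻¹ := by
  have hAL := hA.trans hS.le
  obtain ⟨n, hn, hna⟩ := hF (S.subgroupOf L) hS.subgroupOf (A.subgroupOf L)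
    (comap_mono hA) ⟨g, hg⟩ (by
      rw [cj_le_iff]
      rintro ⟨a, haL⟩ ha
      exact hgA (conj_mem_cj ha))
  refine ⟨n, n.2, ?_, fun a ha => congrArg Subtype.val (hna ⟨a, hAL ha⟩ ha)⟩
  have hW : (W (S.subgroupOf L)).map L.subtype = W S := by
    rw [← W_map L.subtype_injective.injOn, subgroupOf_map_subtype, inf_eq_left.2 hS.le]
  rw [mem_nrm] at hn ⊢
  rw [← hW]
  conv_rhs => rw [← hn]
  ext x
  constructor
  · intro hx
    rw [mem_cj] at hx
    obtain ⟨y, hy, hyx⟩ := hx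
    refine ⟨n * y * n⁻¹, conj_mem_cj hy, ?_⟩
    have : (y : G) = (n : G)⁻¹ * x * n := hyx
    simp [this, mul_assoc]
  · rintro ⟨_, ⟨y, hy, rfl⟩, rfl⟩
    exact conj_mem_cj (A := (W (S.subgroupOf L)).map L.subtype) ⟨y, hy, rfl⟩

lemma eq_one_of_coprime {Q X : Subgroup G} [hp : Fact p.Prime] (hQ : IsPGroup p Q)
    (hX : (Nat.card X).Coprime p) {x : G} (h1 : x ∈ Q) (h2 : x ∈ X) : x = 1 := by
  obtain ⟨k, hk⟩ := hQ ⟨x, h1⟩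
  have hk : x ^ p ^ k = 1 := congrArg Subtype.val hk
  have h3 : orderOf x ∣ p ^ k := orderOf_dvd_of_pow_eq_one hk
  have h4 : orderOf x ∣ Nat.card X := by
    have := orderOf_dvd_natCard (⟨x, h2⟩ : X)
    rwa [orderOf_mk] at this
  exact orderOf_eq_one_iff.1 (Nat.eq_one_of_dvd_coprimes (hX.pow_right k) h4 h3)

/-- Conjugacy of `p`-subgroups that agree modulo a normal `p'`-subgroup. -/
lemma conj_mod_p' [hp : Fact p.Prime] {X D E : Subgroup G} (hX : (Nat.card X).Coprime p)
    (hE : IsPGroup p E) (hD : IsPGroup p D) (hEX : E ≤ nrm X) (hDE : D ≤ X ⊔ E)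
    (hc : Nat.card D = Nat.card E) : ∃ x ∈ X, cj x D = E := by
  have hmem : ∀ y ∈ X ⊔ E, ∃ e ∈ E, ∃ x ∈ X, y = e * x := by
    intro y hy
    rw [sup_comm, ← SetLike.mem_coe, Subgroup.coe_mul_of_left_le_normalizer_right _ _ hEX] at hy
    obtain ⟨e, he, x, hx, rfl⟩ := hy
    exact ⟨e, he, x, hx, rfl⟩
  have hS : IsSyl p E (X ⊔ E) := by
    refine ⟨le_sup_right, hE, fun Q hQ hQp hEQ => le_antisymm (fun q hq => ?_) hEQ⟩
    obtain ⟨e, he, x, hx, rfl⟩ := hmem q (hQ hq)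
    have h1 : x ∈ Q := by simpa using Q.mul_mem (Q.inv_mem (hEQ he)) hq
    rw [eq_one_of_coprime hQp hX h1 hx, mul_one]; exact he
  have hS2 : IsSyl p D (X ⊔ E) := hS.of_card hDE hD hc.ge
  obtain ⟨y, hy, hyD⟩ := hS.conj_eq hS2
  obtain ⟨e, he, x, hx, rfl⟩ := hmem y hy
  refine ⟨x, hx, ?_⟩
  rw [← cj_cj] at hyD
  have := congrArg (cj e⁻¹) hyD
  rwa [cj_inv_cj, cj_eq_of_mem (E.inv_mem he)] at this

/-- Control of fusion by the normalizer of `W(P)` lifts from the quotient by a normal `p'`-subgroup. -/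
theorem lift_p' [hp : Fact p.Prime] {X P : Subgroup G} [hXn : X.Normal] (hX : (Nat.card X).Coprime p)
    (hP : IsSyl p P ⊤) (hF : FF p (G ⧸ X)) : ∀ A ≤ P, Good P (nrm (W P)) A := by
  intro A hA g hg
  let π := QuotientGroup.mk' X
  have hπs : Function.Surjective π := QuotientGroup.mk'_surjective X
  have hπ : ∀ a b : G, π a = π b ↔ a⁻¹ * b ∈ X := fun a b => QuotientGroup.eq
  have hinj : Set.InjOn π P := by
    intro a ha b hb hab
    have := eq_one_of_coprime hP.pg hX (P.mul_mem (P.inv_mem ha) hb) ((hπ a b).1 hab)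
    rwa [inv_mul_eq_one] at this
  have hPπ : IsSyl p (P.map π) ⊤ := by
    have := hP.map π
    rwa [← MonoidHom.range_eq_map, MonoidHom.range_eq_top.2 hπs] at this
  obtain ⟨nb, hnb, hact⟩ := hF _ hPπ (A.map π) (map_mono hA) (π g) (by
    rw [cj_le_iff]
    rintro _ ⟨a, ha, rfl⟩
    exact ⟨g * a * g⁻¹, hg (conj_mem_cj ha), by simp⟩)
  obtain ⟨n0, rfl⟩ := hπs nb
  rw [W_map hinj] at hnb
  set Z := W P with hZ
  have hPZ : P ≤ nrm Z := (le_nrm P).trans (nrm_le_nrm_W P)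
  have hZp : IsPGroup p Z := hP.pg.to_le (W_le P)
  have hXt : nrm X = ⊤ := nrm_eq_top.2 hXn
  obtain ⟨x, hx, hxn⟩ := conj_mod_p' (D := cj n0 Z) (E := Z) hX hZp (pg_cj hZp)
    (by rw [hXt]; exact le_top) (by
      rw [cj_le_iff]
      intro z hz
      have h1 := (Subgroup.mem_normalizer_iff.1 hnb (π z)).1 ⟨z, hz, rfl⟩
      obtain ⟨z', hz', hzz⟩ := h1
      rw [← map_mul, ← map_inv, ← map_mul, hπ] at hzz
      have := (X ⊔ Z).mul_mem (mem_sup_right hz') (mem_sup_left hzz)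
      simpa using this) (card_cj _ _)
  set n := x * n0 with hn
  have hnZ : n ∈ nrm Z := by rw [mem_nrm, hn, ← cj_cj]; exact hxn
  have hπx : ∀ x ∈ X, π x = 1 := fun x hx => (QuotientGroup.eq_one_iff x).2 hx
  have hπn : π n = π n0 := by rw [hn, map_mul, hπx x hx, one_mul]
  have hAp : IsPGroup p A := hP.pg.to_le hA
  have hXZ : (Nat.card (X ⊓ nrm Z : Subgroup G)).Coprime p :=
    Nat.Coprime.coprime_dvd_left (card_dvd_of_le inf_le_left) hX
  obtain ⟨t, ht, htn⟩ := conj_mod_p' (X := X ⊓ nrm Z) (D := cj n A) (E := cj g A) hXZ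
    (pg_cj hAp) (pg_cj hAp) (by
      refine le_trans (le_inf ?_ ((hg.trans hPZ).trans (le_nrm _))) nrm_inf_le
      rw [hXt]; exact le_top) (by
      rw [cj_le_iff]
      intro a ha
      have h1 := hact (π a) ⟨a, ha, rfl⟩
      rw [← hπn, ← map_mul, ← map_inv, ← map_mul, ← map_mul, ← map_inv, ← map_mul] at h1
      have h2 := (hπ _ _).1 h1.symm
      have h3 : n * a * n⁻¹ ∈ nrm Z := mul_mem (mul_mem hnZ (hPZ (hA ha))) (inv_mem hnZ)
      have h4 : g * a * g⁻¹ ∈ nrm Z := hPZ (hg (conj_mem_cj ha))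
      have h5 : (g * a * g⁻¹)⁻¹ * (n * a * n⁻¹) ∈ X ⊓ nrm Z :=
        mem_inf.2 ⟨h2, mul_mem (inv_mem h4) h3⟩
      have := mul_mem (mem_sup_right (S := X ⊓ nrm Z) (conj_mem_cj (g := g) ha)) (mem_sup_left h5)
      rwa [mul_inv_cancel_left] at this)
      (by rw [card_cj, card_cj])
  refine ⟨t * n, mul_mem ht.2 hnZ, fun a ha => hinj ?_ (hg (conj_mem_cj ha)) ?_⟩
  · apply hg
    rw [← htn, cj_cj]
    exact conj_mem_cj ha
  · have h1 := hact (π a) ⟨a, ha, rfl⟩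
    simp only [map_mul, map_inv, hπx t ht.1, one_mul, hπn]
    exact h1

/-- Alperin's fusion argument: it suffices to control the automorphisms induced on fully
normalized subgroups. -/
theorem alperin [hp : Fact p.Prime] {P H : Subgroup G} (hP : IsSyl p P ⊤)
    (hD : ∀ D ≤ P, IsSyl p (P ⊓ nrm D) (nrm D) →
      (∀ R ≤ P, Nat.card D < Nat.card R → Good P H R) →
      ∀ l ∈ nrm D, ∃ h ∈ H, ∀ a ∈ D, h * a * h⁻¹ = l * a * l⁻¹) :
    ∀ R ≤ P, Good P H R := by
  suffices h : ∀ n : ℕ, ∀ R ≤ P, Nat.card P - Nat.card R ≤ n → Good P H R from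
    fun R hR => h _ R hR le_rfl
  intro n
  induction n using Nat.strong_induction_on with
  | _ n ih =>
  intro R hR hn
  have ih' : ∀ S ≤ P, Nat.card R < Nat.card S → Good P H S := by
    intro S hS hc
    have := card_mono hS
    exact ih _ (by omega) S hS le_rfl
  intro g hg
  by_cases hRP : R = P
  · subst hRP
    have hgn : g ∈ nrm R := mem_nrm_of_le hg
    refine hD R le_rfl ?_ ih' g hgn
    rw [inf_eq_left.2 (le_nrm R)]
    exact hP.of_le (le_nrm R) le_top
  have hRlt : R < P := lt_of_le_of_ne hR hRP
  obtain ⟨S, hS1, hS⟩ := exists_syl (p := p) (inf_le_right : P ⊓ nrm R ≤ nrm R) hP.pg.to_inf_left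
  obtain ⟨g0, -, hg0⟩ := hP.conj le_top hS.pg
  set D := cj g0 R with hDd
  have hcD : Nat.card D = Nat.card R := card_cj _ _
  have hRS : R ≤ S := (le_inf hR (le_nrm R)).trans hS1
  have hDP : D ≤ P := (cj_mono hRS).trans hg0
  have hSD : IsSyl p (cj g0 S) (nrm D) := by rw [hDd, nrm_cj]; exact hS.cj g0
  have hful : IsSyl p (P ⊓ nrm D) (nrm D) := by
    have := hSD.max (P ⊓ nrm D) inf_le_right hP.pg.to_inf_left (le_inf hg0 hSD.le)
    rwa [this]
  obtain ⟨h0, hh0, ha0⟩ := ih' (P ⊓ nrm R) inf_le_left (card_lt (lt_nrm hP.pg hRlt)) g0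
    ((cj_mono hS1).trans hg0)
  set R2 := cj g R with hR2
  have hcR2 : Nat.card R2 = Nat.card R := card_cj _ _
  have hR2lt : R2 < P := lt_of_le_of_ne hg fun h => by
    have := card_lt hRlt
    rw [← h, hcR2] at this
    exact lt_irrefl _ this
  have hgS : IsSyl p (cj g S) (nrm R2) := by rw [hR2, nrm_cj]; exact hS.cj g
  obtain ⟨l, hl, hlS⟩ := hgS.conj (inf_le_right : P ⊓ nrm R2 ≤ nrm R2) hP.pg.to_inf_left
  obtain ⟨h1, hh1, ha1⟩ := ih' (P ⊓ nrm R2) inf_le_left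
    (by rw [← hcR2]; exact card_lt (lt_nrm hP.pg hR2lt)) (g0 * g⁻¹ * l) (by
      rw [← cj_cj, ← cj_cj]
      refine (cj_mono (cj_mono hlS)).trans ?_
      rw [cj_inv_cj]; exact hg0)
  have hl' : g0 * g⁻¹ * l * g * g0⁻¹ ∈ nrm D := by
    rw [mem_nrm, hDd, ← cj_cj, cj_inv_cj, ← cj_cj, ← hR2, ← cj_cj, mem_nrm.1 hl, ← cj_cj, hR2,
      cj_inv_cj]
  obtain ⟨h2, hh2, ha2⟩ := hD D hDP hful (by rw [hcD]; exact ih') _ hl'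
  refine ⟨h1⁻¹ * h2 * h0, mul_mem (mul_mem (inv_mem hh1) hh2) hh0, fun a ha => ?_⟩
  have e0 := ha0 a ⟨hR ha, le_nrm R ha⟩
  have e2 := ha2 (g0 * a * g0⁻¹) (conj_mem_cj ha)
  have e1 := ha1 (g * a * g⁻¹) ⟨hg (conj_mem_cj ha), le_nrm R2 (conj_mem_cj ha)⟩
  have e3 : h1 * (g * a * g⁻¹) * h1⁻¹ = h2 * (h0 * a * h0⁻¹) * h2⁻¹ := by
    rw [e1, e0, e2]; group
  calc _ = h1⁻¹ * (h2 * (h0 * a * h0⁻¹) * h2⁻¹) * h1 := by group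
    _ = _ := by rw [← e3]; group

end OddP

/-! ### Control of fusion by the normalizer of `W(P)` -/

namespace OddP
open Subgroup
open scoped commutatorElement
variable {G : Type} [Group G] {p : ℕ} [Finite G]

/-- If `U` is a `p`-group modulo `C`, a Sylow `p`-subgroup of `U` covers `U / C`. -/
lemma syl_cover [hp : Fact p.Prime] {T U C : Subgroup G} (hT : IsSyl p T U) (hC : U ≤ nrm C)
    (h : ∀ u ∈ U, ∃ k : ℕ, u ^ p ^ k ∈ C) : ∀ u ∈ U, ∃ s ∈ T, s⁻¹ * u ∈ C := by
  intro u hu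
  have hN : (C.subgroupOf U).Normal := by
    refine ⟨fun n hn g => ?_⟩
    rw [mem_subgroupOf] at hn ⊢
    exact (mem_normalizer_iff.1 (hC g.2) _).1 hn
  let π := QuotientGroup.mk' (C.subgroupOf U)
  have hs : Function.Surjective π := QuotientGroup.mk'_surjective _
  have h1 : IsSyl p ((T.subgroupOf U).map π) ⊤ := by
    have := hT.subgroupOf.map π
    rwa [← MonoidHom.range_eq_map, MonoidHom.range_eq_top.2 hs] at this
  have h2 : IsPGroup p (⊤ : Subgroup (U ⧸ C.subgroupOf U)) := by
    rintro ⟨x, -⟩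
    obtain ⟨y, rfl⟩ := hs x
    obtain ⟨k, hk⟩ := h y y.2
    refine ⟨k, Subtype.ext ?_⟩
    change π y ^ p ^ k = 1
    rw [← map_pow]
    exact (QuotientGroup.eq_one_iff _).2 hk
  have h3 := h1.max ⊤ le_rfl h2 le_top
  have h4 : π ⟨u, hu⟩ ∈ (T.subgroupOf U).map π := by rw [← h3]; trivial
  obtain ⟨s, hs, hsu⟩ := h4
  exact ⟨s, hs, (QuotientGroup.eq (s := C.subgroupOf U)).1 hsu⟩

/-- Burnside's transfer theorem for a normal subgroup with central Sylow `p`-subgroup. -/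
lemma pg_of_central_syl [hp : Fact p.Prime] {C S : Subgroup G} (hCn : C.Normal) (hS : IsSyl p S C)
    (hc : ∀ s ∈ S, ∀ c ∈ C, s * c = c * s)
    (hX : ∀ X : Subgroup G, X.Normal → (Nat.card X).Coprime p → X = ⊥) : IsPGroup p C := by
  let P := hS.toSylow
  have hP : normalizer (P : Set C) ≤ centralizer (P : Set C) := by
    intro c _
    rw [mem_centralizer_iff]
    intro s hs
    exact Subtype.ext (hc s hs c c.2)
  let f := MonoidHom.transferSylow P hP
  have hf : ¬ p ∣ Nat.card f.ker := MonoidHom.not_dvd_card_ker_transferSylow P hP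
  have hcop : (Nat.card f.ker).Coprime p := ((Nat.Prime.coprime_iff_not_dvd hp.out).2 hf).symm
  have hker : ∀ c : C, (orderOf c).Coprime p → c ∈ f.ker := by
    intro c hc
    have h1 : orderOf (f c) ∣ orderOf c := orderOf_map_dvd f c
    obtain ⟨k, hk⟩ := P.2 (f c)
    have h2 : orderOf (f c) ∣ p ^ k := orderOf_dvd_of_pow_eq_one hk
    exact orderOf_eq_one_iff.1 (Nat.eq_one_of_dvd_coprimes (hc.pow_right k) h1 h2)
  have hK : f.ker.map C.subtype = ⊥ := by
    refine hX _ ⟨?_⟩ ?_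
    · rintro _ ⟨k, hk, rfl⟩ g
      refine ⟨⟨g * k * g⁻¹, hCn.conj_mem _ k.2 g⟩, hker _ ?_, rfl⟩
      have h1 : orderOf (⟨g * k * g⁻¹, hCn.conj_mem _ k.2 g⟩ : C) = orderOf k := by
        rw [← orderOf_coe, ← orderOf_coe]
        exact orderOf_injective (MulAut.conj g).toMonoidHom (MulAut.conj g).injective k
      rw [h1]
      refine Nat.Coprime.coprime_dvd_left ?_ hcop
      have := orderOf_dvd_natCard (⟨k, hk⟩ : f.ker)
      rwa [orderOf_mk] at this
    · rwa [card_map_of_injective C.subtype_injective]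
  rw [(map_eq_bot_iff_of_injective _ C.subtype_injective)] at hK
  exact P.2.of_injective f ((MonoidHom.ker_eq_bot_iff f).1 hK)

/-- The case of the fusion theorem where no nontrivial normal `p`-subgroup exists. -/
lemma fusion_core_free [hp : Fact p.Prime] {P : Subgroup G} (hP : IsSyl p P ⊤)
    (hF : ∀ L : Subgroup G, L < ⊤ → FF p L)
    (hn : ∀ Q : Subgroup G, IsPGroup p Q → Q.Normal → Q = ⊥) :
    ∀ A ≤ P, Good P (nrm (W P)) A := by
  have hlt : ∀ Q : Subgroup G, IsPGroup p Q → Q ≠ ⊥ → nrm Q < ⊤ := fun Q hQ hne =>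
    lt_top_iff_ne_top.2 fun h => hne (hn Q hQ (nrm_eq_top.1 h))
  refine alperin hP fun D hDP hful hbig l hl => ?_
  by_cases hD : D = ⊥
  · refine ⟨1, one_mem _, fun a ha => ?_⟩
    rw [hD, mem_bot] at ha
    simp [ha]
  have key : ∀ m : ℕ, ∀ S ≤ P, Nat.card P - Nat.card S ≤ m → ∀ E ≤ S, Nat.card E = Nat.card D →
      ∀ n ∈ nrm (W S), cj n E ≤ S →
      ∃ h ∈ nrm (W P), ∀ a ∈ E, h * a * h⁻¹ = n * a * n⁻¹ := by
    intro m
    induction m using Nat.strong_induction_on with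
    | _ m ih =>
    intro S hSP hm E hES hcE n hn hnE
    by_cases hS : S = P
    · subst hS; exact ⟨n, hn, fun _ _ => rfl⟩
    have hSlt : S < P := lt_of_le_of_ne hSP hS
    have hE : E ≠ ⊥ := by
      rintro rfl
      rw [card_bot] at hcE
      exact hD (eq_bot_of_card_eq _ hcE.symm)
    have hSne : S ≠ ⊥ := fun h => hE (le_bot_iff.1 (h ▸ hES))
    have hSp : IsPGroup p S := hP.pg.to_le hSP
    have hL2 : nrm (W S) < ⊤ := hlt _ (hSp.to_le (W_le S)) (W_ne_bot hSp hSne)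
    have hN : S < P ⊓ nrm S := lt_nrm hP.pg hSlt
    obtain ⟨S2, hNS2, hS2⟩ := exists_syl (p := p) (Q := P ⊓ nrm S) (L := nrm (W S))
      (inf_le_right.trans (nrm_le_nrm_W S)) hP.pg.to_inf_left
    have hSS2 : S ≤ S2 := hN.le.trans hNS2
    obtain ⟨n', -, hn', hact⟩ := (hF _ hL2).rel hS2 (hES.trans hSS2) hn (hnE.trans hSS2)
    obtain ⟨v, -, hv⟩ := hP.conj le_top hS2.pg
    have hcard : Nat.card S < Nat.card (cj v S2) := by
      rw [card_cj]; exact (card_lt hN).trans_le (card_mono hNS2)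
    have := card_mono hv
    have hcj : cj n' E = cj n E := cj_congr hact
    obtain ⟨m3, hm3, ha3⟩ := ih (Nat.card P - Nat.card (cj v S2)) (by omega) (cj v S2) hv le_rfl
      (cj v E) (cj_mono (hES.trans hSS2)) (by rw [card_cj, hcE]) (v * n' * v⁻¹) (by
        rw [W_cj, nrm_cj]; exact conj_mem_cj hn') (by
        rw [← cj_cj, ← cj_cj, cj_inv_cj, hcj]
        exact cj_mono (hnE.trans hSS2))
    obtain ⟨q, hq, haq⟩ := hbig (P ⊓ nrm S) inf_le_left
      (by rw [← hcE]; exact (card_mono hES).trans_lt (card_lt hN)) v ((cj_mono hNS2).trans hv)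
    refine ⟨q⁻¹ * m3 * q, mul_mem (mul_mem (inv_mem hq) hm3) hq, fun a ha => ?_⟩
    have e1 := haq a (hN.le (hES ha))
    have e2 := haq (n * a * n⁻¹) (hN.le (hnE (conj_mem_cj ha)))
    have e3 := ha3 (v * a * v⁻¹) (conj_mem_cj ha)
    have e4 := hact a ha
    have e5 : m3 * (q * a * q⁻¹) * m3⁻¹ = q * (n * a * n⁻¹) * q⁻¹ := by
      rw [e1, e3, e2, ← e4]; group
    calc _ = q⁻¹ * (m3 * (q * a * q⁻¹) * m3⁻¹) * q := by group
      _ = _ := by rw [e5]; group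
  have hDp : IsPGroup p D := hP.pg.to_le hDP
  have hDS : D ≤ P ⊓ nrm D := le_inf hDP (le_nrm D)
  have hlD : cj l D ≤ P ⊓ nrm D := by rw [mem_nrm.1 hl]; exact hDS
  obtain ⟨n, -, hn, hact⟩ := (hF _ (hlt D hDp hD)).rel hful hDS hl hlD
  obtain ⟨h, hh, ha⟩ := key _ (P ⊓ nrm D) inf_le_left le_rfl D hDS rfl n hn
    (by rw [cj_congr hact]; exact hlD)
  exact ⟨h, hh, fun a haD => (ha a haD).trans (hact a haD)⟩

/-- Fusion control when `G = P C(Q)` for a normal `p`-subgroup `Q`. -/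
lemma fusion_central_type [hp : Fact p.Prime] {P Q : Subgroup G} (hP : IsSyl p P ⊤) [hQn : Q.Normal]
    (hQp : IsPGroup p Q) (hQP : Q ≤ P)
    (hC : P ⊔ centralizer (Q : Set G) = ⊤) (hF : FF p (G ⧸ Q)) :
    ∀ A ≤ P, Good P ((nrm (W (P.map (QuotientGroup.mk' Q)))).comap (QuotientGroup.mk' Q)) A := by
  set π := QuotientGroup.mk' Q with hπd
  have hs : Function.Surjective π := QuotientGroup.mk'_surjective Q
  have hπ : ∀ a b : G, π a = π b ↔ a⁻¹ * b ∈ Q := fun a b => QuotientGroup.eq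
  have hPπ : IsSyl p (P.map π) ⊤ := by
    have := hP.map π
    rwa [← MonoidHom.range_eq_map, MonoidHom.range_eq_top.2 hs] at this
  set H := (nrm (W (P.map π))).comap π with hH
  have hPH : P ≤ H := by
    rw [hH, ← map_le_iff_le_comap]
    exact (le_nrm _).trans (nrm_le_nrm_W _)
  set C := centralizer (Q : Set G) with hCd
  have hCn : C.Normal := inferInstance
  refine alperin hP fun D hDP hful hbig l hl => ?_
  by_cases hQD : Q ≤ D
  swap
  · have hlt : D < D ⊔ Q := left_lt_sup.2 hQD
    have hDQ : D ⊔ Q ≤ P := sup_le hDP hQP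
    obtain ⟨h, hh, ha⟩ := hbig (D ⊔ Q) hDQ (card_lt hlt) l
      (by rw [cj_sup, mem_nrm.1 hl, cj_normal]; exact hDQ)
    exact ⟨h, hh, fun a haD => ha a (hlt.le haD)⟩
  obtain ⟨hb, hhb, hact⟩ := hF _ hPπ (D.map π) (map_mono hDP) (π l) (by
    rw [cj_le_iff]
    rintro _ ⟨a, ha, rfl⟩
    refine ⟨l * a * l⁻¹, hDP ?_, by simp⟩
    exact (mem_normalizer_iff.1 hl a).1 ha)
  obtain ⟨h, rfl⟩ := hs hb
  set U := (centralizer (D.map π : Set (G ⧸ Q))).comap π with hU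
  have memU : ∀ u, u ∈ U ↔ ∀ d ∈ D, u * d * u⁻¹ * d⁻¹ ∈ Q := by
    intro u
    rw [hU, mem_comap, mem_centralizer_iff]
    have e : ∀ d, u * d * u⁻¹ * d⁻¹ ∈ Q ↔ π d * π u = π u * π d := by
      intro d
      rw [← QuotientGroup.eq_one_iff]
      change π _ = 1 ↔ _
      rw [map_mul, map_mul, map_mul, map_inv, map_inv, mul_inv_eq_one, mul_inv_eq_iff_eq_mul]
      exact eq_comm
    constructor
    · intro H d hd
      exact (e d).2 (H _ ⟨d, hd, rfl⟩)
    · rintro H _ ⟨d, hd, rfl⟩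
      exact (e d).1 (H d hd)
  have hUD : U ≤ nrm D := by
    intro u hu
    apply mem_nrm_of_le
    rw [cj_le_iff]
    intro a ha
    have := D.mul_mem (hQD ((memU u).1 hu a ha)) ha
    simpa using this
  have hDU : nrm D ≤ nrm U := by
    intro x hx
    apply mem_nrm_of_le
    rw [cj_le_iff]
    intro u hu
    rw [memU] at hu ⊢
    intro d hd
    have h1 := hu _ ((mem_normalizer_iff''.1 hx d).1 hd)
    have h2 := hQn.conj_mem _ h1 x
    convert h2 using 1
    group
  have hT : IsSyl p (P ⊓ nrm D ⊓ U) U := hful.inf_normal hUD hDU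
  have hUC : U ≤ nrm (centralizer (D : Set G)) := by
    refine hUD.trans ?_
    intro x hx
    apply mem_nrm_of_le
    rw [cj_le_iff]
    intro c hc
    rw [mem_centralizer_iff] at hc ⊢
    intro d hd
    have h1 := hc _ ((mem_normalizer_iff''.1 hx d).1 hd)
    calc d * (x * c * x⁻¹) = x * ((x⁻¹ * d * x) * c) * x⁻¹ := by group
      _ = x * c * x⁻¹ * d := by rw [h1]; group
  obtain ⟨kP, hkP⟩ := hP.pg.exists_card_eq
  obtain ⟨kQ, hkQ⟩ := hQp.exists_card_eq
  have hpow : ∀ u ∈ U, ∃ k : ℕ, u ^ p ^ k ∈ centralizer (D : Set G) := by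
    intro u hu
    have hv : u ^ p ^ kP ∈ C := by
      have h1 : u ∈ P ⊔ C := by rw [hC]; trivial
      rw [← SetLike.mem_coe, coe_mul_of_left_le_normalizer_right _ _
        (le_top.trans (nrm_eq_top.2 hCn).ge)] at h1
      obtain ⟨x, hx, c, hc, rfl⟩ := h1
      rw [← QuotientGroup.eq_one_iff, QuotientGroup.mk_pow, QuotientGroup.mk_mul,
        (QuotientGroup.eq_one_iff c).2 hc, mul_one, ← QuotientGroup.mk_pow,
        QuotientGroup.eq_one_iff, ← hkP]
      have : (⟨x, hx⟩ : P) ^ Nat.card P = 1 := pow_card_eq_one'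
      have : x ^ Nat.card P = 1 := congrArg Subtype.val this
      rw [this]; exact one_mem _
    refine ⟨kP + kQ, ?_⟩
    rw [pow_add, pow_mul]
    set v := u ^ p ^ kP with hvd
    have hvU : v ∈ U := pow_mem hu _
    rw [mem_centralizer_iff]
    intro d hd
    set q := v * d * v⁻¹ * d⁻¹ with hq
    have hqQ : q ∈ Q := (memU v).1 hvU d hd
    have hcomm : v * q = q * v := ((mem_centralizer_iff.1 hv) q hqQ).symm
    have e1 : v * d = q * d * v := by rw [hq]; group
    have e2 : ∀ i : ℕ, v ^ i * d = q ^ i * d * v ^ i := by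
      intro i
      induction i with
      | zero => simp
      | succ i ih =>
        have e3 : v * q ^ i = q ^ i * v := (show Commute v q from hcomm).pow_right i
        calc v ^ (i+1) * d = v * (v ^ i * d) := by rw [pow_succ']; group
          _ = (v * q ^ i) * d * v ^ i := by rw [ih]; group
          _ = q ^ i * (v * d) * v ^ i := by rw [e3]; group
          _ = _ := by rw [e1, pow_succ q, pow_succ' v]; group
    have e4 : q ^ p ^ kQ = 1 := by
      have : (⟨q, hqQ⟩ : Q) ^ Nat.card Q = 1 := pow_card_eq_one'
      rw [← hkQ]
      exact congrArg Subtype.val this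
    rw [e2, e4, one_mul]
  have huU : h⁻¹ * l ∈ U := by
    rw [memU]
    intro d hd
    have h1 := hact _ ⟨d, hd, rfl⟩
    rw [← map_mul, ← map_inv, ← map_mul, ← map_mul, ← map_inv, ← map_mul, hπ] at h1
    have h2 := hQn.conj_mem _ h1 (d * h⁻¹ )
    have h3 := hQn.conj_mem _ h1 (d * h⁻¹ * (h * d * h⁻¹))
    have h4 := hQn.conj_mem _ h1 h⁻¹
    have h5 := hQn.conj_mem _ h4 d
    convert h5 using 1
    group
  obtain ⟨s, hs, hsu⟩ := syl_cover hT hUC hpow _ huU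
  refine ⟨h * s, mul_mem hhb (hPH hs.1.1), fun a ha => ?_⟩
  have h1 := mem_centralizer_iff.1 hsu a ha
  have h2 : s * a * s⁻¹ = (h⁻¹ * l) * a * (h⁻¹ * l)⁻¹ := by
    calc s * a * s⁻¹ = s * (a * (s⁻¹ * (h⁻¹ * l))) * (h⁻¹ * l)⁻¹ := by group
      _ = _ := by rw [h1]; group
  calc _ = h * (s * a * s⁻¹) * h⁻¹ := by group
    _ = _ := by rw [h2]; group

/-- A finite group has a largest normal `p`-subgroup. -/
lemma exists_Op (p : ℕ) (G : Type) [Group G] [Finite G] : ∃ Q : Subgroup G, Q.Normal ∧ IsPGroup p Q ∧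
    ∀ N : Subgroup G, N.Normal → IsPGroup p N → N ≤ Q := by
  obtain ⟨Q, ⟨hQn, hQp⟩, hmax⟩ := (Set.toFinite {Q : Subgroup G | Q.Normal ∧ IsPGroup p Q}).exists_maximal
    ⟨⊥, (inferInstance : (⊥ : Subgroup G).Normal), IsPGroup.of_bot⟩
  refine ⟨Q, hQn, hQp, fun N hN hNp => ?_⟩
  have h1 : IsPGroup p (Q ⊔ N : Subgroup G) := hQp.to_sup_of_normal_right hNp
  exact le_sup_right.trans (hmax (y := Q ⊔ N) ⟨inferInstance, h1⟩ le_sup_left)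

/-- In a finite group of odd order, for an odd prime `p`, the normalizer of `W(P)` controls fusion
in the Sylow `p`-subgroup `P`. -/
theorem fusion_theorem [hp : Fact p.Prime] (hpo : Odd p) : ∀ (n : ℕ) (G : Type) [Group G] [Finite G],
    Nat.card G = n → Odd (Nat.card G) → FF p G := by
  intro n
  induction n using Nat.strong_induction_on with
  | _ n ih =>
  intro G _ _ hn hG
  have hsub : ∀ L : Subgroup G, L < ⊤ → FF p L := by
    intro L hL
    have h1 : Nat.card L ∣ Nat.card G := card_subgroup_dvd_card L
    have h2 : Nat.card L < Nat.card G := by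
      have := card_lt hL; rwa [card_top] at this
    exact ih _ (hn ▸ h2) L rfl (hG.of_dvd_nat h1)
  have hquo : ∀ N : Subgroup G, N ≠ ⊥ → ∀ [N.Normal], FF p (G ⧸ N) := by
    intro N hN _
    have h1 : Nat.card (G ⧸ N) ∣ Nat.card G := card_quotient_dvd_card N
    have h0 := card_eq_card_quotient_mul_card_subgroup N
    have h2 : Nat.card (G ⧸ N) < Nat.card G := by
      have h3 : 1 < Nat.card N := (one_lt_card_iff_ne_bot N).2 hN
      have h4 : 0 < Nat.card (G ⧸ N) := Nat.card_pos
      nlinarith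
    exact ih _ (hn ▸ h2) _ rfl (hG.of_dvd_nat h1)
  intro P hP
  by_cases hX : ∃ X : Subgroup G, X.Normal ∧ (Nat.card X).Coprime p ∧ X ≠ ⊥
  · obtain ⟨X, hXn, hXc, hXb⟩ := hX
    exact lift_p' hXc hP (hquo X hXb)
  have hX' : ∀ X : Subgroup G, X.Normal → (Nat.card X).Coprime p → X = ⊥ := fun X h1 h2 =>
    by_contra fun h3 => hX ⟨X, h1, h2, h3⟩
  obtain ⟨Q, hQn, hQp, hQmax⟩ := exists_Op p G
  have hnt : ∀ N : Subgroup G, nrm N = ⊤ ↔ N.Normal := fun N => nrm_eq_top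
  have hQP : Q ≤ P := hP.le_of_nrm le_top hQp ((hnt Q).2 hQn).ge
  by_cases hQb : Q = ⊥
  · exact fusion_core_free hP hsub fun N h1 h2 => le_bot_iff.1 (hQb ▸ hQmax N h2 h1)
  set C := centralizer (Q : Set G) with hC
  have hCn : C.Normal := inferInstance
  have hQCn : (Q ⊔ C).Normal := inferInstance
  set R := P ⊓ (Q ⊔ C) with hR
  have hRs : IsSyl p R (Q ⊔ C) := hP.inf_normal le_top ((hnt _).2 hQCn).ge
  have hQR : Q ≤ R := le_inf hQP le_sup_left
  by_cases hRQ : R ≤ Q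
  · have hCp : IsPGroup p C := by
      refine pg_of_central_syl hCn (S := P ⊓ C) (hP.inf_normal le_top ((hnt _).2 hCn).ge)
        (fun s hs c hc => ?_) hX'
      exact mem_centralizer_iff.1 hc s (hRQ ⟨hs.1, mem_sup_right hs.2⟩)
    have hWn := W_normal hpo hG hP hQn hQp hQmax (hQmax C hCn hCp)
    intro A hA g hg
    exact ⟨g, by rw [(hnt _).2 hWn]; trivial, fun _ _ => rfl⟩
  have hRn : nrm R < ⊤ := lt_top_iff_ne_top.2 fun h =>
    hRQ (hQmax R ((hnt R).1 h) hRs.pg)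
  have hPR : P ≤ nrm R := by
    refine le_trans ?_ nrm_inf_le
    exact le_inf (le_nrm P) (by rw [(hnt _).2 hQCn]; exact le_top)
  intro A hA g hg
  by_cases hPC : P ⊔ C = ⊤
  · have hgood := fusion_central_type hP hQp hQP hPC (hquo Q hQb)
    set π := QuotientGroup.mk' Q with hπ
    set H := (nrm (W (P.map π))).comap π with hH
    have hs : Function.Surjective π := QuotientGroup.mk'_surjective Q
    have hPH : P ≤ H := by
      rw [hH, ← map_le_iff_le_comap]
      exact (le_nrm _).trans (nrm_le_nrm_W _)
    have hHlt : H < ⊤ := by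
      refine lt_top_iff_ne_top.2 fun h => ?_
      have hN : (W (P.map π)).Normal := by
        refine nrm_eq_top.1 (eq_top_iff.2 fun x _ => ?_)
        obtain ⟨y, rfl⟩ := hs x
        have : y ∈ H := by rw [h]; trivial
        exact this
      have hPπ : IsPGroup p (P.map π) := hP.pg.map π
      have hker : π.ker = Q := QuotientGroup.ker_mk' Q
      have h1 := hQmax ((W (P.map π)).comap π) inferInstance
        ((hPπ.to_le (W_le _)).comap_of_ker_isPGroup π (by rw [hker]; exact hQp))
      refine W_ne_bot hPπ ?_ (eq_bot_iff.2 fun x hx => ?_)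
      · intro h2
        rw [Subgroup.map_eq_bot_iff, hker] at h2
        exact hRQ (inf_le_left.trans h2)
      · obtain ⟨y, rfl⟩ := hs x
        exact (QuotientGroup.eq_one_iff y).2 (h1 hx)
    obtain ⟨h, hh, ha⟩ := hgood A hA g hg
    obtain ⟨n, -, hn, hna⟩ := (hsub H hHlt).rel (hP.of_le hPH le_top) hA hh
      (by rw [cj_congr ha]; exact hg)
    exact ⟨n, hn, fun a haA => (hna a haA).trans (ha a haA)⟩
  have hPClt : P ⊔ C < ⊤ := lt_top_iff_ne_top.2 hPC
  obtain ⟨n0, hn0, hn0g⟩ := frattini_arg hRs (L := ⊤) (((hnt _).2 hQCn).ge) (mem_top g)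
  have hn0' := inv_mem hn0
  rw [sup_comm, ← SetLike.mem_coe, coe_mul_of_left_le_normalizer_right _ _
    (le_top.trans ((hnt _).2 hQn).ge)] at hn0'
  obtain ⟨c, hc, q, hq, hcq⟩ := hn0'
  have hcq : c * q = n0⁻¹ := hcq
  set n := q * (n0 * g) with hnd
  have hnR : n ∈ nrm R := mul_mem (hPR (hQP hq)) hn0g
  have hgcn : g = c * n := by rw [hnd, ← mul_assoc, hcq]; group
  set L := (P ⊔ C) ⊓ nrm R with hL
  have hPL : P ≤ L := le_inf le_sup_left hPR
  have hcPC : c ∈ P ⊔ C := mem_sup_right hc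
  have hnA : cj n A ≤ L := by
    refine le_inf ?_ ?_
    · have e : cj n A = cj c⁻¹ (cj g A) := by rw [cj_cj, hgcn]; congr 1; group
      rw [e, cj_le_iff]
      intro a ha
      exact mul_mem (mul_mem (inv_mem hcPC) (mem_sup_left (hg ha))) (inv_mem (inv_mem hcPC))
    · rw [cj_le_iff]
      intro a ha
      exact mul_mem (mul_mem hnR (hPR (hA ha))) (inv_mem hnR)
  obtain ⟨w, hw, hwA⟩ := (hP.of_le hPL le_top).conj hnA (pg_cj (hP.pg.to_le hA))
  rw [cj_cj] at hwA
  obtain ⟨x, -, hx, hxa⟩ := (hsub _ hRn).rel (hP.of_le hPR le_top) hA (mul_mem hw.2 hnR) hwA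
  obtain ⟨y, -, hy, hya⟩ := (hsub _ hPClt).rel (A := cj (w * n) A) (g := c * w⁻¹)
    (hP.of_le le_sup_left le_top) hwA (mul_mem hcPC (inv_mem hw.1)) (by
      rw [cj_cj]
      have : c * w⁻¹ * (w * n) = g := by rw [hgcn]; group
      rw [this]; exact hg)
  refine ⟨y * x, mul_mem hy hx, fun a ha => ?_⟩
  have e1 := hxa a ha
  have e2 := hya (w * n * a * (w * n)⁻¹) (conj_mem_cj ha)
  calc _ = y * (x * a * x⁻¹) * y⁻¹ := by group
    _ = g * a * g⁻¹ := by rw [e1, e2, hgcn]; group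

end OddP

/-! ### Normal `p`-complements from control of fusion -/

namespace OddP
open Subgroup
open scoped commutatorElement
variable {G : Type} [Group G] {p : ℕ} [Finite G]

/-- The subgroup generated by the elements of order prime to `p`. -/
def Res (p : ℕ) (G : Type) [Group G] : Subgroup G := closure {x : G | (orderOf x).Coprime p}

instance Res_normal : (Res p G).Normal := by
  unfold Res
  apply closure_normal
  intro g x hx
  have : orderOf (g * x * g⁻¹) = orderOf x :=
    orderOf_injective (MulAut.conj g).toMonoidHom (MulAut.conj g).injective x
  simpa only [Set.mem_setOf_eq, this] using hx

lemma pow_mem_Res [hp : Fact p.Prime] (x : G) : ∃ k : ℕ, x ^ p ^ k ∈ Res p G := by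
  obtain ⟨k, m, hm, hk⟩ := Nat.exists_eq_pow_mul_and_not_dvd (orderOf_pos x).ne' p hp.out.ne_one
  refine ⟨k, subset_closure ?_⟩
  have h1 : orderOf (x ^ p ^ k) = m := by
    rw [orderOf_pow' x (pow_ne_zero k hp.out.ne_zero), hk, Nat.gcd_mul_right_left,
      Nat.mul_div_cancel_left _ (pow_pos hp.out.pos k)]
  rw [Set.mem_setOf_eq, h1]
  exact ((Nat.Prime.coprime_iff_not_dvd hp.out).2 hm).symm

lemma Res_index [hp : Fact p.Prime] : ∃ n, (Res p G).index = p ^ n := by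
  have : IsPGroup p (G ⧸ Res p G) := by
    intro x
    obtain ⟨y, rfl⟩ := QuotientGroup.mk_surjective x
    obtain ⟨k, hk⟩ := pow_mem_Res (p := p) y
    exact ⟨k, by rw [← QuotientGroup.mk_pow]; exact (QuotientGroup.eq_one_iff _).2 hk⟩
  exact this.exists_card_eq

/-- `Res p G` has no nontrivial homomorphism to a `p`-group. -/
lemma Res_hom [hp : Fact p.Prime] {B : Type} [Group B] (hB : IsPGroup p B) (f : Res p G →* B) :
    ∀ x, f x = 1 := by
  have : ∀ x (hx : x ∈ Res p G), f ⟨x, hx⟩ = 1 := by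
    intro x hx
    induction hx using closure_induction with
    | mem x hx =>
      obtain ⟨k, hk⟩ := hB (f ⟨x, subset_closure hx⟩)
      have h1 : orderOf (f ⟨x, subset_closure hx⟩) ∣ p ^ k := orderOf_dvd_of_pow_eq_one hk
      have h2 : orderOf (f ⟨x, subset_closure hx⟩) ∣ orderOf x := by
        have := orderOf_map_dvd f ⟨x, subset_closure hx⟩
        exact this.trans (by rw [← orderOf_coe])
      exact orderOf_eq_one_iff.1 (Nat.eq_one_of_dvd_coprimes (Nat.Coprime.pow_right k hx) h2 h1)
    | one => exact map_one f
    | mul x y hx hy h1 h2 =>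
      have := map_mul f ⟨x, hx⟩ ⟨y, hy⟩
      rw [h1, h2, one_mul] at this
      exact this
    | inv x hx h1 =>
      have := map_inv f ⟨x, hx⟩
      rw [h1, inv_one] at this
      exact this
  exact fun x => this x x.2

/-- Frobenius: if a Sylow `p`-subgroup controls its own fusion, there is a normal `p`-complement. -/
theorem frobenius_lemma [hp : Fact p.Prime] {P : Subgroup G} (hP : IsSyl p P ⊤)
    (hc : ∀ x ∈ P, ∀ g, g * x * g⁻¹ ∈ P → ∃ s ∈ P, s * x * s⁻¹ = g * x * g⁻¹) :
    HasNormalPComplement G p := by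
  set K := Res p G with hK
  have hKn : K.Normal := Res_normal
  have hS : IsSyl p (P ⊓ K) K := hP.inf_normal le_top (nrm_eq_top.2 hKn).ge
  let S := hS.toSylow
  have hfoc : S.1 ≤ S.focalSubgroup := by
    rw [← ker_transferFocal_inf_eq_focalSubgroup S]
    refine le_inf (fun x _ => ?_) le_rfl
    exact Res_hom (S.2.to_quotient S.focalSubgroupOf) S.transferFocal x
  have hnil : Group.IsNilpotent P := hP.pg.isNilpotent
  have key : ∀ n : ℕ, P ⊓ K ≤ ((⊤ : Subgroup P).lowerCentralSeries n).map P.subtype := by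
    intro n
    induction n with
    | zero => intro x hx; exact ⟨⟨x, hx.1⟩, by simp, rfl⟩
    | succ n ih =>
      intro x hx
      have hx' : (⟨x, hx.2⟩ : K) ∈ S.focalSubgroup := hfoc hx
      have hle : S.focalSubgroup ≤ (((⊤ : Subgroup P).lowerCentralSeries (n+1)).map P.subtype).comap K.subtype := by
        rw [focalSubgroup_def, closure_le]
        rintro g ⟨hg, y, hy, u, rfl⟩
        have hy' : (y : G) ∈ P ⊓ K := hy
        have hg' : ((⁅y, u⁆ : K) : G) ∈ P ⊓ K := hg
        have e0 : ((⁅y, u⁆ : K) : G) = (y : G) * ((u : G) * y * (u : G)⁻¹)⁻¹ := by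
          simp [commutatorElement_def, mul_assoc]
        have h1 : (u : G) * y * (u : G)⁻¹ ∈ P := by
          rw [e0] at hg'
          have := P.mul_mem (P.inv_mem hg'.1) hy'.1
          simpa using this
        obtain ⟨s, hs, hsy⟩ := hc y hy'.1 u h1
        obtain ⟨z, hz, hzy⟩ := ih hy'
        refine ⟨⁅z, ⟨s, hs⟩⁆, commutator_mem_commutator hz (mem_top _), ?_⟩
        have hzy : (z : G) = y := hzy
        rw [coe_subtype, coe_subtype, e0, ← hsy, ← hzy]
        simp [commutatorElement_def, mul_assoc]
      exact hle hx'
  have hbot : P ⊓ K = ⊥ := by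
    obtain ⟨n, hn⟩ := Subgroup.nilpotent_iff_lowerCentralSeries.1 hnil
    have := key n
    rw [hn, Subgroup.map_bot] at this
    exact le_bot_iff.1 this
  refine ⟨K, hKn, ?_, Res_index⟩
  have := hS.not_dvd
  rw [hbot, relIndex_bot_left] at this
  exact ((Nat.Prime.coprime_iff_not_dvd hp.out).2 this).symm

/-- If `N(W(P))` controls fusion and has a normal `p`-complement, then so has `G`. -/
theorem pnil_of_nrm [hp : Fact p.Prime] (hF : FF p G) {P : Subgroup G} (hP : IsSyl p P ⊤)
    (hH : HasNormalPComplement (nrm (W P)) p) : HasNormalPComplement G p := by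
  refine frobenius_lemma hP fun x hx g hg => ?_
  have hPH : P ≤ nrm (W P) := (le_nrm P).trans (nrm_le_nrm_W P)
  obtain ⟨h, hh, ha⟩ := hF P hP (zpowers x) (by simpa using hx) g (by
    rw [cj_le_iff]
    rintro _ ⟨k, rfl⟩
    have := P.zpow_mem hg k
    rwa [conj_zpow] at this)
  have ha := ha x (mem_zpowers x)
  set H := nrm (W P) with hHd
  obtain ⟨N, hN, hNc, k, hk⟩ := hH
  obtain ⟨s, hs, hsh⟩ := syl_cover (T := P.subgroupOf H) (U := ⊤) (C := N)
    ((hP.of_le hPH le_top).subgroupOf) (nrm_eq_top.2 hN).ge (fun u _ => ⟨k, by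
      rw [← hk]; exact pow_index_mem N u⟩) ⟨h, hh⟩ trivial
  set n : H := s⁻¹ * ⟨h, hh⟩ with hn
  have hs' : (s : G) ∈ P := hs
  have hhn : h = s * n := by simp [hn]
  let X : H := ⟨x, hPH hx⟩
  have h1 : n * X * n⁻¹ * X⁻¹ ∈ N := by
    have := N.mul_mem hsh (hN.conj_mem _ (N.inv_mem hsh) X)
    convert this using 1
    group
  have h2 : n * X * n⁻¹ * X⁻¹ ∈ P.subgroupOf H := by
    rw [mem_subgroupOf]
    have e : ((n * X * n⁻¹ * X⁻¹ : H) : G) = (s : G)⁻¹ * (h * x * h⁻¹) * s * x⁻¹ := by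
      rw [hhn]; simp [X, mul_assoc]
    rw [e, ha]
    exact P.mul_mem (P.mul_mem (P.mul_mem (P.inv_mem hs') hg) hs') (P.inv_mem hx)
  have h3 := eq_one_of_coprime ((hP.of_le hPH le_top).subgroupOf).pg hNc h2 h1
  have h4 : (n : G) * x * (n : G)⁻¹ * x⁻¹ = 1 := congrArg Subtype.val h3
  refine ⟨s, hs', ?_⟩
  rw [← ha, hhn]
  have h5 : (n : G) * x * (n : G)⁻¹ = x := mul_inv_eq_one.1 h4
  calc (s : G) * x * (s : G)⁻¹ = s * (n * x * (n : G)⁻¹) * (s : G)⁻¹ := by rw [h5]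
    _ = _ := by group

end OddP

/-! ### Orthogonality and completeness of irreducible characters -/

namespace OddP
open Subgroup
variable {G : Type} [Group G] [Fintype G]

theorem irr_intro {V : Type} [AddCommGroup V] [Module ℂ V] [FiniteDimensional ℂ V]
    (ρ : Representation ℂ G V)
    (h : ∑ g, ρ.character g * ρ.character g⁻¹ = Nat.card G) : ρ.character ∈ Irr G :=
  ⟨FDRep.of ρ, (FDRep.simple_iff_char_is_norm_one _).2 h, rfl⟩

theorem irr_of_matrix {d : ℕ} (ρ : G →* Matrix (Fin d) (Fin d) ℂ)
    (h : ∑ g, (ρ g).trace * (ρ g⁻¹).trace = Nat.card G) : (fun g => (ρ g).trace) ∈ Irr G := by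
  let σ : Representation ℂ G (Fin d → ℂ) :=
    ((Matrix.toLinAlgEquiv' : Matrix (Fin d) (Fin d) ℂ ≃ₐ[ℂ] _) : _ →* _).comp ρ
  have e : σ.character = fun g => (ρ g).trace := by
    ext g
    exact Matrix.trace_toLin'_eq (ρ g)
  rw [← e]
  apply irr_intro
  rw [e]; exact h

theorem exists_matrix {χ : G → ℂ} (h : χ ∈ Irr G) :
    ∃ d : ℕ, ∃ ρ : G →* Matrix (Fin d) (Fin d) ℂ, ∀ g, χ g = (ρ g).trace := by
  obtain ⟨V, -, rfl⟩ := h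
  let b := Module.finBasis ℂ V
  refine ⟨_, (LinearMap.toMatrixAlgEquiv b).toAlgHom.toRingHom.toMonoidHom.comp V.ρ, fun g => ?_⟩
  exact LinearMap.trace_eq_matrix_trace ℂ b (V.ρ g)

theorem irr_orth [DecidableEq (G → ℂ)] {χ ψ : G → ℂ} (h : χ ∈ Irr G) (h' : ψ ∈ Irr G) :
    ∑ g, χ g * ψ g⁻¹ = if χ = ψ then (Nat.card G : ℂ) else 0 := by
  obtain ⟨V, hV, rfl⟩ := h
  obtain ⟨W, hW, rfl⟩ := h'
  have h0 : (Nat.card G : ℂ) ≠ 0 := by simp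
  letI := invertibleOfNonzero h0
  have hv := (FDRep.simple_iff_char_is_norm_one V).1 hV
  split_ifs with hc
  · rw [← hc]; exact hv
  · have := FDRep.char_orthonormal V W
    rw [if_neg] at this
    · simpa [h0] using this
    · rintro ⟨i⟩
      exact hc (FDRep.char_iso i)

theorem irr_conj {χ : G → ℂ} (h : χ ∈ Irr G) (g x : G) : χ (x * g * x⁻¹) = χ g := by
  obtain ⟨V, hV, rfl⟩ := h
  exact FDRep.char_conj V g x

theorem irr_norm {χ : G → ℂ} (h : χ ∈ Irr G) : ∑ g, χ g * χ g⁻¹ = Nat.card G := by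
  classical
  simpa using irr_orth h h

theorem irr_finite : (Irr G).Finite := by
  classical
  have h0 : (Nat.card G : ℂ) ≠ 0 := by simp
  have : LinearIndependent ℂ (fun χ : Irr G => (χ : G → ℂ)) := by
    rw [linearIndependent_iff']
    intro s c hc ψ hψ
    have h1 : ∑ g, (∑ χ ∈ s, c χ • (χ : G → ℂ)) g * (ψ : G → ℂ) g⁻¹ = 0 := by
      rw [hc]; simp
    simp only [Finset.sum_apply, Pi.smul_apply, smul_eq_mul, Finset.sum_mul] at h1
    rw [Finset.sum_comm] at h1
    simp only [mul_assoc, ← Finset.mul_sum] at h1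
    rw [Finset.sum_congr rfl (fun χ _ => by rw [irr_orth χ.2 ψ.2])] at h1
    simp only [Subtype.coe_inj, mul_ite, mul_zero, Finset.sum_ite_eq', hψ, if_true] at h1
    exact (mul_eq_zero.1 h1).resolve_right h0
  exact Set.finite_coe_iff.1 this.finite

/-- A class function orthogonal to all irreducible characters acts as zero in every irreducible
representation: it acts by a scalar of trace zero. -/
theorem central_zero {f : G → ℂ} (hf : ∀ g x, f (x * g * x⁻¹) = f g)
    (ho : ∀ χ ∈ Irr G, ∑ g, f g * χ g = 0) {V : Type} [AddCommGroup V] [Module ℂ V]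
    [FiniteDimensional ℂ V] (ρ : Representation ℂ G V) [ρ.IsIrreducible] :
    ∑ g, f g • ρ g = 0 := by
  have h0 : (Nat.card G : ℂ) ≠ 0 := by simp
  letI := invertibleOfNonzero h0
  have hn : ρ.character ∈ Irr G := by
    apply irr_intro
    have := Representation.char_orthonormal ρ ρ
    rw [if_pos ⟨Representation.Equiv.refl ρ⟩] at this
    field_simp at this
    simpa using this
  have h1 := ho _ hn
  let T : V →ₗ[ℂ] V := ∑ g, f g • ρ g
  have hT : ∀ x, T ∘ₗ ρ x = ρ x ∘ₗ T := by
    intro x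
    change T * ρ x = ρ x * T
    simp only [T, Finset.mul_sum, Finset.sum_mul, smul_mul_assoc, mul_smul_comm, ← map_mul]
    refine (Fintype.sum_equiv (MulAut.conj x).toEquiv _ _ fun g => ?_).symm
    simp [hf]
  obtain ⟨c, hc⟩ := Representation.IsIrreducible.algebraMap_intertwiningMap_bijective_of_isAlgClosed
    (ρ := ρ) |>.2 (LinearMap.intertwiningMap_of_isIntertwiningMap ρ ρ T (fun g v => LinearMap.congr_fun (hT g) v))
  have hTc : T = c • 1 := by
    ext v
    have := congrArg (fun F : Representation.IntertwiningMap ρ ρ => F v) hc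
    rw [Representation.IntertwiningMap.algebraMap_apply] at this
    exact this.symm
  have h2 : LinearMap.trace ℂ V T = 0 := by
    simp only [T, map_sum, map_smul, smul_eq_mul]
    exact h1
  rw [hTc, map_smul, LinearMap.trace_one, smul_eq_mul] at h2
  rcases mul_eq_zero.1 h2 with h3 | h3
  · change T = 0
    rw [hTc, h3, zero_smul]
  · have : Subsingleton V := Module.finrank_zero_iff.1 (by exact_mod_cast h3)
    exact Subsingleton.elim _ _

theorem simple_zero {f : G → ℂ} (hf : ∀ g x, f (x * g * x⁻¹) = f g)
    (ho : ∀ χ ∈ Irr G, ∑ g, f g * χ g = 0) (M : Type) [AddCommGroup M]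
    [Module (MonoidAlgebra ℂ G) M] [hS : IsSimpleModule (MonoidAlgebra ℂ G) M] (m : M) :
    (∑ g, MonoidAlgebra.single g (f g) : MonoidAlgebra ℂ G) • m = 0 := by
  have hirr := (Representation.isSimpleModule_iff_irreducible_ofModule (k := ℂ) (G := G) M).1 hS
  letI : Module ℂ M := Module.restrictScalars ℂ (MonoidAlgebra ℂ G) M
  haveI : IsScalarTower ℂ (MonoidAlgebra ℂ G) M :=
    IsScalarTower.restrictScalars ℂ (MonoidAlgebra ℂ G) M
  haveI : Module.Finite ℂ M := Module.Finite.trans (MonoidAlgebra ℂ G) _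
  haveI : (Representation.ofModule' (k := ℂ) (G := G) M).IsIrreducible := hirr
  have h1 := central_zero hf ho (Representation.ofModule' (k := ℂ) (G := G) M)
  have h2 := LinearMap.congr_fun h1 m
  rw [Finset.sum_smul]
  simp only [LinearMap.sum_apply, LinearMap.smul_apply, LinearMap.zero_apply] at h2
  rw [← h2]
  refine Finset.sum_congr rfl fun g _ => ?_
  have : MonoidAlgebra.single g (f g) = f g • (MonoidAlgebra.single g 1 : MonoidAlgebra ℂ G) := by
    simp
  rw [this, smul_assoc]
  rfl

/-- The irreducible characters span the class functions: the group algebra is semisimple, so an element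
killing all simple modules is zero. -/
theorem complete {f : G → ℂ} (hf : ∀ g x, f (x * g * x⁻¹) = f g)
    (ho : ∀ χ ∈ Irr G, ∑ g, f g * χ g = 0) : f = 0 := by
  classical
  have h0 : (Nat.card G : ℂ) ≠ 0 := by simp
  letI := invertibleOfNonzero h0
  haveI : NeZero (Nat.card G : ℂ) := ⟨h0⟩
  let z : MonoidAlgebra ℂ G := ∑ g, MonoidAlgebra.single g (f g)
  have hz1 : ∀ x, MonoidAlgebra.single x 1 * z = z * MonoidAlgebra.single x 1 := by
    intro x
    simp only [z, Finset.mul_sum, Finset.sum_mul, MonoidAlgebra.single_mul_single, one_mul, mul_one]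
    refine Fintype.sum_equiv (MulAut.conj x).toEquiv _ _ fun g => ?_
    simp [hf]
  have hzc : ∀ a, a * z = z * a := by
    intro a
    induction a using MonoidAlgebra.induction_linear with
    | zero => simp
    | add a b ha hb => rw [add_mul, mul_add, ha, hb]
    | single x c =>
      have : MonoidAlgebra.single x c = c • (MonoidAlgebra.single x 1 : MonoidAlgebra ℂ G) := by simp
      rw [this, smul_mul_assoc, hz1, mul_smul_comm]
  let Z : MonoidAlgebra ℂ G →ₗ[MonoidAlgebra ℂ G] MonoidAlgebra ℂ G :=
    LinearMap.toSpanSingleton _ _ z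
  have hS : sSup {m : Submodule (MonoidAlgebra ℂ G) (MonoidAlgebra ℂ G) | IsSimpleModule (MonoidAlgebra ℂ G) m} ≤ LinearMap.ker Z := by
    apply sSup_le
    intro S hS
    intro s hs
    haveI : IsSimpleModule (MonoidAlgebra ℂ G) S := hS
    have h4 := simple_zero hf ho S ⟨s, hs⟩
    have h5 : z * s = 0 := congrArg Subtype.val h4
    change s * z = 0
    rw [hzc, h5]
  rw [IsSemisimpleModule.sSup_simples_eq_top] at hS
  have : Z 1 = 0 := hS (Submodule.mem_top)
  have hz : z = 0 := by simpa [Z] using this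
  ext g
  have := congrArg (fun a : MonoidAlgebra ℂ G => a.coeff g) hz
  simpa [z, Finsupp.single_apply] using this

/-- The second orthogonality relation. -/
theorem second_orth [DecidableEq G] (a b : G) :
    ∑ᶠ χ ∈ Irr G, χ a⁻¹ * χ b = ((Finset.univ.filter fun x => x * a * x⁻¹ = b).card : ℂ) := by
  classical
  rw [← sub_eq_zero, finsum_mem_eq_finite_toFinset_sum _ irr_finite]
  let f : G → ℂ := fun b => ∑ χ ∈ irr_finite.toFinset, χ a⁻¹ * χ b - 
    ((Finset.univ.filter fun x => x * a * x⁻¹ = b).card : ℂ)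
  suffices f = 0 from congrFun this b
  have hfc : ∀ g x, f (x * g * x⁻¹) = f g := by
    intro g x
    simp only [f]
    congr 1
    · refine Finset.sum_congr rfl fun χ hχ => ?_
      rw [irr_conj (irr_finite.mem_toFinset.1 hχ)]
    · congr 1
      refine Finset.card_equiv (Equiv.mulLeft x⁻¹) fun y => ?_
      simp only [Finset.mem_filter, Finset.mem_univ, true_and, Equiv.coe_mulLeft, mul_inv_rev, inv_inv]
      constructor
      · intro h
        have : y * a * y⁻¹ = x * g * x⁻¹ := h
        calc x⁻¹ * y * a * (y⁻¹ * x) = x⁻¹ * (y * a * y⁻¹) * x := by group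
          _ = g := by rw [this]; group
      · intro h
        rw [← h]; group
  have hdual : ∀ ψ : G → ℂ, ∑ g, f g⁻¹ * ψ g = ∑ g, f g * ψ g⁻¹ := fun ψ =>
    Fintype.sum_equiv (Equiv.inv G) _ _ (fun g => by simp)
  have key : (fun g => f g⁻¹) = 0 := by
    apply complete
    · intro g x
      have := hfc g⁻¹ x
      rw [← this]; congr 1; group
    · intro ψ hψ
      rw [hdual]
      simp only [f, sub_mul, Finset.sum_sub_distrib, Finset.sum_mul]
      rw [Finset.sum_comm]
      simp only [mul_assoc (_ : ℂ), ← Finset.mul_sum]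
      rw [Finset.sum_congr rfl (fun χ hχ => by rw [irr_orth (irr_finite.mem_toFinset.1 hχ) hψ])]
      simp only [mul_ite, mul_zero, Finset.sum_ite_eq', irr_finite.mem_toFinset, hψ, if_true]
      have : ∀ g : G, ((Finset.univ.filter fun x => x * a * x⁻¹ = g).card : ℂ) * ψ g⁻¹ =
          ∑ x, if x * a * x⁻¹ = g then ψ a⁻¹ else 0 := by
        intro g
        rw [← Finset.sum_filter, Finset.sum_const, nsmul_eq_mul]
        by_cases he : (Finset.univ.filter fun x => x * a * x⁻¹ = g).card = 0
        · rw [he]; simp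
        · obtain ⟨x, hx⟩ := Finset.card_pos.1 (Nat.pos_of_ne_zero he)
          have hx := (Finset.mem_filter.1 hx).2
          rw [← hx, ← irr_conj hψ a⁻¹ x]
          congr 2; group
      rw [Finset.sum_congr rfl (fun g _ => this g), Finset.sum_comm]
      simp [mul_comm]
  ext g
  have := congrFun key g⁻¹
  simpa using this
end OddP

/-! ### Galois action on roots of unity and traces of powers -/

namespace OddP
open Subgroup Polynomial

/-- Two embeddings of a countable field in `ℂ` differ by an endomorphism of `ℂ`. -/
theorem exists_ext {K : Type} [Field K] [Countable K] (i j : K →+* ℂ) :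
    ∃ σ : ℂ →+* ℂ, ∀ x, σ (i x) = j x := by
  have hcard : Cardinal.mk K ≤ Cardinal.aleph0 := Cardinal.mk_le_aleph0
  have hC : Cardinal.aleph0 < Cardinal.mk ℂ := by
    rw [Cardinal.mk_complex]; exact Cardinal.aleph0_lt_continuum
  have main : ∀ (L M : Type) [Field L] [Field M] [Algebra K L] [Algebra K M] [IsAlgClosed L]
      [IsAlgClosed M], Cardinal.aleph0 < Cardinal.mk L → Cardinal.mk L = Cardinal.mk M →
      ∃ σ : L →+* M, ∀ x, σ (algebraMap K L x) = algebraMap K M x := by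
    intro L M _ _ _ _ _ _ hL hLM
    obtain ⟨s, hs⟩ := exists_isTranscendenceBasis K L
    obtain ⟨t, ht⟩ := exists_isTranscendenceBasis K M
    have h1 := IsAlgClosed.cardinal_eq_cardinal_transcendence_basis_of_aleph0_lt' _ hs hcard hL
    have h2 := IsAlgClosed.cardinal_eq_cardinal_transcendence_basis_of_aleph0_lt' _ ht hcard (hLM ▸ hL)
    obtain ⟨e⟩ := Cardinal.eq.1 (h1.symm.trans (hLM.trans h2))
    letI := IsAlgClosed.isAlgClosure_of_transcendence_basis _ hs
    letI := IsAlgClosed.isAlgClosure_of_transcendence_basis _ ht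
    let E := (hs.1.aevalEquiv.symm.trans (MvPolynomial.renameEquiv K e)).trans ht.1.aevalEquiv
    refine ⟨(IsAlgClosure.equivOfEquiv L M E.toRingEquiv).toRingHom, fun x => ?_⟩
    have := IsAlgClosure.equivOfEquiv_algebraMap L M E.toRingEquiv (algebraMap K _ x)
    rw [← IsScalarTower.algebraMap_apply] at this
    change IsAlgClosure.equivOfEquiv L M E.toRingEquiv (algebraMap K L x) = _
    rw [this]
    have h3 : E.toRingEquiv (algebraMap K _ x) = algebraMap K _ x := E.commutes x
    rw [h3, ← IsScalarTower.algebraMap_apply]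
  exact @main ℂ ℂ _ _ i.toAlgebra j.toAlgebra _ _ hC rfl

theorem exists_sigma {N : ℕ} {ζ : ℂ} (hζ : IsPrimitiveRoot ζ N) (hN : 0 < N) {s : ℕ}
    (hs : s.Coprime N) : ∃ σ : ℂ →+* ℂ, σ ζ = ζ ^ s := by
  haveI : Fact (Irreducible (cyclotomic N ℚ)) := ⟨cyclotomic.irreducible_rat hN⟩
  haveI : Countable ℚ[X] := by
    rw [← Cardinal.mk_le_aleph0_iff]
    exact Polynomial.cardinalMk_le_max.trans (by simp)
  haveI : Countable (AdjoinRoot (cyclotomic N ℚ)) :=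
    (AdjoinRoot.mk_surjective (g := cyclotomic N ℚ)).countable
  haveI : NeZero (N : ℂ) := ⟨by exact_mod_cast hN.ne'⟩
  have h1 : ∀ z : ℂ, IsPrimitiveRoot z N → (cyclotomic N ℚ).eval₂ (algebraMap ℚ ℂ) z = 0 := by
    intro z hz
    have := (isRoot_cyclotomic_iff (n := N) (R := ℂ) (μ := z)).2 hz
    rw [← map_cyclotomic N (algebraMap ℚ ℂ), IsRoot, eval_map] at this
    exact this
  obtain ⟨σ, hσ⟩ := exists_ext (AdjoinRoot.lift (algebraMap ℚ ℂ) ζ (h1 ζ hζ))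
    (AdjoinRoot.lift (algebraMap ℚ ℂ) (ζ ^ s) (h1 _ (hζ.pow_of_coprime s hs)))
  refine ⟨σ, ?_⟩
  simpa using hσ (AdjoinRoot.root _)

theorem trace_idem {d : ℕ} (E : Matrix (Fin d) (Fin d) ℂ) (hE : E * E = E) :
    ∃ m : ℕ, E.trace = m := by
  have h : IsIdempotentElem (Matrix.toLin' E) := by
    rw [IsIdempotentElem, Module.End.mul_eq_comp, ← Matrix.toLin'_mul, hE]
  have h1 := LinearMap.IsIdempotentElem.isProj_range _ h
  refine ⟨Module.finrank ℂ (LinearMap.range (Matrix.toLin' E)), ?_⟩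
  rw [← Matrix.trace_toLin'_eq, h1.trace]

/-- The traces of the powers of a matrix of finite order, through the multiplicities `m i` of the
eigenvalues `ζ ^ i`. -/
theorem trace_pow {d N : ℕ} (hN : 0 < N) {ζ : ℂ} (hζ : IsPrimitiveRoot ζ N)
    (A : Matrix (Fin d) (Fin d) ℂ) (hA : A ^ N = 1) :
    ∃ m : ℕ → ℕ, ∀ j, (A ^ j).trace = ∑ i ∈ Finset.range N, (m i : ℂ) * ζ ^ (i * j) := by
  have hz : ζ ≠ 0 := hζ.ne_zero hN.ne'
  have hN0 : (N : ℂ) ≠ 0 := by exact_mod_cast hN.ne'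
  have h1 : ∀ i : ℕ, ∃ m : ℕ, (m : ℂ) = (N : ℂ)⁻¹ * ∑ k ∈ Finset.range N, (ζ⁻¹ ^ i) ^ k * (A ^ k).trace := by
    intro i
    let B := ζ⁻¹ ^ i • A
    have hB : B ^ N = 1 := by
      simp only [B, _root_.smul_pow, hA]
      rw [← pow_mul, mul_comm, pow_mul, inv_pow, hζ.pow_eq_one]; simp
    let S := ∑ k ∈ Finset.range N, B ^ k
    have hBS : B * S = S := by
      have h2 : B * S = ∑ k ∈ Finset.range N, B ^ (k + 1) := by
        simp only [S, Finset.mul_sum, pow_succ']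
      have h3 := Finset.sum_range_succ' (fun k => B ^ k) N
      rw [Finset.sum_range_succ, hB, pow_zero] at h3
      rw [h2]; exact (add_right_cancel h3).symm
    have hBk : ∀ k, B ^ k * S = S := by
      intro k
      induction k with
      | zero => simp
      | succ k ih => rw [pow_succ, mul_assoc, hBS, ih]
    have hSS : S * S = (N : ℂ) • S := by
      conv_lhs => rw [show S = ∑ k ∈ Finset.range N, B ^ k from rfl, Finset.sum_mul]
      rw [Finset.sum_congr rfl fun k _ => hBk k]
      simp [Nat.cast_smul_eq_nsmul]
    obtain ⟨m, hm⟩ := trace_idem ((N : ℂ)⁻¹ • S) (by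
      rw [smul_mul_smul_comm, hSS, smul_smul]; congr 1; field_simp)
    refine ⟨m, ?_⟩
    rw [← hm, Matrix.trace_smul, smul_eq_mul, Matrix.trace_sum]
    simp [B, _root_.smul_pow]
  choose m hm using h1
  have key : ∀ j < N, (A ^ j).trace = ∑ i ∈ Finset.range N, (m i : ℂ) * ζ ^ (i * j) := by
    intro j hj
    simp only [hm, mul_assoc, Finset.sum_mul, ← Finset.mul_sum]
    rw [Finset.sum_comm]
    have h4 : ∀ k ∈ Finset.range N, ∑ i ∈ Finset.range N, (ζ⁻¹ ^ i) ^ k * ((A ^ k).trace * ζ ^ (i * j)) =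
        if k = j then N * (A ^ k).trace else 0 := by
      intro k hk
      have h5 : ∀ i, (ζ⁻¹ ^ i) ^ k * ((A ^ k).trace * ζ ^ (i * j)) = (A ^ k).trace * (ζ⁻¹ ^ k * ζ ^ j) ^ i := by
        intro i
        rw [mul_pow, ← pow_mul, ← pow_mul, ← pow_mul, mul_comm i k, mul_comm i j]; ring
      simp only [h5, ← Finset.mul_sum]
      split_ifs with hkj
      · rw [hkj, ← mul_pow, inv_mul_cancel₀ hz]; simp [mul_comm]
      · have h6 : ζ⁻¹ ^ k * ζ ^ j ≠ 1 := by
          intro h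
          rw [inv_pow, inv_mul_eq_one₀ (pow_ne_zero _ hz)] at h
          exact hkj (hζ.pow_inj (Finset.mem_range.1 hk) hj h)
        have h7 := mul_geom_sum (ζ⁻¹ ^ k * ζ ^ j) N
        rw [mul_pow, ← pow_mul, ← pow_mul, mul_comm k, mul_comm j, pow_mul, pow_mul, inv_pow ζ N,
          hζ.pow_eq_one] at h7
        simp only [inv_one, one_pow, mul_one, sub_self] at h7
        rw [(mul_eq_zero.1 h7).resolve_left (sub_ne_zero.2 h6), mul_zero]
    rw [Finset.sum_congr rfl h4]
    simp [hj, hN0]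
  refine ⟨m, fun j => ?_⟩
  have h8 : A ^ j = A ^ (j % N) := by
    conv_lhs => rw [← Nat.div_add_mod j N, pow_add, pow_mul, hA, one_pow, one_mul]
  have h9 : ∀ i, ζ ^ (i * j) = ζ ^ (i * (j % N)) := by
    intro i
    conv_lhs => rw [← Nat.div_add_mod j N, mul_add, pow_add, mul_left_comm, pow_mul, hζ.pow_eq_one, one_pow, one_mul]
  rw [h8, key _ (Nat.mod_lt _ hN)]
  simp [← h9]
end OddP

/-! ### Power maps, integrality and odd degrees -/

namespace OddP
open Subgroup
variable {G : Type} [Group G] [Fintype G]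

theorem char_pow {N : ℕ} (hN : Nat.card G ∣ N) (hN0 : 0 < N) {ζ : ℂ} (hζ : IsPrimitiveRoot ζ N)
    {χ : G → ℂ} (h : χ ∈ Irr G) (g : G) :
    ∃ m : ℕ → ℕ, ∀ j, χ (g ^ j) = ∑ i ∈ Finset.range N, (m i : ℂ) * ζ ^ (i * j) := by
  obtain ⟨d, ρ, hρ⟩ := exists_matrix h
  obtain ⟨m, hm⟩ := trace_pow hN0 hζ (ρ g) (by
    rw [← map_pow, orderOf_dvd_iff_pow_eq_one.1 ((orderOf_dvd_natCard g).trans hN), map_one])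
  exact ⟨m, fun j => by rw [hρ, map_pow, hm]⟩

theorem irr_sigma (σ : ℂ →+* ℂ) {χ : G → ℂ} (h : χ ∈ Irr G) : (fun g => σ (χ g)) ∈ Irr G := by
  obtain ⟨d, ρ, hρ⟩ := exists_matrix h
  have := irr_norm h
  simp only [hρ] at this ⊢
  have e : ∀ g, σ (ρ g).trace = ((σ.mapMatrix.toMonoidHom.comp ρ) g).trace := by
    intro g
    simp [Matrix.trace, Matrix.diag]
  simp only [e]
  apply irr_of_matrix
  simp only [← e, ← map_mul, ← map_sum]
  rw [this]; simp

/-- Galois conjugation of a character is composition with a power map. -/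
theorem sigma_char {N : ℕ} (hN : Nat.card G ∣ N) (hN0 : 0 < N) {ζ : ℂ} (hζ : IsPrimitiveRoot ζ N)
    {χ : G → ℂ} (h : χ ∈ Irr G) (σ : ℂ →+* ℂ) {s : ℕ} (hσ : σ ζ = ζ ^ s) (g : G) :
    σ (χ g) = χ (g ^ s) := by
  obtain ⟨m, hm⟩ := char_pow hN hN0 hζ h g
  rw [hm s]
  have := hm 1
  rw [pow_one] at this
  rw [this]
  simp [hσ, pow_mul, pow_right_comm]

theorem irr_pow {s : ℕ} (hs : s.Coprime (Nat.card G)) {χ : G → ℂ} (h : χ ∈ Irr G) :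
    (fun g => χ (g ^ s)) ∈ Irr G := by
  have h0 : 0 < Nat.card G := Nat.card_pos
  have hζ := Complex.isPrimitiveRoot_exp _ h0.ne'
  obtain ⟨σ, hσ⟩ := exists_sigma hζ h0 hs
  have := irr_sigma σ h
  simpa only [sigma_char dvd_rfl h0 hζ h σ hσ] using this

theorem irr_integral {χ : G → ℂ} (h : χ ∈ Irr G) (g : G) : IsIntegral ℤ (χ g) := by
  have h0 : 0 < Nat.card G := Nat.card_pos
  have hζ := Complex.isPrimitiveRoot_exp _ h0.ne'
  obtain ⟨m, hm⟩ := char_pow dvd_rfl h0 hζ h g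
  rw [← pow_one g, hm]
  refine IsIntegral.sum _ fun i _ => ?_
  refine IsIntegral.mul ?_ ((hζ.isIntegral h0).pow _)
  exact_mod_cast isIntegral_algebraMap (R := ℤ) (A := ℂ) (x := (m i : ℤ))

theorem irr_deg {χ : G → ℂ} (h : χ ∈ Irr G) : ∃ d : ℕ, χ 1 = d ∧ 0 < d := by
  obtain ⟨d, ρ, hρ⟩ := exists_matrix h
  refine ⟨d, by rw [hρ, map_one]; simp, Nat.pos_of_ne_zero ?_⟩
  rintro rfl
  have := irr_norm h
  simp only [hρ, Matrix.trace_fin_zero, mul_zero, Finset.sum_const_zero] at this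
  exact (Nat.cast_ne_zero.2 (Nat.card_pos (α := G)).ne') this.symm

/-- An odd integer is not divisible by `2` in the ring of algebraic integers. -/
theorem not_odd_two_mul {n : ℕ} (hn : Odd n) {α : ℂ} (hα : IsIntegral ℤ α) : (n : ℂ) ≠ 2 * α := by
  intro h
  have h1 : α = algebraMap ℚ ℂ (n / 2) := by
    simp only [eq_ratCast, Rat.cast_div, Rat.cast_natCast, Rat.cast_ofNat]
    rw [h]; ring
  rw [h1] at hα
  have h2 : IsIntegral ℤ ((n : ℚ) / 2) := (isIntegral_algebraMap_iff (algebraMap ℚ ℂ).injective).1 hα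
  obtain ⟨z, hz⟩ := IsIntegrallyClosed.isIntegral_iff.1 h2
  have h3 : (n : ℚ) = ((2 * z : ℤ) : ℚ) := by
    push_cast
    rw [show ((z : ℤ) : ℚ) = n / 2 from hz]; ring
  have h4 : (n : ℤ) = 2 * z := by exact_mod_cast h3
  obtain ⟨k, hk⟩ := hn
  omega

theorem two_mul_sum {F : G → ℂ} (hInt : ∀ g, IsIntegral ℤ (F g)) (e : G → G)
    (he : ∀ g, e (e g) = g) (hF : ∀ g, F (e g) = F g) (h0 : ∀ g, e g = g → F g = 0) :
    ∃ α, IsIntegral ℤ α ∧ ∑ g, F g = 2 * α := by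
  classical
  let O := integralClosure ℤ ℂ
  let F' : G → O := fun g => ⟨F g, hInt g⟩
  have h1 : Ideal.Quotient.mk (Ideal.span {(2 : O)}) (∑ g, F' g) = 0 := by
    rw [map_sum]
    refine Finset.sum_involution (fun g _ => e g) ?_ ?_ (by simp) (by simp [he])
    · intro g _
      have : F' (e g) = F' g := Subtype.ext (hF g)
      rw [this, ← map_add, Ideal.Quotient.eq_zero_iff_mem, Ideal.mem_span_singleton]
      exact ⟨F' g, (two_mul _).symm⟩
    · intro g _ hg hge
      apply hg
      rw [show F' g = 0 from Subtype.ext (h0 g hge), map_zero]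
  rw [Ideal.Quotient.eq_zero_iff_mem, Ideal.mem_span_singleton] at h1
  obtain ⟨α, hα⟩ := h1
  refine ⟨α, α.2, ?_⟩
  have := congrArg Subtype.val hα
  have h2 : ((2 : O) : ℂ) = 2 := rfl
  simpa [F', h2] using this

/-- In a group of odd order, two irreducible characters invariant under an involutory power map
`g ↦ g ^ τ` agree as soon as they agree on its fixed points: otherwise pairing `g` with `g ^ τ` shows that the odd number
`|G| = ∑ χ(g) (χ(g⁻¹) - ψ(g⁻¹))` is twice an algebraic integer. -/
theorem irr_mod_two (hG : Odd (Nat.card G)) {τ : ℕ} (hτ : ∀ g : G, (g ^ τ) ^ τ = g)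
    {χ ψ : G → ℂ} (hχ : χ ∈ Irr G) (hψ : ψ ∈ Irr G) (h1 : ∀ g, χ (g ^ τ) = χ g)
    (h2 : ∀ g, ψ (g ^ τ) = ψ g) (h3 : ∀ g, g ^ τ = g → χ g = ψ g) : χ = ψ := by
  classical
  by_contra hne
  have h4 : ∑ g, χ g * (χ g⁻¹ - ψ g⁻¹) = Nat.card G := by
    simp only [mul_sub, Finset.sum_sub_distrib]
    rw [irr_orth hχ hχ, irr_orth hχ hψ, if_neg hne]; simp
  obtain ⟨α, hα, hs⟩ := two_mul_sum (F := fun g => χ g * (χ g⁻¹ - ψ g⁻¹))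
    (fun g => (irr_integral hχ _).mul ((irr_integral hχ _).sub (irr_integral hψ _)))
    (fun g => g ^ τ) hτ (fun g => by simp only [← inv_pow, h1, h2]) (fun g hg => by
      rw [h3 g⁻¹ (by rw [inv_pow, hg])]; simp)
  exact not_odd_two_mul hG hα (h4.symm.trans hs)

/-- The irreducible characters of a group of odd order have odd degree: pair `g` with `g⁻¹` in
`∑ χ(g) χ(g⁻¹) = |G|`. -/
theorem irr_deg_odd (hG : Odd (Nat.card G)) {χ : G → ℂ} (hχ : χ ∈ Irr G) {d : ℕ} (hd : χ 1 = d) :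
    Odd d := by
  classical
  by_contra hne
  obtain ⟨k, hk⟩ := Nat.not_odd_iff_even.1 hne
  obtain ⟨α, hα, hs⟩ := two_mul_sum (F := fun g => if g = 1 then 0 else χ g * χ g⁻¹)
    (fun g => by
      split_ifs
      · exact isIntegral_zero
      · exact (irr_integral hχ _).mul (irr_integral hχ _)) (fun g => g⁻¹) (by simp)
    (fun g => by simp [mul_comm]) (fun g hg => by
      have : g = 1 := by
        by_contra h
        have h2 : orderOf g ∣ 2 := by
          rw [orderOf_dvd_iff_pow_eq_one, pow_two]
          exact inv_eq_iff_mul_eq_one.1 hg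
        rcases (Nat.dvd_prime Nat.prime_two).1 h2 with h3 | h3
        · exact h (orderOf_eq_one_iff.1 h3)
        · have := orderOf_dvd_natCard g
          rw [h3] at this
          exact (Nat.not_even_iff_odd.2 hG) (even_iff_two_dvd.2 this)
      simp [this])
  have h1 : ∑ g, χ g * χ g⁻¹ = χ 1 * χ 1 + ∑ g, (if g = 1 then 0 else χ g * χ g⁻¹) := by
    rw [← Finset.add_sum_erase _ _ (Finset.mem_univ (1 : G)), 
      ← Finset.add_sum_erase (f := fun g => if g = 1 then 0 else χ g * χ g⁻¹) _ (Finset.mem_univ (1 : G))]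
    simp only [if_true, zero_add, inv_one]
    congr 1
    exact Finset.sum_congr rfl fun g hg => by rw [if_neg (Finset.ne_of_mem_erase hg)]
  rw [irr_norm hχ, hs, hd, hk] at h1
  refine not_odd_two_mul hG (α := (k * (k + k) : ℕ) + α) ?_ (by rw [h1]; push_cast; ring)
  refine IsIntegral.add ?_ hα
  exact_mod_cast isIntegral_algebraMap (R := ℤ) (A := ℂ) (x := ((k * (k + k) : ℕ) : ℤ))
end OddP

/-! ### Counting the characters fixed by a power map -/

namespace OddP
open Subgroup
variable {G : Type} [Group G] [Fintype G]

/-- Irreducible characters fixed by the power map `g ↦ g ^ t`. -/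
def IrrT (G : Type) [Group G] (t : ℕ) : Set (G → ℂ) := {χ ∈ Irr G | ∀ g, χ (g ^ t) = χ g}

/-- Conjugacy classes of `G` stable under `g ↦ g ^ t`. -/
def ClT (G : Type) [Group G] (t : ℕ) : Set (ConjClasses G) :=
  {c | ∃ g, ConjClasses.mk g = c ∧ IsConj g (g ^ t)}

theorem IrrT_finite (t : ℕ) : (IrrT G t).Finite := irr_finite.subset fun _ h => h.1

theorem fiber_sum [DecidableEq G] [DecidableEq (ConjClasses G)] (t : ℕ) (c : ConjClasses G)
    [Decidable (c ∈ ClT G t)] :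
    ∑ g ∈ Finset.univ.filter (fun g : G => ConjClasses.mk g = c),
      (Finset.univ.filter fun x : G => x * g * x⁻¹ = g ^ t).card =
      if c ∈ ClT G t then Fintype.card G else 0 := by
  split_ifs with hc
  · obtain ⟨g0, rfl, hw⟩ := hc
    obtain ⟨w, hw⟩ := isConj_iff.1 hw
    have h1 : ∀ g ∈ Finset.univ.filter (fun g : G => ConjClasses.mk g = ConjClasses.mk g0),
        (Finset.univ.filter fun x : G => x * g * x⁻¹ = g ^ t).card =
        (Finset.univ.filter fun x : G => x * g0 * x⁻¹ = g).card := by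
      intro g hg
      have hg := (Finset.mem_filter.1 hg).2
      obtain ⟨y, hy⟩ := isConj_iff.1 (ConjClasses.mk_eq_mk_iff_isConj.1 hg).symm
      refine Finset.card_equiv ((Equiv.mulLeft (y * w⁻¹ * y⁻¹)).trans (Equiv.mulRight y)) fun x => ?_
      simp only [Finset.mem_filter, Finset.mem_univ, true_and, Equiv.trans_apply,
        Equiv.coe_mulLeft, Equiv.coe_mulRight]
      have hgt : g ^ t = y * w * g0 * w⁻¹ * y⁻¹ := by
        rw [← hy, conj_pow, ← hw]; group
      rw [hgt, ← hy]
      have e1 : y * w⁻¹ * y⁻¹ * x * y * g0 * (y * w⁻¹ * y⁻¹ * x * y)⁻¹ =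
        (y * w⁻¹ * y⁻¹) * (x * (y * g0 * y⁻¹) * x⁻¹) * (y * w⁻¹ * y⁻¹)⁻¹ := by group
      rw [e1]
      constructor
      · intro h; rw [h]; group
      · intro h
        calc x * (y * g0 * y⁻¹) * x⁻¹ = (y * w⁻¹ * y⁻¹)⁻¹ * ((y * w⁻¹ * y⁻¹) * (x * (y * g0 * y⁻¹) * x⁻¹) * (y * w⁻¹ * y⁻¹)⁻¹) * (y * w⁻¹ * y⁻¹) := by group
          _ = _ := by rw [h]; group
    rw [Finset.sum_congr rfl h1, ← Finset.card_univ]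
    symm
    apply Finset.card_eq_sum_card_fiberwise
    intro x _
    simp only [Finset.coe_filter, Finset.mem_univ, true_and, Set.mem_setOf_eq]
    exact (ConjClasses.mk_eq_mk_iff_isConj.2 (isConj_iff.2 ⟨x, rfl⟩)).symm
  · refine Finset.sum_eq_zero fun g hg => ?_
    rw [Finset.card_eq_zero, Finset.filter_eq_empty_iff]
    intro x _ hx
    exact hc ⟨g, (Finset.mem_filter.1 hg).2, isConj_iff.2 ⟨x, hx⟩⟩

/-- The Brauer permutation lemma for the power map `g ↦ g ^ t`. -/
theorem count_T {t : ℕ} (ht : t.Coprime (Nat.card G)) :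
    (IrrT G t).ncard = (ClT G t).ncard := by
  classical
  have h0 : (Nat.card G : ℂ) ≠ 0 := by simp
  have h1 : ∀ χ ∈ irr_finite.toFinset, ∑ g : G, χ (g ^ t) * χ g⁻¹ =
      if χ ∈ IrrT G t then (Nat.card G : ℂ) else 0 := by
    intro χ hχ
    have hχ := irr_finite.mem_toFinset.1 hχ
    rw [irr_orth (irr_pow ht hχ) hχ]
    congr 1
    simp only [IrrT, Set.mem_setOf_eq, hχ, true_and, eq_iff_iff]
    exact funext_iff
  have h2 : ((IrrT G t).ncard : ℂ) * Nat.card G = ∑ g : G, ∑ᶠ χ ∈ Irr G, χ g⁻¹ * χ (g ^ t) := by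
    simp only [finsum_mem_eq_finite_toFinset_sum _ irr_finite]
    rw [Finset.sum_comm]
    simp only [mul_comm (_ : ℂ) (_ : ℂ)] at h1 ⊢
    rw [Finset.sum_congr rfl h1, ← Finset.sum_filter, Finset.sum_const, nsmul_eq_mul, mul_comm]
    congr 2
    rw [Set.ncard_eq_toFinset_card _ (IrrT_finite t)]
    congr 1
    ext χ
    simp only [Finset.mem_filter, Set.Finite.mem_toFinset]
    exact ⟨fun h => ⟨h.1, h⟩, fun h => h.2⟩
  have h3 : ∑ g : G, (Finset.univ.filter fun x : G => x * g * x⁻¹ = g ^ t).card =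
      (ClT G t).ncard * Nat.card G := by
    rw [← Finset.sum_fiberwise Finset.univ (fun g : G => ConjClasses.mk g)]
    have h5 : ∀ c ∈ (Finset.univ : Finset (ConjClasses G)),
        ∑ g ∈ Finset.univ.filter (fun g : G => ConjClasses.mk g = c),
        (Finset.univ.filter fun x : G => x * g * x⁻¹ = g ^ t).card =
        if c ∈ ClT G t then Fintype.card G else 0 := fun c _ => by
      convert fiber_sum t c
    rw [Finset.sum_congr rfl h5]
    rw [← Finset.sum_filter, Finset.sum_const, smul_eq_mul, Nat.card_eq_fintype_card]
    congr 1
    rw [Set.ncard_eq_toFinset_card' ]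
    congr 1
    ext c; simp
  simp only [second_orth] at h2
  rw [← Nat.cast_sum, h3] at h2
  have h4 : (IrrT G t).ncard * Nat.card G = (ClT G t).ncard * Nat.card G := by exact_mod_cast h2
  exact Nat.eq_of_mul_eq_mul_right Nat.card_pos h4
end OddP

/-! ### The exponent detecting `ℚ(ζ_p)` -/

namespace OddP
open Subgroup
variable {G : Type} [Group G] 

/-- The exponent `t` acts as `1 + p` on `p`-elements and as inversion on `p'`-elements of any group
whose order divides `p ^ a * m`. -/
structure Par (p a m t : ℕ) : Prop where
  hp : p.Prime
  ho : Odd p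
  ha : 0 < a
  hm : Odd m
  hc : p.Coprime m
  h1 : t ≡ 1 + p [MOD p ^ a]
  h2 : m ∣ t + 1

variable {p a m t : ℕ}

theorem pow_congr_mod {M : Type*} [Monoid M] {g : M} {n i j : ℕ} (h : g ^ n = 1) (hij : i ≡ j [MOD n]) :
    g ^ i = g ^ j := by
  rw [pow_eq_pow_mod i h, pow_eq_pow_mod j h, hij]

theorem Par.pos (P : Par p a m t) : 0 < p ^ a * m :=
  Nat.mul_pos (pow_pos P.hp.pos _) P.hm.pos

theorem Par.coprime (P : Par p a m t) : t.Coprime (p ^ a * m) := by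
  apply Nat.Coprime.mul_right
  · apply Nat.Coprime.pow_right
    rw [Nat.coprime_comm, P.hp.coprime_iff_not_dvd]
    intro h
    have h3 : t ≡ 1 + p [MOD p] := P.h1.of_dvd (dvd_pow_self p P.ha.ne')
    have h4 : 1 + p ≡ 0 [MOD p] := h3.symm.trans ((Nat.modEq_zero_iff_dvd).2 h)
    have h5 : p ∣ 1 + p := (Nat.modEq_zero_iff_dvd).1 h4
    have := (Nat.dvd_add_left dvd_rfl).1 h5
    exact P.hp.one_lt.ne' (Nat.dvd_one.1 this)
  · rw [Nat.coprime_iff_gcd_eq_one]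
    have h3 : t.gcd m ∣ t + 1 := (Nat.gcd_dvd_right t m).trans P.h2
    exact Nat.dvd_one.1 ((Nat.dvd_add_right (Nat.gcd_dvd_left t m)).1 h3)

theorem pow_of_pel (P : Par p a m t) {g : G} (h : g ^ p ^ a = 1) : g ^ t = g ^ (1 + p) :=
  pow_congr_mod h P.h1

/-- A group of odd order has no nontrivial real element. -/
theorem eq_one_of_conj_inv [Finite G] (hG : Odd (Nat.card G)) {h : G} (hc : IsConj h h⁻¹) : h = 1 := by
  obtain ⟨x, hx⟩ := isConj_iff.1 hc
  have h2 : x ^ 2 * h = h * x ^ 2 := by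
    have e : x ^ 2 * h = x * (x * h * x⁻¹) * x⁻¹ * x ^ 2 := by rw [pow_two]; group
    have e2 : x * h⁻¹ * x⁻¹ = h := by
      calc x * h⁻¹ * x⁻¹ = (x * h * x⁻¹)⁻¹ := by group
        _ = h := by rw [hx, inv_inv]
    rw [e, hx, e2]
  have hxo : Odd (orderOf x) := Odd.of_dvd_nat hG (orderOf_dvd_natCard x)
  obtain ⟨k, hk⟩ := hxo
  have h3 : x = (x ^ 2) ^ (k + 1) := by
    rw [← pow_mul, show 2 * (k + 1) = orderOf x + 1 by omega, pow_succ, pow_orderOf_eq_one, one_mul]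
  have h4 : Commute x h := by
    rw [h3]; exact (show Commute (x ^ 2) h from h2).pow_left _
  have h5 : h = h⁻¹ := by rw [← hx, h4.eq]; group
  have h6 : orderOf h ∣ 2 := by
    rw [orderOf_dvd_iff_pow_eq_one, pow_two]
    nth_rewrite 1 [h5]; group
  rcases (Nat.dvd_prime Nat.prime_two).1 h6 with h7 | h7
  · exact orderOf_eq_one_iff.1 h7
  · have := orderOf_dvd_natCard h
    rw [h7] at this
    exact absurd (even_iff_two_dvd.2 this) (Nat.not_even_iff_odd.2 hG)

theorem Par.odd (P : Par p a m t) : Odd (p ^ a * m) := (P.ho.pow).mul P.hm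

theorem pow_N [Finite G] (hN : Nat.card G ∣ p ^ a * m) (g : G) : g ^ (p ^ a * m) = 1 :=
  orderOf_dvd_iff_pow_eq_one.1 ((orderOf_dvd_natCard g).trans hN)

/-- Only `p`-elements are conjugate to their `t`-th power, as `t` inverts the `p'`-part of an element. -/
theorem pel_of_conj [Finite G] (P : Par p a m t) (hN : Nat.card G ∣ p ^ a * m) {g : G}
    (hg : IsConj g (g ^ t)) : g ^ p ^ a = 1 := by
  have hG : Odd (Nat.card G) := Odd.of_dvd_nat P.odd hN
  obtain ⟨e, he1, he2⟩ := Nat.chineseRemainder (P.hc.pow_left a) 0 1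
  have h1 : (g ^ e) ^ m = 1 := by
    rw [← pow_mul, ← orderOf_dvd_iff_pow_eq_one]
    exact ((orderOf_dvd_natCard g).trans hN).trans
      (Nat.mul_dvd_mul ((Nat.modEq_zero_iff_dvd).1 he1) dvd_rfl)
  have h2 : (g ^ e) ^ t = (g ^ e)⁻¹ := by
    rw [eq_inv_iff_mul_eq_one, ← pow_succ]
    obtain ⟨c, hc⟩ := P.h2
    rw [hc, pow_mul, h1, one_pow]
  have h3 : g ^ e = 1 := by
    apply eq_one_of_conj_inv hG
    rw [← h2, ← pow_mul, mul_comm, pow_mul]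
    exact hg.pow e
  have h4 : (orderOf g).Coprime m := by
    apply Nat.Coprime.coprime_dvd_left (orderOf_dvd_of_pow_eq_one h3)
    have := he2.gcd_eq
    rw [Nat.coprime_iff_gcd_eq_one, this]; simp
  rw [← orderOf_dvd_iff_pow_eq_one]
  exact h4.dvd_of_dvd_mul_right ((orderOf_dvd_natCard g).trans hN)

theorem root_of_fixed (P : Par p a m t) {z : ℂ} (hz : z ^ (p ^ a * m) = 1) (h : z ^ t = z) : z ^ p = 1 := by
  have hz0 : z ≠ 0 := by
    rintro rfl
    rw [zero_pow P.pos.ne'] at hz; exact zero_ne_one hz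
  have ho : orderOf z ∣ p ^ a * m := orderOf_dvd_of_pow_eq_one hz
  have hne : t ≠ 0 := by
    rintro rfl
    have := P.coprime
    rw [Nat.coprime_zero_left] at this
    have h1 := P.h1
    have := P.hp.one_lt
    have h3 : 1 < p ^ a := Nat.one_lt_pow P.ha.ne' this
    have : p ^ a ∣ 1 := ⟨m, by omega⟩
    have := Nat.dvd_one.1 this
    omega
  have h1 : orderOf z ∣ t - 1 := by
    apply orderOf_dvd_of_pow_eq_one
    have : z ^ (t - 1) * z = z := by rw [← pow_succ, Nat.sub_add_cancel (by omega), h]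
    exact (mul_eq_right₀ hz0).1 this
  have h4 : (orderOf z).Coprime m := by
    have h5 : (orderOf z).gcd m ∣ 2 := by
      have := (Nat.gcd_dvd_right (orderOf z) m).trans P.h2
      have h6 := (Nat.gcd_dvd_left (orderOf z) m).trans h1
      have h7 : t + 1 = (t - 1) + 2 := by omega
      rw [h7] at this
      exact (Nat.dvd_add_right h6).1 this
    rcases (Nat.dvd_prime Nat.prime_two).1 h5 with h8 | h8
    · exact h8
    · have : 2 ∣ m := h8 ▸ Nat.gcd_dvd_right (orderOf z) m
      exact absurd (even_iff_two_dvd.2 this) (Nat.not_even_iff_odd.2 P.hm)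
  have h9 := h4.dvd_of_dvd_mul_right ho
  rw [← orderOf_dvd_iff_pow_eq_one]
  have h10 : 1 + p ≡ 1 [MOD orderOf z] := 
    (P.h1.of_dvd h9).symm.trans ((Nat.modEq_iff_dvd' (by omega)).2 h1).symm
  have h11 := (Nat.modEq_iff_dvd' (by omega)).1 h10.symm
  simpa using h11

/-- `1 + p` generates the group of units congruent to `1` modulo `p`. -/
theorem exists_pow_one_add (hp : p.Prime) (ho : Odd p) (n : ℕ) {s : ℕ} (hs : s ≡ 1 [MOD p]) :
    ∃ j, s ≡ (1 + p) ^ j [MOD p ^ (n + 1)] := by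
  classical
  haveI := Fact.mk hp
  have hp2 : p ≠ 2 := by rintro rfl; exact absurd ho (by decide)
  haveI : NeZero (p ^ (n + 1)) := ⟨(pow_pos hp.pos _).ne'⟩
  haveI := ZMod.isCyclic_units_of_prime_pow p hp hp2 (n + 1)
  have hcop : ∀ k, k ≡ 1 [MOD p] → k.Coprime (p ^ (n + 1)) := by
    intro k hk
    apply Nat.Coprime.pow_right
    rw [Nat.coprime_iff_gcd_eq_one, hk.gcd_eq]; simp
  have hpow : ∀ k (hk : k ≡ 1 [MOD p]), (ZMod.unitOfCoprime k (hcop k hk)) ^ p ^ n = 1 := by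
    intro k hk
    ext
    simp only [Units.val_pow_eq_pow_val, ZMod.coe_unitOfCoprime, Units.val_one]
    have h1 : (p : ℤ) ∣ (k : ℤ) - 1 := (Nat.modEq_iff_dvd.1 hk.symm)
    have h2 := dvd_sub_pow_of_dvd_sub h1 n
    have h3 : ((((k : ℤ) ^ p ^ n - 1 ^ p ^ n : ℤ)) : ZMod (p ^ (n + 1))) = 0 := by
      rw [ZMod.intCast_zmod_eq_zero_iff_dvd]; exact_mod_cast h2
    push_cast at h3
    rw [one_pow, sub_eq_zero] at h3
    exact h3
  have h1p : 1 + p ≡ 1 [MOD p] := by simp [Nat.ModEq]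
  let u := ZMod.unitOfCoprime (1 + p) (hcop _ h1p)
  have hu : orderOf u = p ^ n := by
    rw [← orderOf_units, ← ZMod.orderOf_one_add_prime hp hp2 n]
    congr 1; simp [u]
  have hsub : (Finset.univ.filter fun x => x ∈ zpowers u) ⊆
      (Finset.univ.filter fun x : (ZMod (p ^ (n + 1)))ˣ => x ^ p ^ n = 1) := by
    intro x hx
    simp only [Finset.mem_filter, Finset.mem_univ, true_and] at hx ⊢
    obtain ⟨k, rfl⟩ := mem_zpowers_iff.1 hx
    rw [← zpow_natCast, ← zpow_mul, mul_comm, zpow_mul, zpow_natCast, hpow _ h1p, one_zpow]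
  have heq := Finset.eq_of_subset_of_card_le hsub (by
    refine (IsCyclic.card_pow_eq_one_le (pow_pos hp.pos n)).trans ?_
    rw [← hu, ← Nat.card_zpowers, ← Fintype.card_subtype, Nat.card_eq_fintype_card])
  have hmem : ZMod.unitOfCoprime s (hcop s hs) ∈ zpowers u := by
    have : ZMod.unitOfCoprime s (hcop s hs) ∈ (Finset.univ.filter fun x => x ∈ zpowers u) := by
      rw [heq]; simp [hpow s hs]
    simpa using this
  obtain ⟨j, hj⟩ := (mem_powers_iff_mem_zpowers.2 hmem)
  refine ⟨j, ?_⟩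
  rw [← ZMod.natCast_eq_natCast_iff]
  have := congrArg Units.val hj
  simp only [u, Units.val_pow_eq_pow_val, ZMod.coe_unitOfCoprime] at this
  push_cast at this ⊢
  exact this.symm
end OddP

/-! ### `ℚ(ζ_p)`-valued characters as fixed points of a power map -/

namespace OddP
open Subgroup
variable {G : Type} [Group G] [Fintype G] {p a m t : ℕ}

theorem root_mem_Qzeta {z : ℂ} (h : z ^ p = 1) : z ∈ Qzeta p := Subfield.subset_closure h

/-- A `ℚ(ζ_p)`-valued irreducible character is fixed by every power map `g ↦ g ^ s` with
`s ≡ 1` modulo `p`: such a map is realised by a field automorphism fixing `ζ_p`. -/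
theorem irrK_pow {N s : ℕ} (hN : Nat.card G ∣ N) (hN0 : 0 < N) (hpN : p ∣ N) (hs : s.Coprime N)
    (hs1 : s ≡ 1 [MOD p]) {χ : G → ℂ} (h : χ ∈ IrrK G (Qzeta p)) (g : G) : χ (g ^ s) = χ g := by
  haveI : NeZero N := ⟨hN0.ne'⟩
  have hζ := Complex.isPrimitiveRoot_exp N hN0.ne'
  obtain ⟨σ, hσ⟩ := exists_sigma hζ hN0 hs
  rw [← sigma_char hN hN0 hζ h.1 σ hσ]
  have hle : Qzeta p ≤ RingHom.eqLocusField σ (RingHom.id ℂ) := by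
    apply Subfield.closure_le.2
    intro z hz
    have hz : z ^ p = 1 := hz
    have hzN : z ^ N = 1 := by
      obtain ⟨c, rfl⟩ := hpN
      rw [pow_mul, hz, one_pow]
    obtain ⟨i, -, rfl⟩ := hζ.eq_pow_of_pow_eq_one hzN
    change σ (_ ^ i) = _ ^ i
    rw [map_pow, hσ, ← pow_mul, mul_comm s i, pow_mul, pow_congr_mod hz hs1, pow_one]
  exact hle (h.2 g)

theorem Par.t_mod (P : Par p a m t) : t ≡ 1 [MOD p] := by
  have h3 : t ≡ 1 + p [MOD p] := P.h1.of_dvd (dvd_pow_self p P.ha.ne')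
  exact h3.trans (by simp [Nat.ModEq])

theorem Par.p_dvd (P : Par p a m t) : p ∣ p ^ a * m := (dvd_pow_self p P.ha.ne').mul_right _

theorem irrK_sub (P : Par p a m t) (hN : Nat.card G ∣ p ^ a * m) : IrrK G (Qzeta p) ⊆ IrrT G t :=
  fun _ h => ⟨h.1, irrK_pow hN P.pos P.p_dvd P.coprime P.t_mod h⟩

theorem irrT_iter {χ : G → ℂ} (h : χ ∈ IrrT G t) (j : ℕ) (g : G) : χ (g ^ t ^ j) = χ g := by
  induction j with
  | zero => simp
  | succ j ih => rw [pow_succ, pow_mul, h.2, ih]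

theorem modEq_pow_p (hp : p.Prime) : ∀ a s : ℕ, s ≡ 1 [MOD p] → s ^ p ^ a ≡ 1 [MOD p ^ (a + 1)] := by
  intro n k hk
  have h1 : (p : ℤ) ∣ (k : ℤ) - 1 := (Nat.modEq_iff_dvd.1 hk.symm)
  have h2 := dvd_sub_pow_of_dvd_sub h1 n
  apply Nat.ModEq.symm
  rw [Nat.modEq_iff_dvd]
  push_cast
  simpa using h2

/-- A character fixed by the `t`-th power map is fixed by every power map whose exponent is congruent to
`1` modulo `p`. -/
theorem irrT_pow (P : Par p a m t) (hN : Nat.card G ∣ p ^ a * m) {χ : G → ℂ} (h : χ ∈ IrrT G t)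
    {s : ℕ} (hs : s.Coprime (p ^ a * m)) (hs1 : s ≡ 1 [MOD p]) (g : G) : χ (g ^ s) = χ g := by
  have hG : Odd (Nat.card G) := Odd.of_dvd_nat P.odd hN
  have ht1 : t ^ p ^ a ≡ 1 [MOD p ^ a] :=
    (modEq_pow_p P.hp a t P.t_mod).of_dvd (pow_dvd_pow _ (by omega))
  have ht2 : m ∣ t ^ p ^ a + 1 := by
    have := (P.ho.pow (n := a)).nat_add_dvd_pow_add_pow t 1
    rw [one_pow] at this
    exact P.h2.trans this
  have hN' : ∀ g : G, ∀ i j, i ≡ j [MOD p ^ a * m] → g ^ i = g ^ j := fun g i j hij =>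
    pow_congr_mod (pow_N hN g) hij
  have hcop : (p ^ a).Coprime m := P.hc.pow_left a
  have key : χ = fun g => χ (g ^ s) := by
    apply irr_mod_two hG (τ := t ^ p ^ a) _ h.1 (irr_pow (hs.coprime_dvd_right hN) h.1)
    · intro g; exact irrT_iter h _ g
    · intro g
      change χ ((g ^ _) ^ s) = _
      rw [← pow_mul, mul_comm, pow_mul, irrT_iter h]
    · intro g hg
      have hpel : g ^ p ^ a = 1 := by
        rw [← orderOf_dvd_iff_pow_eq_one]
        have ho := (orderOf_dvd_natCard g).trans hN
        refine Nat.Coprime.dvd_of_dvd_mul_right ?_ ho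
        have e1 : t ^ p ^ a ≡ 1 [MOD orderOf g] := by
          rw [← pow_eq_pow_iff_modEq, hg, pow_one]
        have e2 : (orderOf g).gcd m ∣ 2 := by
          have e3 : t ^ p ^ a + 1 ≡ 1 + 1 [MOD (orderOf g).gcd m] :=
            (e1.of_dvd (Nat.gcd_dvd_left _ _)).add_right 1
          have e4 := (Nat.modEq_zero_iff_dvd).2 ((Nat.gcd_dvd_right (orderOf g) m).trans ht2)
          exact (Nat.modEq_zero_iff_dvd).1 (e3.symm.trans e4)
        rcases (Nat.dvd_prime Nat.prime_two).1 e2 with h8 | h8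
        · exact h8
        · have : 2 ∣ m := h8 ▸ Nat.gcd_dvd_right (orderOf g) m
          exact absurd (even_iff_two_dvd.2 this) (Nat.not_even_iff_odd.2 P.hm)
      obtain ⟨j, hj⟩ := exists_pow_one_add P.hp P.ho a hs1
      have hj' : s ≡ t ^ j [MOD p ^ a] :=
        (hj.of_dvd (pow_dvd_pow _ (by omega))).trans (P.h1.symm.pow j)
      change _ = χ (g ^ s)
      rw [pow_congr_mod hpel hj', irrT_iter h]
    · intro g
      rw [← pow_mul]
      conv_rhs => rw [← pow_one g]
      apply hN'
      rw [← Nat.modEq_and_modEq_iff_modEq_mul hcop]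
      refine ⟨by simpa using ht1.mul ht1, ?_⟩
      have e : (m : ℤ) ∣ ((t ^ p ^ a + 1 : ℕ) : ℤ) := by exact_mod_cast ht2
      apply Nat.ModEq.symm
      rw [Nat.modEq_iff_dvd]
      push_cast at e ⊢
      have : (t : ℤ) ^ p ^ a * t ^ p ^ a - 1 = (t ^ p ^ a + 1) * (t ^ p ^ a - 1) := by ring
      rw [this]
      exact e.mul_right _
  exact (congrFun key g).symm

theorem irrT_sub (P : Par p a m t) (hN : Nat.card G ∣ p ^ a * m) : IrrT G t ⊆ IrrK G (Qzeta p) := by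
  intro χ h
  refine ⟨h.1, fun g => ?_⟩
  set N := p ^ a * m with hNdef
  have hN0 : 0 < N := P.pos
  haveI : NeZero N := ⟨hN0.ne'⟩
  set k := Qzeta p
  set f : Polynomial k := Polynomial.X ^ N - 1 with hf
  have hf0 : f ≠ 0 := (Polynomial.monic_X_pow_sub_C 1 hN0.ne').ne_zero
  let E := IntermediateField.adjoin k (f.rootSet ℂ)
  haveI : Polynomial.IsSplittingField k E f :=
    IntermediateField.adjoin_rootSet_isSplittingField (IsAlgClosed.splits _)
  haveI : FiniteDimensional k E := Polynomial.IsSplittingField.finiteDimensional E f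
  have hsep : f.Separable := Polynomial.X_pow_sub_one_separable_iff.2 (by exact_mod_cast hN0.ne')
  haveI : IsGalois k E := IsGalois.of_separable_splitting_field hsep
  obtain ⟨ζ, hζ⟩ : ∃ ζ : ℂ, IsPrimitiveRoot ζ N := ⟨_, Complex.isPrimitiveRoot_exp N hN0.ne'⟩
  have hζE : ζ ∈ E := by
    apply IntermediateField.subset_adjoin
    rw [Polynomial.mem_rootSet]
    refine ⟨hf0, ?_⟩
    simp [hf, hζ.pow_eq_one]
  let z : E := ⟨ζ, hζE⟩
  have hz : IsPrimitiveRoot z N := by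
    have : Function.Injective (algebraMap E ℂ) := (algebraMap E ℂ).injective
    exact (IsPrimitiveRoot.map_iff_of_injective this).1 hζ
  obtain ⟨c, hc⟩ := char_pow hN hN0 hζ h.1 g
  let x : E := ∑ i ∈ Finset.range N, (c i : E) * z ^ i
  have hx : (x : ℂ) = χ g := by
    have := hc 1
    rw [pow_one] at this
    rw [this]
    simp [x, z]
  have hfix : ∀ σ : Gal(E/k), σ x = x := by
    intro σ
    have hσz : IsPrimitiveRoot (σ z) N := hz.map_of_injective σ.injective
    obtain ⟨s, -, hs, hs'⟩ := hz.isPrimitiveRoot_iff.1 hσz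
    have hs1 : s ≡ 1 [MOD p] := by
      obtain ⟨n, hn⟩ := P.p_dvd
      have hn0 : 0 < n := Nat.pos_of_ne_zero (by rintro rfl; omega)
      have hr : (ζ ^ n) ^ p = 1 := by rw [← pow_mul, mul_comm, ← hn, hζ.pow_eq_one]
      have h1 : σ (z ^ n) = z ^ n := by
        have : z ^ n = algebraMap k E ⟨ζ ^ n, root_mem_Qzeta hr⟩ := Subtype.ext rfl
        rw [this, σ.commutes]
      rw [map_pow, ← hs', ← pow_mul] at h1
      have h2 : s * n ≡ n [MOD N] := by
        rw [hz.eq_orderOf]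
        exact (isOfFinOrder_iff_pow_eq_one.2 ⟨N, hN0, hz.pow_eq_one⟩).pow_eq_pow_iff_modEq.1 h1
      have h3 : n * s ≡ n * 1 [MOD n * p] := by
        have e : n * p = N := by rw [mul_comm]; exact hn.symm
        rw [e, mul_one, mul_comm n s]; exact h2
      exact Nat.ModEq.mul_left_cancel' hn0.ne' h3
    apply Subtype.ext
    rw [hx, ← irrT_pow P hN h hs hs1 g, hc s]
    simp only [x, map_sum, map_mul, map_natCast, map_pow, ← hs']
    change algebraMap E ℂ _ = _
    rw [map_sum]
    refine Finset.sum_congr rfl fun i _ => ?_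
    rw [mul_comm i s, pow_mul]
    rfl
  have := (IsGalois.mem_range_algebraMap_iff_fixed x).2 hfix
  obtain ⟨y, hy⟩ := this
  rw [← hx, ← hy]
  exact y.2

/-- The irreducible characters fixed by the `t`-th power map are exactly the `ℚ(ζ_p)`-valued ones. -/
theorem irrT_eq (P : Par p a m t) (hN : Nat.card G ∣ p ^ a * m) : IrrT G t = IrrK G (Qzeta p) :=
  (irrT_sub P hN).antisymm (irrK_sub P hN)

theorem exists_par (hp : p.Prime) (ho : Odd p) {n : ℕ} (hn : Odd n) :
    ∃ a m t, Par p a m t ∧ n ∣ p ^ a * m := by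
  obtain ⟨b, m, hm, rfl⟩ := Nat.exists_eq_pow_mul_and_not_dvd hn.pos.ne' p hp.ne_one
  have hc : p.Coprime m := hp.coprime_iff_not_dvd.2 hm
  obtain ⟨t, h1, h2⟩ := Nat.chineseRemainder (hc.pow_left (b + 1)) (1 + p) (m - 1)
  have hm' : Odd m := Odd.of_dvd_nat hn (dvd_mul_left _ _)
  refine ⟨b + 1, m, t, ⟨hp, ho, by omega, hm', hc, h1, ?_⟩, Nat.mul_dvd_mul (pow_dvd_pow _ (by omega)) dvd_rfl⟩
  have := h2.add_right 1
  rw [Nat.sub_add_cancel hm'.pos] at this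
  exact (Nat.modEq_zero_iff_dvd).1 (this.trans (by simp [Nat.ModEq]))
end OddP

/-! ### Characters induced from linear characters -/

namespace OddP
open Subgroup
variable {G : Type} [Group G]

/-- `f : G → ℂ` is the extension by zero of a linear character of the subgroup `T`. -/
structure IsLin (T : Subgroup G) (f : G → ℂ) : Prop where
  zero : ∀ g, g ∉ T → f g = 0
  mul : ∀ g ∈ T, ∀ h, f (g * h) = f g * f h
  one : f 1 = 1

namespace IsLin
variable {T : Subgroup G} {f : G → ℂ}

theorem inv_mul (h : IsLin T f) {g : G} (hg : g ∈ T) : f g⁻¹ * f g = 1 := by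
  rw [← h.mul _ (T.inv_mem hg), inv_mul_cancel, h.one]

theorem ne_zero (h : IsLin T f) {g : G} (hg : g ∈ T) : f g ≠ 0 :=
  right_ne_zero_of_mul_eq_one (h.inv_mul hg)

theorem inv (h : IsLin T f) {g : G} (hg : g ∈ T) : f g⁻¹ = (f g)⁻¹ :=
  eq_inv_of_mul_eq_one_left (h.inv_mul hg)

theorem conj (h : IsLin T f) {x : G} (hx : x ∈ T) (g : G) : f (x * g * x⁻¹) = f g := by
  by_cases hg : g ∈ T
  · rw [h.mul _ (T.mul_mem hx hg), h.mul _ hx, mul_right_comm, mul_comm (f x), h.inv_mul hx, one_mul]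
  · rw [h.zero _ hg, h.zero]
    intro hc
    apply hg
    have := T.mul_mem (T.mul_mem (T.inv_mem hx) hc) hx
    simpa [mul_assoc] using this

theorem mul' (h : IsLin T f) (g : G) {x : G} (hx : x ∈ T) : f (g * x) = f g * f x := by
  have := h.conj hx (g * x)
  rw [← this, show x * (g * x) * x⁻¹ = x * g by group, h.mul x hx, mul_comm]
end IsLin

variable [Fintype G]

/-- The character of `G` induced by the linear character of `T` whose extension by zero is `f`. -/
noncomputable def ind (T : Subgroup G) (f : G → ℂ) (g : G) : ℂ :=
  (Nat.card T : ℂ)⁻¹ * ∑ x : G, f (x * g * x⁻¹)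

variable {T N : Subgroup G} {f : G → ℂ}

theorem card_ne (T : Subgroup G) : (Nat.card T : ℂ) ≠ 0 := by
  exact_mod_cast Nat.card_pos.ne'

theorem ind_conj (g y : G) : ind T f (y * g * y⁻¹) = ind T f g := by
  unfold ind
  congr 1
  refine Fintype.sum_equiv (Equiv.mulRight y) _ _ fun x => ?_
  simp [mul_assoc]

theorem ind_one (h : IsLin T f) : ind T f 1 = T.index := by
  unfold ind
  simp only [mul_one, mul_inv_cancel, h.one, Finset.sum_const, Finset.card_univ, nsmul_eq_mul]
  rw [← Nat.card_eq_fintype_card, ← T.card_mul_index]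
  push_cast
  rw [← mul_assoc, inv_mul_cancel₀ (card_ne T), one_mul]

theorem ind_mem {k : Subfield ℂ} (hf : ∀ g, f g ∈ k) (g : G) : ind T f g ∈ k :=
  k.mul_mem (k.inv_mem (natCast_mem k _)) (k.sum_mem fun _ _ => hf _)

/-- The `λ`-isotypic part of the induced character over `N`, for `λ = f|_N`, is `f` itself. -/
theorem ind_E (h : IsLin T f) (hN : N.Normal) (hNT : N ≤ T)
    (hst : ∀ x, (∀ n ∈ N, f (x * n * x⁻¹) = f n) → x ∈ T) {t : G} (ht : t ∈ T) [Fintype N] :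
    (Nat.card N : ℂ)⁻¹ * ∑ n : N, f (n : G)⁻¹ * ind T f (n * t) = f t := by
  classical
  have key : ∀ x : G, ∑ n : N, f (n : G)⁻¹ * f (x * (n * t) * x⁻¹) = if x ∈ T then (Nat.card N : ℂ) * f t else 0 := by
    intro x
    have e : ∀ n : N, f (x * (n * t) * x⁻¹) = f (x * n * x⁻¹) * f (x * t * x⁻¹) := by
      intro n
      rw [← h.mul _ (hNT (hN.conj_mem _ n.2 x))]
      congr 1; group
    simp only [e]
    split_ifs with hx
    · simp only [h.conj hx]
      rw [Finset.sum_congr rfl (fun n _ => by rw [← mul_assoc, h.inv_mul (hNT n.2), one_mul])]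
      simp [Nat.card_eq_fintype_card]
    · have hx' : ∃ n ∈ N, f (x * n * x⁻¹) ≠ f n := by
        by_contra hc
        push Not at hc
        exact hx (hst x hc)
      obtain ⟨n0, hn0, hne⟩ := hx'
      simp only [← mul_assoc]
      rw [← Finset.sum_mul]
      set S := ∑ n : N, f (n : G)⁻¹ * f (x * n * x⁻¹) with hS
      have hS2 : S = f n0⁻¹ * f (x * n0 * x⁻¹) * S := by
        conv_lhs => rw [hS]
        rw [← Equiv.sum_comp (Equiv.mulLeft (⟨n0, hn0⟩ : N)), hS, Finset.mul_sum]
        refine Finset.sum_congr rfl fun n _ => ?_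
        simp only [Equiv.coe_mulLeft, Subgroup.coe_mul, mul_inv_rev]
        rw [h.mul _ (T.inv_mem (hNT n.2)), show x * (n0 * n) * x⁻¹ = (x * n0 * x⁻¹) * (x * n * x⁻¹) by group,
          h.mul _ (hNT (hN.conj_mem _ hn0 x))]
        ring
      have hS0 : S = 0 := by
        by_contra hc
        have h1 : f n0⁻¹ * f (x * n0 * x⁻¹) = 1 := (mul_eq_right₀ hc).1 hS2.symm
        apply hne
        rw [h.inv (hNT hn0)] at h1
        exact (eq_of_inv_mul_eq_one h1).symm
      rw [hS0, zero_mul]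
  unfold ind
  have e2 : ∑ n : N, f (n : G)⁻¹ * ((Nat.card T : ℂ)⁻¹ * ∑ x : G, f (x * (n * t) * x⁻¹)) =
      (Nat.card T : ℂ)⁻¹ * ∑ x : G, ∑ n : N, f (n : G)⁻¹ * f (x * (n * t) * x⁻¹) := by
    rw [Finset.sum_comm, Finset.mul_sum]
    refine Finset.sum_congr rfl fun n _ => ?_
    rw [Finset.mul_sum, Finset.mul_sum, Finset.mul_sum]
    refine Finset.sum_congr rfl fun x _ => ?_
    ring
  rw [e2]
  simp only [key]
  rw [Finset.sum_ite, Finset.sum_const_zero, add_zero, Finset.sum_const, nsmul_eq_mul]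
  have hc : ((Finset.univ.filter fun x : G => x ∈ T).card : ℂ) = Nat.card T := by
    congr 1
    rw [← Fintype.card_subtype, ← Nat.card_eq_fintype_card]
  rw [hc]
  have := card_ne T
  have := card_ne N
  field_simp

/-- The injectivity part of the Clifford correspondence, for linear characters of `T` that
extend the same character of `N`, whose stabilizer lies in `T`. -/
theorem ind_inj {f' : G → ℂ} (h : IsLin T f) (h' : IsLin T f') (hN : N.Normal) (hNT : N ≤ T)
    (hst : ∀ x, (∀ n ∈ N, f (x * n * x⁻¹) = f n) → x ∈ T) (heq : ∀ n ∈ N, f n = f' n)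
    (hi : ind T f = ind T f') : f = f' := by
  classical
  funext t
  by_cases ht : t ∈ T
  · have hst' : ∀ x, (∀ n ∈ N, f' (x * n * x⁻¹) = f' n) → x ∈ T := by
      intro x hx
      apply hst
      intro n hn
      rw [heq _ hn, heq _ (hN.conj_mem _ hn x), hx n hn]
    rw [← ind_E h hN hNT hst ht, ← ind_E h' hN hNT hst' ht, hi]
    congr 1
    refine Finset.sum_congr rfl fun n _ => ?_
    rw [heq _ (N.inv_mem n.2)]
  · rw [h.zero _ ht, h'.zero _ ht]

theorem ind_norm (h : IsLin T f) (hN : N.Normal) (hNT : N ≤ T)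
    (hst : ∀ x, (∀ n ∈ N, f (x * n * x⁻¹) = f n) → x ∈ T) :
    ∑ g, ind T f g * ind T f g⁻¹ = Nat.card G := by
  classical
  have h1 : ∑ g : G, f g⁻¹ * ind T f g = Nat.card T := by
    have e1 : ∀ n : N, ∑ g : G, f g⁻¹ * ind T f g = ∑ g : G, f g⁻¹ * (f (n:G)⁻¹ * ind T f (n * g)) := by
      intro n
      rw [← Equiv.sum_comp (Equiv.mulLeft (n : G))]
      refine Finset.sum_congr rfl fun g _ => ?_
      simp only [Equiv.coe_mulLeft, mul_inv_rev]
      rw [h.mul' _ (T.inv_mem (hNT n.2)), mul_assoc]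
    have e2 : (Nat.card N : ℂ) * ∑ g : G, f g⁻¹ * ind T f g =
        ∑ g : G, f g⁻¹ * ∑ n : N, f (n:G)⁻¹ * ind T f (n * g) := by
      have : (Nat.card N : ℂ) * ∑ g : G, f g⁻¹ * ind T f g = ∑ n : N, ∑ g : G, f g⁻¹ * ind T f g := by
        rw [Finset.sum_const, nsmul_eq_mul, Finset.card_univ, Nat.card_eq_fintype_card]
      rw [this, Finset.sum_congr rfl fun n _ => e1 n, Finset.sum_comm]
      simp only [Finset.mul_sum]
    have e3 : ∀ g : G, f g⁻¹ * ∑ n : N, f (n:G)⁻¹ * ind T f (n * g) = if g ∈ T then (Nat.card N : ℂ) else 0 := by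
      intro g
      split_ifs with hg
      · have := ind_E h hN hNT hst hg
        rw [inv_mul_eq_iff_eq_mul₀ (card_ne N)] at this
        rw [this, mul_left_comm, h.inv_mul hg, mul_one]
      · rw [h.zero _ (fun hc => hg (by simpa using T.inv_mem hc)), zero_mul]
    simp only [e3] at e2
    rw [Finset.sum_ite, Finset.sum_const_zero, add_zero, Finset.sum_const, nsmul_eq_mul, mul_comm] at e2
    have hc : ((Finset.univ.filter fun x : G => x ∈ T).card : ℂ) = Nat.card T := by
      congr 1
      rw [← Fintype.card_subtype, ← Nat.card_eq_fintype_card]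
    rw [hc] at e2
    exact mul_right_cancel₀ (card_ne N) e2
  have h2 : ∀ g, ind T f g * ind T f g⁻¹ = (Nat.card T : ℂ)⁻¹ * ∑ x : G, ind T f g * f (x * g⁻¹ * x⁻¹) := by
    intro g
    rw [← Finset.mul_sum]
    conv_lhs => rw [ind.eq_1 T f g⁻¹]
    ring
  simp only [h2]
  rw [← Finset.mul_sum, Finset.sum_comm]
  have h3 : ∀ x : G, ∑ g : G, ind T f g * f (x * g⁻¹ * x⁻¹) = Nat.card T := by
    intro x
    rw [← h1]
    refine Fintype.sum_equiv (MulAut.conj x).toEquiv _ _ fun g => ?_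
    simp only [MulEquiv.toEquiv_eq_coe, EquivLike.coe_coe, MulAut.conj_apply]
    rw [ind_conj, mul_comm]
    congr 2; group
  simp only [h3]
  rw [Finset.sum_const, nsmul_eq_mul, Finset.card_univ, Nat.card_eq_fintype_card (α := G)]
  have := card_ne T
  field_simp

/-- The space of functions transforming on the left by `f` under `T`. -/
def indSpace (T : Subgroup G) (f : G → ℂ) : Submodule ℂ (G → ℂ) where
  carrier := {F | ∀ t ∈ T, ∀ g, F (t * g) = f t * F g}
  add_mem' := by
    intro F F' h h' t ht g
    simp only [Pi.add_apply, h t ht, h' t ht, mul_add]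
  zero_mem' := by intro t _ g; simp
  smul_mem' := by
    intro c F h t ht g
    simp only [Pi.smul_apply, smul_eq_mul, h t ht]; ring

/-- Right translation by `g` on functions on `G`. -/
def rtrans (g : G) : (G → ℂ) →ₗ[ℂ] (G → ℂ) where
  toFun F x := F (x * g)
  map_add' _ _ := rfl
  map_smul' _ _ := rfl

theorem rtrans_mem {F : G → ℂ} (hF : F ∈ indSpace T f) (g : G) : rtrans g F ∈ indSpace T f := by
  intro t ht x
  change F (t * x * g) = f t * F (x * g)
  rw [mul_assoc, hF t ht]

/-- The induced representation: right translation on `indSpace T f`. -/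
noncomputable def indRep (T : Subgroup G) (f : G → ℂ) : Representation ℂ G (indSpace T f) where
  toFun g := (rtrans g).restrict fun _ hF => rtrans_mem hF g
  map_one' := by
    ext F x
    simp [LinearMap.restrict_apply, rtrans]
  map_mul' g h := by
    ext F x
    simp [LinearMap.restrict_apply, rtrans, mul_assoc]

/-- The projection of `G → ℂ` onto `indSpace T f`. -/
noncomputable def indProj (T : Subgroup G) (f : G → ℂ) : (G → ℂ) →ₗ[ℂ] (G → ℂ) where
  toFun F x := (Nat.card T : ℂ)⁻¹ * ∑ y, f y⁻¹ * F (y * x)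
  map_add' F F' := by
    ext x
    simp [mul_add, Finset.sum_add_distrib]
  map_smul' c F := by
    ext x
    simp only [Pi.smul_apply, smul_eq_mul, RingHom.id_apply]
    rw [mul_left_comm, Finset.mul_sum (a := c)]
    congr 1
    exact Finset.sum_congr rfl fun _ _ => by ring

theorem indProj_mem (h : IsLin T f) (F : G → ℂ) : indProj T f F ∈ indSpace T f := by
  intro t ht x
  change (Nat.card T : ℂ)⁻¹ * ∑ y, f y⁻¹ * F (y * (t * x)) = f t * ((Nat.card T : ℂ)⁻¹ * ∑ y, f y⁻¹ * F (y * x))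
  rw [mul_left_comm (f t)]
  congr 1
  rw [Finset.mul_sum]
  refine Fintype.sum_equiv (Equiv.mulRight t) _ _ fun y => ?_
  simp only [Equiv.coe_mulRight, mul_inv_rev]
  rw [h.mul _ (T.inv_mem ht), mul_assoc y t x]
  linear_combination (-(f y⁻¹ * F (y * (t * x)))) * h.inv_mul ht

theorem indProj_eq (h : IsLin T f) {F : G → ℂ} (hF : F ∈ indSpace T f) : indProj T f F = F := by
  classical
  ext x
  change (Nat.card T : ℂ)⁻¹ * ∑ y, f y⁻¹ * F (y * x) = F x
  have : ∀ y, f y⁻¹ * F (y * x) = if y ∈ T then F x else 0 := by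
    intro y
    split_ifs with hy
    · rw [hF y hy, ← mul_assoc, h.inv_mul hy, one_mul]
    · rw [h.zero _ (fun hc => hy (by simpa using T.inv_mem hc)), zero_mul]
  simp only [this]
  rw [Finset.sum_ite, Finset.sum_const_zero, add_zero, Finset.sum_const, nsmul_eq_mul]
  have hc : ((Finset.univ.filter fun x : G => x ∈ T).card : ℂ) = Nat.card T := by
    congr 1
    rw [← Fintype.card_subtype, ← Nat.card_eq_fintype_card]
  rw [hc, ← mul_assoc, inv_mul_cancel₀ (card_ne T), one_mul]

theorem indRep_character (h : IsLin T f) : (indRep T f).character = ind T f := by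
  classical
  ext g
  change LinearMap.trace ℂ _ ((rtrans g).restrict fun _ hF => rtrans_mem hF g) = _
  have hm : ∀ F, (rtrans g ∘ₗ indProj T f) F ∈ indSpace T f := fun F => rtrans_mem (indProj_mem h F) g
  have h1 := LinearMap.trace_restrict_eq_of_forall_mem (indSpace T f) (rtrans g ∘ₗ indProj T f) hm
  have h2 : (rtrans g ∘ₗ indProj T f).restrict (fun F _ => hm F) =
      (rtrans g).restrict fun _ hF => rtrans_mem (T := T) (f := f) hF g := by
    ext F x
    simp [LinearMap.restrict_apply, indProj_eq h F.2]
  rw [← h2, h1, LinearMap.trace_eq_matrix_trace ℂ (Pi.basisFun ℂ G), Matrix.trace]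
  unfold ind
  rw [Finset.mul_sum]
  refine Finset.sum_congr rfl fun x _ => ?_
  rw [Matrix.diag_apply, LinearMap.toMatrix_apply]
  change (Nat.card T : ℂ)⁻¹ * ∑ y, f y⁻¹ * (Pi.basisFun ℂ G x) (y * (x * g)) = _
  congr 1
  rw [Finset.sum_eq_single (x * g⁻¹ * x⁻¹)]
  · simp [mul_assoc]
  · intro y _ hy
    rw [Pi.basisFun_apply, Pi.single_eq_of_ne, mul_zero]
    intro hc
    apply hy
    rw [eq_mul_inv_iff_mul_eq, eq_mul_inv_iff_mul_eq, mul_assoc, hc]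
  · simp

/-- If `T` contains the stabilizer of `f|_N`, for a normal subgroup `N ≤ T`, then the induced character is
irreducible. -/
theorem ind_irr (h : IsLin T f) (hN : N.Normal) (hNT : N ≤ T)
    (hst : ∀ x, (∀ n ∈ N, f (x * n * x⁻¹) = f n) → x ∈ T) : ind T f ∈ Irr G := by
  rw [← indRep_character h]
  apply irr_intro
  rw [indRep_character h]
  exact ind_norm h hN hNT hst
end OddP

/-! ### Linear characters with values in the `p`-th roots of unity -/

namespace OddP
open Subgroup
variable {G : Type} [Group G] {p a m t : ℕ}

/-- The group of linear characters of `G` with values in the `p`-th roots of unity. -/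
noncomputable def AA (p : ℕ) (G : Type) [Group G] : Subgroup (G →* ℂˣ) :=
  (powMonoidHom p : (G →* ℂˣ) →* (G →* ℂˣ)).ker

theorem mem_AA {l : G →* ℂˣ} : l ∈ AA p G ↔ ∀ g, l g ^ p = 1 := by
  rw [AA, MonoidHom.mem_ker, MonoidHom.ext_iff]; rfl

/-- A linear character as a complex-valued function. -/
def lin (l : G →* ℂˣ) : G → ℂ := fun g => (l g : ℂ)

theorem lin_inj : Function.Injective (lin : (G →* ℂˣ) → G → ℂ) := by
  intro l l' h
  ext g
  exact congrFun h g

theorem isLin_lin (l : G →* ℂˣ) : IsLin ⊤ (lin l) := ⟨fun g h => absurd (mem_top g) h, fun g _ h => by simp [lin], by simp [lin]⟩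

theorem lin_root {l : G →* ℂˣ} (h : l ∈ AA p G) (g : G) : lin l g ^ p = 1 := by
  have := mem_AA.1 h g
  simpa [lin] using congrArg Units.val this

variable [Fintype G]

theorem lin_irr (l : G →* ℂˣ) : lin l ∈ Irr G := by
  have h := ind_irr (isLin_lin l) (N := ⊤) inferInstance le_rfl (fun x _ => mem_top x)
  convert h using 1
  ext g
  unfold ind
  simp only [(isLin_lin l).conj (mem_top _), Finset.sum_const, nsmul_eq_mul, Finset.card_univ]
  rw [Subgroup.card_top, Nat.card_eq_fintype_card, ← mul_assoc, inv_mul_cancel₀, one_mul]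
  exact_mod_cast Fintype.card_ne_zero

instance finite_hom : Finite (G →* ℂˣ) := by
  haveI : Finite (Irr G) := irr_finite
  exact Finite.of_injective (fun l => (⟨lin l, lin_irr l⟩ : Irr G)) fun l l' h =>
    lin_inj (congrArg Subtype.val h)

theorem lin_irrK {l : G →* ℂˣ} (h : l ∈ AA p G) : lin l ∈ IrrK G (Qzeta p) :=
  ⟨lin_irr l, fun g => root_mem_Qzeta (lin_root h g)⟩

theorem exists_lin {χ : G → ℂ} (h : χ ∈ Irr G) (h1 : χ 1 = 1) : ∃ l : G →* ℂˣ, χ = lin l := by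
  obtain ⟨d, ρ, hρ⟩ := exists_matrix h
  have hd : d = 1 := by
    have := hρ 1
    rw [h1, map_one, Matrix.trace_one, Fintype.card_fin] at this
    exact_mod_cast this.symm
  subst hd
  have hm : ∀ g h, χ (g * h) = χ g * χ h := by
    intro g h
    rw [hρ, hρ, hρ, map_mul]
    simp [Matrix.trace, Matrix.mul_apply]
  refine ⟨MonoidHom.toHomUnits ⟨⟨χ, h1⟩, hm⟩, ?_⟩
  ext g
  rfl

theorem lin_AA (P : Par p a m t) (hN : Nat.card G ∣ p ^ a * m) {l : G →* ℂˣ} (h : lin l ∈ IrrT G t) :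
    l ∈ AA p G := by
  rw [mem_AA]
  intro g
  ext
  push_cast
  apply root_of_fixed P
  · have := congrArg (fun u : ℂˣ => (u : ℂ)) (congrArg l (pow_N hN g))
    simpa using this
  · have := h.2 g
    simpa [lin] using this

theorem lin_image (P : Par p a m t) (hN : Nat.card G ∣ p ^ a * m) :
    lin '' (AA p G : Set (G →* ℂˣ)) = {χ ∈ IrrT G t | χ 1 = 1} := by
  ext χ
  constructor
  · rintro ⟨l, hl, rfl⟩
    exact ⟨irrK_sub P hN (lin_irrK hl), by simp [lin]⟩
  · rintro ⟨h, h1⟩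
    obtain ⟨l, rfl⟩ := exists_lin h.1 h1
    exact ⟨l, lin_AA P hN h, rfl⟩

theorem lin_ncard (P : Par p a m t) (hN : Nat.card G ∣ p ^ a * m) :
    {χ ∈ IrrT G t | χ 1 = 1}.ncard = Nat.card (AA p G) := by
  rw [← lin_image P hN, Set.ncard_image_of_injective _ lin_inj]
  rfl

/-- If `S` is a set of nonlinear members of `IrrT`, then `n₁ + |S| ≤ |IrrT|`. -/
theorem add_ncard_le (P : Par p a m t) (hN : Nat.card G ∣ p ^ a * m) {S : Set (G → ℂ)}
    (hS : S ⊆ IrrT G t) (h1 : ∀ χ ∈ S, χ 1 ≠ 1) : Nat.card (AA p G) + S.ncard ≤ (IrrT G t).ncard := by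
  have hf : (IrrT G t).Finite := IrrT_finite t
  rw [← lin_ncard P hN, ← Set.ncard_union_eq _ (hf.subset fun _ h => h.1) (hf.subset hS)]
  · exact Set.ncard_le_ncard (Set.union_subset (fun _ h => h.1) hS) hf
  · rw [Set.disjoint_left]
    intro χ h h'
    exact h1 χ h' h.2

theorem irr_mul_lin {χ : G → ℂ} (h : χ ∈ Irr G) (l : G →* ℂˣ) : (fun g => lin l g * χ g) ∈ Irr G := by
  obtain ⟨d, ρ, hρ⟩ := exists_matrix h
  let σ : G →* Matrix (Fin d) (Fin d) ℂ :=
    { toFun := fun g => lin l g • ρ g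
      map_one' := by simp [lin]
      map_mul' := by
        intro x y
        simp only [map_mul, lin, Units.val_mul, smul_mul_assoc, mul_smul_comm, smul_smul]
        rw [mul_comm] }
  have e : ∀ g, (σ g).trace = lin l g * χ g := by
    intro g
    change (lin l g • ρ g).trace = _
    rw [Matrix.trace_smul, hρ, smul_eq_mul]
  have := irr_of_matrix σ (by
    classical
    have h2 := irr_orth h h
    rw [if_pos rfl] at h2
    rw [← h2]
    refine Finset.sum_congr rfl fun g _ => ?_
    rw [e, e]
    have : lin l g * lin l g⁻¹ = 1 := by simp [lin]
    linear_combination (χ g * χ g⁻¹) * this)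
  simpa only [e] using this

theorem sum_quotient (N : Subgroup G) [N.Normal] [Fintype (G ⧸ N)] (F : G ⧸ N → ℂ) :
    ∑ g : G, F (QuotientGroup.mk' N g) = Nat.card N * ∑ q, F q := by
  classical
  rw [← Finset.sum_fiberwise_of_maps_to (s := Finset.univ) (t := Finset.univ) (g := QuotientGroup.mk' N) (fun _ _ => Finset.mem_univ _),
    Finset.mul_sum]
  refine Finset.sum_congr rfl fun q _ => ?_
  rw [Finset.sum_congr rfl (g := fun _ => F q) (fun x hx => by rw [(Finset.mem_filter.1 hx).2]),
    Finset.sum_const, nsmul_eq_mul]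
  congr 2
  obtain ⟨x, rfl⟩ := QuotientGroup.mk_surjective q
  rw [Nat.card_eq_fintype_card, ← Finset.card_univ]
  symm
  refine Finset.card_bij (fun n _ => x * (n : G)) (fun n _ => ?_) (fun n _ n' _ hn => ?_) (fun y hy => ?_)
  · rw [Finset.mem_filter]
    exact ⟨Finset.mem_univ _, QuotientGroup.eq.2 (by simp)⟩
  · exact Subtype.ext (mul_left_cancel hn)
  · have := (Finset.mem_filter.1 hy).2
    refine ⟨⟨x⁻¹ * y, QuotientGroup.eq.1 this.symm⟩, Finset.mem_univ _, by simp⟩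

theorem irr_inflate {N : Subgroup G} [N.Normal] {χ : G ⧸ N → ℂ} (h : χ ∈ Irr (G ⧸ N)) :
    (fun g : G => χ g) ∈ Irr G := by
  classical
  obtain ⟨d, ρ, hρ⟩ := exists_matrix h
  have := irr_of_matrix (ρ.comp (QuotientGroup.mk' N)) (by
    have h2 := irr_orth h h
    rw [if_pos rfl] at h2
    simp only [MonoidHom.comp_apply, ← hρ]
    simp only [map_inv]
    have e := sum_quotient N
    rw [e (fun q => χ q * χ q⁻¹), h2, N.card_eq_card_quotient_mul_card_subgroup]
    push_cast; ring)
  simpa only [MonoidHom.comp_apply, ← hρ, QuotientGroup.mk'_apply] using this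
end OddP

/-! ### Passing to the normalizer of `W(P)` -/

namespace OddP
open Subgroup
variable {G : Type} [Group G] [Fintype G] {p a m t : ℕ}

lemma pg_zpowers {x : G} {k : ℕ} (h : x ^ p ^ k = 1) : IsPGroup p (zpowers x) := by
  rintro ⟨y, hy⟩
  obtain ⟨i, rfl⟩ := mem_zpowers_iff.1 hy
  refine ⟨k, Subtype.ext ?_⟩
  change (x ^ i) ^ p ^ k = 1
  rw [← zpow_natCast, ← zpow_mul, mul_comm, zpow_mul, zpow_natCast, h, one_zpow]

/-- As `N(W(Q))` controls fusion in `Q`, its `t`-stable classes, which consist of `p`-elements, inject into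
those of `G`. -/
theorem ClT_le [Fact p.Prime] (P : Par p a m t) (hN : Nat.card G ∣ p ^ a * m) {Q : Subgroup G} (hQ : IsSyl p Q ⊤)
    (hF : FF p G) : (ClT (nrm (W Q)) t).ncard ≤ (ClT G t).ncard := by
  set H := nrm (W Q) with hH
  have hQH : Q ≤ H := (le_nrm Q).trans (nrm_le_nrm_W Q)
  have hNH : Nat.card H ∣ p ^ a * m := (Subgroup.card_subgroup_dvd_card H).trans hN
  refine Set.ncard_le_ncard_of_injOn (ConjClasses.map H.subtype) ?_ ?_ (Set.toFinite _)
  · rintro _ ⟨g, rfl, hg⟩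
    exact ⟨g, rfl, by simpa using H.subtype.map_isConj hg⟩
  · rintro _ ⟨x, rfl, hx⟩ _ ⟨y, rfl, hy⟩ hxy
    have hxy : IsConj (x : G) y := ConjClasses.mk_eq_mk_iff_isConj.1 hxy
    rw [ConjClasses.mk_eq_mk_iff_isConj]
    have hin : ∀ x : H, IsConj x (x ^ t) → ∃ h ∈ H, h * (x : G) * h⁻¹ ∈ Q := by
      intro x hx
      have h1 : (x : G) ^ p ^ a = 1 := by
        have := pel_of_conj P hNH hx
        exact_mod_cast congrArg (Subtype.val) this
      obtain ⟨h, hh, hle⟩ := (hQ.of_le hQH le_top).conj (Q := zpowers (x : G)) (by simp) (pg_zpowers h1)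
      exact ⟨h, hh, hle (conj_mem_cj (mem_zpowers _))⟩
    obtain ⟨h, hhH, hh⟩ := hin x hx
    obtain ⟨k, hkH, hk⟩ := hin y hy
    have h1 : IsConj (h * (x : G) * h⁻¹) (k * (y : G) * k⁻¹) :=
      (isConj_iff.2 ⟨h, rfl⟩ : IsConj (x : G) _).symm.trans (hxy.trans (isConj_iff.2 ⟨k, rfl⟩))
    obtain ⟨g, hg⟩ := isConj_iff.1 h1
    obtain ⟨u, hu, hu'⟩ := hF Q hQ (zpowers (h * (x : G) * h⁻¹)) (by simpa using hh) g (by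
      rw [cj_le_iff]
      intro z hz
      obtain ⟨i, rfl⟩ := mem_zpowers_iff.1 hz
      rw [← conj_zpow, hg]
      exact Q.zpow_mem hk i)
    have h2 := hu' _ (mem_zpowers _)
    rw [hg] at h2
    refine isConj_iff.2 ⟨⟨k, hkH⟩⁻¹ * ⟨u, hu⟩ * ⟨h, hhH⟩, Subtype.ext ?_⟩
    push_cast
    have : (y : G) = k⁻¹ * (k * y * k⁻¹) * k := by group
    rw [this, ← h2]; group

theorem AA_eq_one [hp : Fact p.Prime] {Q : Subgroup G} (hQ : IsSyl p Q ⊤) {l : G →* ℂˣ} (hl : l ∈ AA p G)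
    (h : ∀ x ∈ Q, l x = 1) : l = 1 := by
  ext1 g
  rw [MonoidHom.one_apply]
  have h1 := mem_AA.1 hl g
  obtain ⟨b, hb⟩ := hQ.pg.exists_card_eq
  have h2 : l g ^ Q.index = 1 := by
    have e : (g ^ Q.index) ^ p ^ b = 1 := by
      rw [← pow_mul, ← hb, mul_comm, Q.card_mul_index, pow_card_eq_one']
    obtain ⟨x, -, hx⟩ := hQ.conj (Q := zpowers (g ^ Q.index)) le_top (pg_zpowers e)
    have := h _ (hx (conj_mem_cj (mem_zpowers _)))
    rw [map_mul, map_mul, map_inv, mul_right_comm, mul_inv_cancel, one_mul, map_pow] at this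
    exact this
  have h3 : p.Coprime Q.index := by
    rw [hp.out.coprime_iff_not_dvd]
    have := hQ.not_dvd
    rwa [relIndex_top_right] at this
  have h4 := Nat.dvd_gcd (orderOf_dvd_of_pow_eq_one h1) (orderOf_dvd_of_pow_eq_one h2)
  rw [h3, Nat.dvd_one] at h4
  exact orderOf_eq_one_iff.1 h4

theorem AA_card_le [hp : Fact p.Prime] {Q H : Subgroup G} (hQ : IsSyl p Q ⊤) (hQH : Q ≤ H) :
    Nat.card (AA p G) ≤ Nat.card (AA p H) := by
  refine Nat.card_le_card_of_injective
    (fun l => (⟨l.1.comp H.subtype, mem_AA.2 fun g => mem_AA.1 l.2 g⟩ : AA p H)) ?_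
  intro l l' h
  apply Subtype.ext
  rw [← div_eq_one]
  apply AA_eq_one hQ ((AA p G).div_mem l.2 l'.2)
  intro x hx
  have := DFunLike.congr_fun (congrArg Subtype.val h) (⟨x, hQH hx⟩ : H)
  rw [MonoidHom.div_apply, div_eq_one]
  exact this

/-- Frattini argument for complements of an abelian normal Hall subgroup. -/
theorem frattini_compl {V K : Subgroup G} (hV : V.Normal) (hab : ∀ x ∈ V, ∀ y ∈ V, x * y = y * x)
    (hcop : (Nat.card V).Coprime (Nat.card K))
    (hM : ∀ g, ∀ k ∈ K, ∃ v ∈ V, ∃ k' ∈ K, g * k * g⁻¹ = v * k') (g : G) : ∃ v ∈ V, v * g ∈ nrm K := by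
  classical
  letI : CommGroup V := { (inferInstance : Group V) with
    mul_comm := fun x y => Subtype.ext (hab x x.2 y y.2) }
  have huniq : ∀ v v' : V, ∀ k k' : K, (v : G) * k = v' * k' → v = v' := by
    intro v v' k k' h
    have h1 : (v' : G)⁻¹ * v = k' * (k : G)⁻¹ := by
      rw [eq_mul_inv_iff_mul_eq, mul_assoc, h]; group
    have h2 : (v' : G)⁻¹ * v = 1 := by
      have e1 : orderOf ((v' : G)⁻¹ * v) ∣ Nat.card V :=
        Subgroup.orderOf_dvd_natCard V (V.mul_mem (V.inv_mem v'.2) v.2)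
      have e2 : orderOf ((v' : G)⁻¹ * v) ∣ Nat.card K := by
        rw [h1]; exact Subgroup.orderOf_dvd_natCard K (K.mul_mem k'.2 (K.inv_mem k.2))
      have := Nat.dvd_gcd e1 e2
      rw [hcop, Nat.dvd_one] at this
      exact orderOf_eq_one_iff.1 this
    exact Subtype.ext (inv_mul_eq_one.1 h2).symm
  have hM' : ∀ k : K, ∃ v : V, ∃ k' : K, g * k * g⁻¹ = v * k' := by
    intro k
    obtain ⟨v, hv, k', hk', h⟩ := hM g k k.2
    exact ⟨⟨v, hv⟩, ⟨k', hk'⟩, h⟩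
  choose c φ hφ using hM'
  let A : K → V →* V := fun k => (MulAut.conjNormal (k : G) : V ≃* V).toMonoidHom
  have hA : ∀ k v, ((A k v : V) : G) = k * v * (k : G)⁻¹ := fun k v => MulAut.conjNormal_apply _ _
  have hc : ∀ k l, c (k * l) = c k * A (φ k) (c l) := by
    intro k l
    apply huniq _ _ (φ (k * l)) (φ k * φ l)
    rw [← hφ]
    push_cast
    rw [hA]
    calc g * (k * l) * g⁻¹ = (g * k * g⁻¹) * (g * l * g⁻¹) := by group
      _ = _ := by rw [hφ, hφ]; group
  set w := ∏ l, c l with hw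
  have hwk : ∀ k, w = c k ^ Nat.card K * A (φ k) w := by
    intro k
    conv_lhs => rw [hw, ← Equiv.prod_comp (Equiv.mulLeft k)]
    simp only [Equiv.coe_mulLeft, hc]
    rw [Finset.prod_mul_distrib, Finset.prod_const, Finset.card_univ, ← Nat.card_eq_fintype_card, hw, map_prod]
  let u : V := (powCoprime hcop).symm w
  have hu : u ^ Nat.card K = w := (powCoprime hcop).apply_symm_apply w
  have hcu : ∀ k, c k * A (φ k) u = u := by
    intro k
    apply (powCoprime hcop).injective
    change (c k * A (φ k) u) ^ Nat.card K = u ^ Nat.card K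
    rw [mul_pow, ← map_pow, hu, ← hwk]
  refine ⟨(u : G)⁻¹, V.inv_mem u.2, ?_⟩
  apply mem_nrm_of_le
  rw [cj_le_iff]
  intro k hk
  have h1 := congrArg Subtype.val (hcu ⟨k, hk⟩)
  push_cast at h1
  rw [hA] at h1
  have h2 := hφ ⟨k, hk⟩
  have h3 : (u : G)⁻¹ * g * k * ((u : G)⁻¹ * g)⁻¹ = φ ⟨k, hk⟩ := by
    calc (u : G)⁻¹ * g * k * ((u : G)⁻¹ * g)⁻¹ = (u : G)⁻¹ * (g * k * g⁻¹) * u := by group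
      _ = (u : G)⁻¹ * (c ⟨k, hk⟩ * φ ⟨k, hk⟩) * u := by rw [← h2]
      _ = (u : G)⁻¹ * (c ⟨k, hk⟩ * (φ ⟨k, hk⟩ * u * (φ ⟨k, hk⟩ : G)⁻¹)) * φ ⟨k, hk⟩ := by group
      _ = φ ⟨k, hk⟩ := by rw [h1]; group
  rw [h3]
  exact (φ _).2
end OddP

/-! ### Passing to the quotient by a minimal normal subgroup -/

namespace OddP
open Subgroup
variable {G : Type} [Group G] [Fintype G] {p a m t : ℕ}

theorem irrT_inflate {V : Subgroup G} [V.Normal] {χ : G ⧸ V → ℂ} (h : χ ∈ IrrT (G ⧸ V) t) :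
    (fun g : G => χ g) ∈ IrrT G t :=
  ⟨irr_inflate h.1, fun g => by
    change χ ((g ^ t : G) : G ⧸ V) = _
    rw [QuotientGroup.mk_pow, h.2]⟩

theorem irrT_mul_lin (P : Par p a m t) (hN : Nat.card G ∣ p ^ a * m) {χ : G → ℂ} (h : χ ∈ IrrT G t)
    {l : G →* ℂˣ} (hl : l ∈ AA p G) : (fun g => lin l g * χ g) ∈ IrrT G t :=
  ⟨irr_mul_lin h.1 l, fun g => by
    change lin l (g ^ t) * χ (g ^ t) = _
    rw [h.2, (irrK_sub P hN (lin_irrK hl)).2]⟩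

/-- A character of `G` in `AA p G` trivial on `V` comes from `G ⧸ V`. -/
theorem AA_lift {V : Subgroup G} [V.Normal] {l : G →* ℂˣ} (hl : l ∈ AA p G) (h : ∀ v ∈ V, l v = 1) :
    ∃ l' ∈ AA p (G ⧸ V), l = l'.comp (QuotientGroup.mk' V) := by
  refine ⟨QuotientGroup.lift V l h, mem_AA.2 fun q => ?_, ?_⟩
  · obtain ⟨g, rfl⟩ := QuotientGroup.mk_surjective q
    exact mem_AA.1 hl g
  · ext g; rfl

/-- Passing to the quotient by a minimal normal subgroup keeps `|IrrT| < 2 n₁`. -/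
theorem quot_hyp [hp : Fact p.Prime] (P : Par p a m t) (hN : Nat.card G ∣ p ^ a * m) {V : Subgroup G} [hV : V.Normal]
    (hmin : ∀ L : Subgroup G, L.Normal → L ≤ V → L = ⊥ ∨ L = V)
    (h : (IrrT G t).ncard < 2 * Nat.card (AA p G)) :
    (IrrT (G ⧸ V) t).ncard < 2 * Nat.card (AA p (G ⧸ V)) := by
  classical
  by_cases hc : ∀ l ∈ AA p G, ∀ v ∈ V, l v = 1
  · have h1 : Nat.card (AA p G) ≤ Nat.card (AA p (G ⧸ V)) := by
      have : ∀ l : AA p G, ∃ l' : AA p (G ⧸ V), l.1 = l'.1.comp (QuotientGroup.mk' V) := by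
        intro l
        obtain ⟨l', h1, h2⟩ := AA_lift l.2 (hc l.1 l.2)
        exact ⟨⟨l', h1⟩, h2⟩
      choose F hF using this
      refine Nat.card_le_card_of_injective F fun l l' hl => Subtype.ext ?_
      rw [hF, hF, hl]
    have h2 : (IrrT (G ⧸ V) t).ncard ≤ (IrrT G t).ncard := by
      refine Set.ncard_le_ncard_of_injOn (fun χ => fun g : G => χ g) (fun χ hχ => irrT_inflate hχ) ?_ (IrrT_finite t)
      intro χ _ ψ _ he
      funext q
      obtain ⟨g, rfl⟩ := QuotientGroup.mk_surjective q
      exact congrFun he g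
    omega
  · push Not at hc
    obtain ⟨l, hl, v0, hv0, hne⟩ := hc
    have hbot : l.ker ⊓ V = ⊥ := by
      rcases hmin (l.ker ⊓ V) inferInstance inf_le_right with h1 | h1
      · exact h1
      · exact absurd ((inf_eq_right.1 h1) hv0) hne
    have hinj : ∀ v ∈ V, l v = 1 → v = 1 := by
      intro v hv h1
      have : v ∈ l.ker ⊓ V := ⟨h1, hv⟩
      rwa [hbot, mem_bot] at this
    set z := lin l v0 with hz
    have hzp : IsPrimitiveRoot z p := by
      have h1 : z ^ p = 1 := lin_root hl v0
      have := IsPrimitiveRoot.orderOf z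
      rwa [orderOf_eq_prime h1 (fun hc => hne (Units.ext hc))] at this
    have hroot : ∀ l' ∈ AA p G, ∀ v, ∃ i < p, lin l' v = z ^ i := by
      intro l' hl' v
      haveI : NeZero p := ⟨hp.out.ne_zero⟩
      obtain ⟨i, hi, h1⟩ := hzp.eq_pow_of_pow_eq_one (lin_root hl' v)
      exact ⟨i, hi, h1.symm⟩
    have hgen : ∀ v ∈ V, ∃ i : ℕ, v = v0 ^ i := by
      intro v hv
      obtain ⟨i, -, hi⟩ := hroot l hl v
      refine ⟨i, ?_⟩
      have := hinj (v * (v0 ^ i)⁻¹) (V.mul_mem hv (V.inv_mem (V.pow_mem hv0 i))) (by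
        rw [map_mul, map_inv, map_pow, mul_inv_eq_one]
        ext
        push_cast
        exact hi)
      exact mul_inv_eq_one.1 this
    -- `n₁(G) ≤ p n₁(G/V)`
    have h1 : Nat.card (AA p G) ≤ p * Nat.card (AA p (G ⧸ V)) := by
      have : ∀ l' : AA p G, ∃ x : Fin p × AA p (G ⧸ V), l'.1 = l ^ (x.1 : ℕ) * x.2.1.comp (QuotientGroup.mk' V) := by
        intro l'
        obtain ⟨i, hip, hi⟩ := hroot l'.1 l'.2 v0
        have hmem : l'.1 * (l ^ i)⁻¹ ∈ AA p G := (AA p G).mul_mem l'.2 ((AA p G).inv_mem ((AA p G).pow_mem hl i))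
        obtain ⟨l2, h2, h3⟩ := AA_lift (V := V) hmem (by
          intro v hv
          obtain ⟨j, rfl⟩ := hgen v hv
          rw [map_pow]
          have : (l'.1 * (l ^ i)⁻¹) v0 = 1 := by
            rw [MonoidHom.mul_apply, MonoidHom.inv_apply, mul_inv_eq_one]
            ext
            rw [MonoidHom.pow_apply]
            push_cast
            exact hi
          rw [this, one_pow])
        refine ⟨⟨⟨i, hip⟩, ⟨l2, h2⟩⟩, ?_⟩
        rw [← h3]
        ext1 g
        change l'.1 g = l g ^ i * (l'.1 g * (l g ^ i)⁻¹)
        rw [mul_comm, inv_mul_cancel_right]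
      choose F hF using this
      have hle := Nat.card_le_card_of_injective F fun l l' hl => Subtype.ext (by rw [hF, hF, hl])
      rwa [Nat.card_prod, Nat.card_fin] at hle
    have h2 : p * (IrrT (G ⧸ V) t).ncard ≤ (IrrT G t).ncard := by
      haveI : Finite (IrrT G t) := IrrT_finite t
      have hle := Nat.card_le_card_of_injective (fun x : Fin p × IrrT (G ⧸ V) t =>
        (⟨fun g => lin (l ^ (x.1 : ℕ)) g * x.2.1 g, irrT_mul_lin P hN (irrT_inflate x.2.2)
          ((AA p G).pow_mem hl _)⟩ : IrrT G t)) (by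
        rintro ⟨i, χ, hχ⟩ ⟨j, ψ, hψ⟩ he
        have he : ∀ g : G, lin (l ^ (i : ℕ)) g * χ g = lin (l ^ (j : ℕ)) g * ψ g :=
          congrFun (congrArg Subtype.val he)
        have e1 := he 1
        have e2 := he v0
        have hv1 : ((v0 : G) : G ⧸ V) = 1 := (QuotientGroup.eq_one_iff v0).2 hv0
        rw [hv1] at e2
        obtain ⟨d, hd, hd0⟩ := irr_deg hχ.1
        have hχ0 : χ 1 ≠ 0 := by rw [hd]; exact_mod_cast hd0.ne'
        have hs : χ 1 = ψ 1 := by simpa [lin] using e1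
        have hij : (i : ℕ) = j := by
          rw [← hs] at e2
          have := mul_right_cancel₀ hχ0 e2
          apply hzp.pow_inj i.2 j.2
          simpa [lin, hz] using this
        have hij' : i = j := Fin.ext hij
        subst hij'
        congr 1
        apply Subtype.ext
        funext q
        obtain ⟨g, rfl⟩ := QuotientGroup.mk_surjective q
        exact mul_left_cancel₀ (Units.ne_zero _) (he g))
      rw [Nat.card_prod, Nat.card_fin] at hle
      exact hle
    have h3 : p * (IrrT (G ⧸ V) t).ncard < p * (2 * Nat.card (AA p (G ⧸ V))) := by
      calc _ ≤ _ := h2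
        _ < _ := h
        _ ≤ 2 * (p * Nat.card (AA p (G ⧸ V))) := by omega
        _ = _ := by ring
    exact Nat.lt_of_mul_lt_mul_left h3
end OddP

/-! ### The split case -/

namespace OddP
open Subgroup
variable {G : Type} [Group G] [Fintype G] {p a m t : ℕ}

/-- A `p`-group `Q` acting on a nontrivial abelian normal subgroup `V` of exponent `p` fixes a
nontrivial linear character of `V`; it is recorded as a function on `G` (zero off `V`). -/
theorem exists_fixed_char [hp : Fact p.Prime] {V Q : Subgroup G} (hV : V.Normal) (hab : ∀ x ∈ V, ∀ y ∈ V, x * y = y * x)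
    (hexp : ∀ x ∈ V, x ^ p = 1) (hne : V ≠ ⊥) (hQ : IsPGroup p Q) :
    ∃ l : G → ℂ, (∀ v ∈ V, ∀ w ∈ V, l (v * w) = l v * l w) ∧ l 1 = 1 ∧ (∀ v ∈ V, l v ^ p = 1) ∧
      (∃ v ∈ V, l v ≠ 1) ∧ ∀ q ∈ Q, ∀ v ∈ V, l (q * v * q⁻¹) = l v := by
  classical
  letI : CommGroup V := { (inferInstance : Group V) with
    mul_comm := fun x y => Subtype.ext (hab x x.2 y y.2) }
  letI : MulAction Q (V →* ℂˣ) :=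
    { smul := fun q l => l.comp (MulAut.conjNormal (q : G)⁻¹).toMonoidHom
      one_smul := fun l => by
        ext1 v
        change l (MulAut.conjNormal ((1 : Q) : G)⁻¹ v) = l v
        simp
      mul_smul := fun q q' l => by
        ext1 v
        change l (MulAut.conjNormal ((q * q' : Q) : G)⁻¹ v) =
          l (MulAut.conjNormal (q' : G)⁻¹ (MulAut.conjNormal (q : G)⁻¹ v))
        congr 1
        rw [← MulAut.mul_apply, ← map_mul, Subgroup.coe_mul, mul_inv_rev] }
  have hcard : p ∣ Nat.card (V →* ℂˣ) := by
    rw [CommGroup.card_monoidHom_of_hasEnoughRootsOfUnity]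
    obtain ⟨v, hv, hv1⟩ := (Subgroup.ne_bot_iff_exists_ne_one.1 hne) |>.elim fun v h => (⟨v.1, v.2, fun hc => h (Subtype.ext hc)⟩ : ∃ v, v ∈ V ∧ v ≠ 1)
    have : orderOf (⟨v, hv⟩ : V) = p := orderOf_eq_prime (Subtype.ext (hexp v hv)) (fun hc => hv1 (congrArg Subtype.val hc))
    rw [← this]
    exact orderOf_dvd_natCard _
  obtain ⟨l, hl, hl1⟩ := hQ.exists_fixed_point_of_prime_dvd_card_of_fixed_point (V →* ℂˣ) hcard (a := 1)
    (fun q => by ext1 v; rfl)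
  refine ⟨fun g => if h : g ∈ V then (l ⟨g, h⟩ : ℂ) else 0, ?_, ?_, ?_, ?_, ?_⟩
  · intro v hv w hw
    simp only [hv, hw, V.mul_mem hv hw, dite_true]
    rw [← Units.val_mul, ← map_mul]
    rfl
  · simp only [V.one_mem, dite_true]
    have : l ⟨1, V.one_mem⟩ = 1 := map_one l
    rw [this]; rfl
  · intro v hv
    simp only [hv, dite_true]
    rw [← Units.val_pow_eq_pow_val, ← map_pow]
    have : (⟨v, hv⟩ : V) ^ p = 1 := Subtype.ext (hexp v hv)
    rw [this, map_one]; rfl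
  · by_contra hc
    push Not at hc
    apply hl1
    ext v
    have := hc v v.2
    simp only [v.2, dite_true] at this
    simpa using this.symm
  · intro q hq v hv
    have hc : q * v * q⁻¹ ∈ V := hV.conj_mem v hv q
    simp only [hv, hc, dite_true]
    have := DFunLike.congr_fun (hl ⟨q⁻¹, Q.inv_mem hq⟩) ⟨v, hv⟩
    change l (MulAut.conjNormal (q⁻¹)⁻¹ ⟨v, hv⟩) = _ at this
    rw [← this]
    congr 2
    apply Subtype.ext
    simp

/-- If `G = V ⋊ R` with `V` a noncentral minimal normal abelian `p`-subgroup, then at least half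
of the characters in `IrrT G t` are nonlinear: tensoring a character induced from the stabilizer of a
linear character of `V` fixed by a Sylow `p`-subgroup with `AA p G` gives `|AA p G|` of them. -/
theorem split_case [hp : Fact p.Prime] (P : Par p a m t) (hN : Nat.card G ∣ p ^ a * m) {V R Q : Subgroup G} (hV : V.Normal)
    (hab : ∀ x ∈ V, ∀ y ∈ V, x * y = y * x) (hexp : ∀ x ∈ V, x ^ p = 1) (hne : V ≠ ⊥)
    (hmin : ∀ L : Subgroup G, L.Normal → L ≤ V → L = ⊥ ∨ L = V) (hVR : V ⊓ R = ⊥)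
    (hG : ∀ g, ∃ v ∈ V, v * g ∈ R) (hQ : IsSyl p Q ⊤) (hnc : ∃ v ∈ V, ∃ g, g * v * g⁻¹ ≠ v) :
    2 * Nat.card (AA p G) ≤ (IrrT G t).ncard := by
  classical
  obtain ⟨l, lmul, l1, lp, ⟨v1, hv1, lv1⟩, lQ⟩ := exists_fixed_char hV hab hexp hne hQ.pg
  have hker : ∀ L : Subgroup G, L.Normal → L ≤ V → (∀ v ∈ V, ∀ g, g * v * g⁻¹ * v⁻¹ ∈ L) → L = V := by
    intro L hL hLV hc
    rcases hmin L hL hLV with h | h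
    · obtain ⟨v, hv, g, hg⟩ := hnc
      have := hc v hv g
      rw [h, mem_bot, mul_inv_eq_one] at this
      exact absurd this hg
    · exact h
  have hG' : ∀ g, ∃ v, v ∈ V ∧ v⁻¹ * g ∈ R := fun g => by
    obtain ⟨v, hv, h⟩ := hG g
    exact ⟨v⁻¹, V.inv_mem hv, by rwa [inv_inv]⟩
  choose c cV cR using hG'
  have cu : ∀ g v, v ∈ V → v⁻¹ * g ∈ R → c g = v := by
    intro g v hv h
    have h0 : (c g)⁻¹ * v ∈ R := by
      have := R.mul_mem (cR g) (R.inv_mem h)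
      convert this using 1
      group
    have h1 : (c g)⁻¹ * v ∈ V ⊓ R := ⟨V.mul_mem (V.inv_mem (cV g)) hv, h0⟩
    rw [hVR, mem_bot, inv_mul_eq_one] at h1
    exact h1
  have cmul : ∀ g h, c (g * h) = c g * (g * c h * g⁻¹) := by
    intro g h
    have h1 := hV.conj_mem _ (cV h) g
    apply cu _ _ (V.mul_mem (cV g) h1)
    rw [hab _ (cV g) _ h1]
    have := R.mul_mem (cR g) (cR h)
    convert this using 1
    group
  have cv : ∀ v ∈ V, c v = v := fun v hv => cu v v hv (by simp [R.one_mem])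
  let T : Subgroup G :=
    { carrier := {g | ∀ v ∈ V, l (g * v * g⁻¹) = l v}
      one_mem' := fun v _ => by simp
      mul_mem' := by
        intro g h hg hh v hv
        have := hg _ (hV.conj_mem v hv h)
        rw [← hh v hv, ← this]
        congr 1; group
      inv_mem' := by
        intro g hg v hv
        have := hg _ (hV.conj_mem v hv g⁻¹)
        rw [← this]
        congr 1; group }
  have memT : ∀ g, g ∈ T ↔ ∀ v ∈ V, l (g * v * g⁻¹) = l v := fun g => Iff.rfl
  have VT : V ≤ T := fun x hx v hv => by rw [hab x hx v hv, mul_inv_cancel_right]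
  have QT : Q ≤ T := fun q hq v hv => lQ q hq v hv
  have Tne : T ≠ ⊤ := by
    intro hT
    have hT : ∀ g, ∀ v ∈ V, l (g * v * g⁻¹) = l v := fun g => (memT g).1 (hT ▸ mem_top g)
    let L : Subgroup G :=
      { carrier := {v | v ∈ V ∧ l v = 1}
        one_mem' := ⟨V.one_mem, l1⟩
        mul_mem' := fun hx hy => ⟨V.mul_mem hx.1 hy.1, by rw [lmul _ hx.1 _ hy.1, hx.2, hy.2, one_mul]⟩
        inv_mem' := by
          intro x hx
          refine ⟨V.inv_mem hx.1, ?_⟩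
          have := lmul _ (V.inv_mem hx.1) _ hx.1
          rw [inv_mul_cancel, l1, hx.2, mul_one] at this
          exact this.symm }
    have hL := hker L ⟨fun v hv g => ⟨hV.conj_mem v hv.1 g, by rw [hT g v hv.1, hv.2]⟩⟩ (fun v hv => hv.1) (by
      intro v hv g
      refine ⟨V.mul_mem (hV.conj_mem v hv g) (V.inv_mem hv), ?_⟩
      rw [lmul _ (hV.conj_mem v hv g) _ (V.inv_mem hv), hT g v hv, ← lmul _ hv _ (V.inv_mem hv), mul_inv_cancel, l1])
    have : v1 ∈ L := hL ▸ hv1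
    exact lv1 this.2
  have muV : ∀ mu ∈ AA p G, ∀ v ∈ V, mu v = 1 := by
    intro mu hmu v hv
    have := hker (mu.ker ⊓ V) inferInstance inf_le_right (by
      intro v hv g
      refine ⟨?_, V.mul_mem (hV.conj_mem v hv g) (V.inv_mem hv)⟩
      change mu _ = 1
      simp)
    rw [← this] at hv
    exact hv.1
  let F : (G →* ℂˣ) → G → ℂ := fun mu g => if g ∈ T then l (c g) * lin mu g else 0
  have Fin : ∀ mu g, g ∈ T → F mu g = l (c g) * lin mu g := fun mu g hg => if_pos hg
  have Fout : ∀ mu g, g ∉ T → F mu g = 0 := fun mu g hg => if_neg hg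
  have Flin : ∀ mu, IsLin T (F mu) := by
    intro mu
    refine ⟨Fout mu, ?_, ?_⟩
    · intro g hg h
      by_cases hh : h ∈ T
      · rw [Fin _ _ (T.mul_mem hg hh), Fin _ _ hg, Fin _ _ hh, cmul, lmul _ (cV g) _ (hV.conj_mem _ (cV h) g),
          (memT g).1 hg _ (cV h)]
        simp only [lin, map_mul, Units.val_mul]
        ring
      · rw [Fout _ h hh, Fout, mul_zero]
        rwa [T.mul_mem_cancel_left hg]
    · rw [Fin _ _ T.one_mem, cv 1 V.one_mem, l1]
      simp [lin]
  have FV : ∀ mu ∈ AA p G, ∀ v ∈ V, F mu v = l v := by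
    intro mu hmu v hv
    rw [Fin _ _ (VT hv), cv v hv, lin, muV mu hmu v hv]
    simp
  have hst : ∀ mu ∈ AA p G, ∀ x, (∀ n ∈ V, F mu (x * n * x⁻¹) = F mu n) → x ∈ T := by
    intro mu hmu x hx v hv
    have := hx v hv
    rwa [FV mu hmu _ hv, FV mu hmu _ (hV.conj_mem v hv x)] at this
  have hK : ∀ mu ∈ AA p G, ind T (F mu) ∈ IrrT G t := by
    intro mu hmu
    rw [irrT_eq P hN]
    refine ⟨ind_irr (Flin mu) hV VT (hst mu hmu), ind_mem fun g => ?_⟩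
    by_cases hg : g ∈ T
    · rw [Fin _ _ hg]
      exact (Qzeta p).mul_mem (root_mem_Qzeta (lp _ (cV g))) (root_mem_Qzeta (lin_root hmu g))
    · rw [Fout _ _ hg]; exact (Qzeta p).zero_mem
  have hinj : Function.Injective (fun mu : AA p G => ind T (F mu.1)) := by
    intro mu nu h
    have h1 := ind_inj (Flin mu) (Flin nu) hV VT (hst mu.1 mu.2) (fun n hn => by rw [FV _ mu.2 n hn, FV _ nu.2 n hn]) h
    apply Subtype.ext
    have h2 : mu.1 * nu.1⁻¹ = 1 := by
      refine AA_eq_one hQ ((AA p G).mul_mem mu.2 ((AA p G).inv_mem nu.2)) fun x hx => ?_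
      rw [MonoidHom.mul_apply, MonoidHom.inv_apply, mul_inv_eq_one]
      have h3 := congrFun h1 x
      rw [Fin _ _ (QT hx), Fin _ _ (QT hx)] at h3
      have h4 : l (c x) ≠ 0 := by
        intro h0
        have := lp _ (cV x)
        rw [h0, zero_pow hp.out.ne_zero] at this
        exact zero_ne_one this
      exact Units.ext (mul_left_cancel₀ h4 h3)
    ext1 g
    have := DFunLike.congr_fun h2 g
    rwa [MonoidHom.mul_apply, MonoidHom.inv_apply, MonoidHom.one_apply, mul_inv_eq_one] at this
  have := add_ncard_le P hN (S := Set.range (fun mu : AA p G => ind T (F mu.1))) (by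
    rintro _ ⟨mu, rfl⟩; exact hK mu.1 mu.2) (by
    rintro _ ⟨mu, rfl⟩
    change ind T (F mu.1) 1 ≠ 1
    rw [ind_one (Flin mu.1)]
    intro h1
    exact Tne (Subgroup.index_eq_one.1 (by exact_mod_cast h1)))
  have h2 : (Set.range (fun mu : AA p G => ind T (F mu.1))).ncard = Nat.card (AA p G) :=
    Nat.card_range_of_injective hinj
  omega
end OddP

/-! ### `p`-nilpotence when fewer than half of the characters are nonlinear -/

namespace OddP
open Subgroup
variable {p a m t : ℕ}

/-- The induction step when `G ⧸ V` has a normal `p`-complement, for a minimal normal abelian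
`p`-subgroup `V`. -/
theorem quot_step {G : Type} [Group G] [Fintype G] [hp : Fact p.Prime] (P : Par p a m t) (hN : Nat.card G ∣ p ^ a * m)
    {V Q : Subgroup G} [hV : V.Normal] (hab : ∀ x ∈ V, ∀ y ∈ V, x * y = y * x) (hpg : IsPGroup p V) (hne : V ≠ ⊥)
    (hmin : ∀ L : Subgroup G, L.Normal → L ≤ V → L = ⊥ ∨ L = V) (hQ : IsSyl p Q ⊤)
    (h : (IrrT G t).ncard < 2 * Nat.card (AA p G)) (hq : HasNormalPComplement (G ⧸ V) p) :
    HasNormalPComplement G p := by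
  classical
  have hexp : ∀ x ∈ V, x ^ p = 1 := by
    let L : Subgroup G :=
      { carrier := {v | v ∈ V ∧ v ^ p = 1}
        one_mem' := ⟨V.one_mem, one_pow p⟩
        mul_mem' := fun {x y} hx hy => ⟨V.mul_mem hx.1 hy.1, by
          rw [(show Commute x y from hab x hx.1 y hy.1).mul_pow, hx.2, hy.2, one_mul]⟩
        inv_mem' := fun {x} hx => ⟨V.inv_mem hx.1, by rw [inv_pow, hx.2, inv_one]⟩ }
    have hL : L = V := by
      rcases hmin L ⟨fun v hv g => ⟨hV.conj_mem v hv.1 g, by rw [conj_pow, hv.2]; group⟩⟩ (fun v hv => hv.1) with h1 | h1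
      · exfalso
        haveI : Nontrivial V := (Subgroup.nontrivial_iff_ne_bot V).2 hne
        obtain ⟨n, hn, hc⟩ := hpg.nontrivial_iff_card.1 inferInstance
        obtain ⟨x, hx⟩ := exists_prime_orderOf_dvd_card' (G := V) p (hc ▸ dvd_pow_self p hn.ne')
        have h2 : (x : G) ∈ L := ⟨x.2, by
          have := pow_orderOf_eq_one x
          rw [hx] at this
          exact congrArg Subtype.val this⟩
        rw [h1, mem_bot] at h2
        have h3 : x = 1 := Subtype.ext h2
        rw [h3, orderOf_one] at hx
        exact hp.out.one_lt.ne hx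
      · exact h1
    intro x hx
    rw [← hL] at hx
    exact hx.2
  obtain ⟨N', hN', hcop, n, hn⟩ := hq
  let M : Subgroup G := N'.comap (QuotientGroup.mk' V)
  have hVM : V ≤ M := by
    intro v hv
    change ((v : G) : G ⧸ V) ∈ N'
    rw [(QuotientGroup.eq_one_iff v).2 hv]
    exact N'.one_mem
  haveI hMn : M.Normal := hN'.comap _
  obtain ⟨k, hk⟩ := hpg.exists_card_eq
  have hMc : Nat.card M = Nat.card V * Nat.card N' := by
    have h1 : M.index = N'.index := Subgroup.index_comap_of_surjective _ (QuotientGroup.mk'_surjective V)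
    have h2 := M.card_mul_index
    have h3 := N'.card_mul_index
    have h4 := V.card_mul_index
    have h5 : V.index = Nat.card (G ⧸ V) := rfl
    rw [h5, ← h3, ← h2, h1, ← mul_assoc] at h4
    exact (Nat.eq_of_mul_eq_mul_right (Nat.pos_of_ne_zero Subgroup.index_ne_zero_of_finite) h4).symm
  have hV'c : Nat.card (V.subgroupOf M) = Nat.card V :=
    Nat.card_congr (Subgroup.subgroupOfEquivOfLe hVM).toEquiv
  have hV'i : (V.subgroupOf M).index = Nat.card N' := by
    have := (V.subgroupOf M).card_mul_index
    rw [hV'c, hMc] at this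
    exact Nat.eq_of_mul_eq_mul_left Nat.card_pos this
  have hcVN : (Nat.card V).Coprime (Nat.card N') := by
    rw [hk]; exact (hcop.symm).pow_left k
  obtain ⟨K', hK'⟩ := Subgroup.exists_right_complement'_of_coprime (N := V.subgroupOf M) (by rw [hV'c, hV'i]; exact hcVN)
  let K : Subgroup G := K'.map M.subtype
  have hKc : Nat.card K = Nat.card N' := by
    have h1 : Nat.card K = Nat.card K' := Subgroup.card_map_of_injective M.subtype_injective
    have h2 := hK'.card_mul
    rw [hV'c, hMc] at h2
    rw [h1]
    exact Nat.eq_of_mul_eq_mul_left Nat.card_pos h2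
  have hM : ∀ g, ∀ x ∈ K, ∃ v ∈ V, ∃ k' ∈ K, g * x * g⁻¹ = v * k' := by
    rintro g _ ⟨x, hx, rfl⟩
    obtain ⟨⟨v, k'⟩, hvk⟩ := hK'.2 ⟨g * (x : G) * g⁻¹, hMn.conj_mem x x.2 g⟩
    refine ⟨v.1, mem_subgroupOf.1 v.2, k'.1, ⟨k'.1, k'.2, rfl⟩, ?_⟩
    exact (congrArg Subtype.val hvk).symm
  have hfr := frattini_compl hV hab (by rw [hKc]; exact hcVN) hM
  by_cases hKn : nrm K = ⊤
  · have hKn : K.Normal := nrm_eq_top.1 hKn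
    refine ⟨K, hKn, by rw [hKc]; exact hcop, k + n, ?_⟩
    have h1 := K.card_mul_index
    have h2 := V.card_mul_index
    have h3 := N'.card_mul_index
    have h5 : V.index = Nat.card (G ⧸ V) := rfl
    rw [h5, ← h3, ← h1, hn, hk, hKc] at h2
    rw [pow_add]
    apply Nat.eq_of_mul_eq_mul_left (Nat.card_pos (α := N'))
    rw [← h2]; ring
  · exfalso
    have hnot : ¬ V ≤ nrm K := by
      intro hle
      apply hKn
      rw [eq_top_iff]
      intro g _
      obtain ⟨v, hv, hvg⟩ := hfr g
      have := (nrm K).mul_mem ((nrm K).inv_mem (hle hv)) hvg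
      rwa [inv_mul_cancel_left] at this
    have hVR : V ⊓ nrm K = ⊥ := by
      rcases hmin (V ⊓ nrm K) ⟨by
        intro x hx g
        obtain ⟨v, hv, hvg⟩ := hfr g
        have e : g * x * g⁻¹ = (v * g) * x * (v * g)⁻¹ := by
          have h1 : v * (g * x * g⁻¹) = (g * x * g⁻¹) * v := hab v hv _ (hV.conj_mem x hx.1 g)
          calc g * x * g⁻¹ = v * (g * x * g⁻¹) * v⁻¹ := by rw [h1]; group
            _ = _ := by group
        rw [e]
        exact ⟨hV.conj_mem x hx.1 _, (nrm K).mul_mem ((nrm K).mul_mem hvg hx.2) ((nrm K).inv_mem hvg)⟩⟩ inf_le_left with h1 | h1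
      · exact h1
      · exact absurd (inf_eq_left.1 h1) hnot
    have hnc : ∃ v ∈ V, ∃ g, g * v * g⁻¹ ≠ v := by
      by_contra hc
      push Not at hc
      apply hnot
      intro v hv
      apply mem_nrm_of_le
      rw [cj_le_iff]
      intro x hx
      have := hc v hv x
      rw [show v * x * v⁻¹ = x by rw [mul_inv_eq_iff_eq_mul] at this ⊢; exact this.symm]
      exact hx
    have := split_case P hN hV hab hexp hne hmin hVR hfr hQ hnc
    omega

/-- If fewer than half of the characters in `IrrT G t` are nonlinear, then `G` is `p`-nilpotent. -/
theorem claim [hp : Fact p.Prime] (P : Par p a m t) : ∀ (n : ℕ) (G : Type) [Group G] [Fintype G], Nat.card G = n →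
    Nat.card G ∣ p ^ a * m → (IrrT G t).ncard < 2 * Nat.card (AA p G) → HasNormalPComplement G p := by
  intro n
  induction n using Nat.strong_induction_on with
  | _ n ih =>
  intro G _ _ hn hN h
  classical
  have hodd : Odd (Nat.card G) := Odd.of_dvd_nat P.odd hN
  obtain ⟨Q, -, hQ⟩ := exists_syl (p := p) (bot_le : (⊥ : Subgroup G) ≤ ⊤) IsPGroup.of_bot
  have hF : FF p G := fusion_theorem P.ho _ G rfl hodd
  by_cases hQb : Q = ⊥
  · refine ⟨⊤, inferInstance, ?_, 0, by simp⟩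
    have h1 := hQ.not_dvd
    rw [hQb, Subgroup.relIndex_top_right, Subgroup.index_bot] at h1
    rw [Subgroup.card_top]
    exact ((Nat.Prime.coprime_iff_not_dvd hp.out).2 h1).symm
  have hWne := W_ne_bot hQ.pg hQb
  by_cases hH : nrm (W Q) = ⊤
  · have hWn : (W Q).Normal := nrm_eq_top.1 hH
    obtain ⟨V, ⟨hV, hVne, hVW⟩, hVm⟩ := (Set.toFinite {L : Subgroup G | L.Normal ∧ L ≠ ⊥ ∧ L ≤ W Q}).exists_minimal
      ⟨W Q, hWn, hWne, le_rfl⟩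
    have hmin : ∀ L : Subgroup G, L.Normal → L ≤ V → L = ⊥ ∨ L = V := by
      intro L hL hLV
      by_cases hb : L = ⊥
      · exact Or.inl hb
      · exact Or.inr (le_antisymm hLV (hVm ⟨hL, hb, hLV.trans hVW⟩ hLV))
    have hab : ∀ x ∈ V, ∀ y ∈ V, x * y = y * x := fun x hx y hy => W_ab Q x (hVW hx) y (hVW hy)
    have hpg : IsPGroup p V := hQ.pg.to_le (hVW.trans (W_le Q))
    have hdv : Nat.card (G ⧸ V) ∣ Nat.card G := Subgroup.card_quotient_dvd_card V
    have hlt : Nat.card (G ⧸ V) < Nat.card G := by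
      have h1 := V.card_mul_index
      have h2 : 1 < Nat.card V := (Subgroup.one_lt_card_iff_ne_bot V).2 hVne
      have h3 : V.index = Nat.card (G ⧸ V) := rfl
      have h4 : 0 < Nat.card (G ⧸ V) := Nat.card_pos
      rw [h3] at h1
      nlinarith
    exact quot_step P hN hab hpg hVne hmin hQ h
      (ih _ (hn ▸ hlt) (G ⧸ V) rfl (hdv.trans hN) (quot_hyp P hN hmin h))
  · apply pnil_of_nrm hF hQ
    have hlt : Nat.card (nrm (W Q)) < Nat.card G := by
      have := card_lt (lt_top_iff_ne_top.2 hH)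
      rwa [Subgroup.card_top] at this
    have hdv : Nat.card (nrm (W Q)) ∣ Nat.card G := Subgroup.card_subgroup_dvd_card _
    refine ih _ (hn ▸ hlt) (nrm (W Q)) rfl (hdv.trans hN) ?_
    have h1 := ClT_le P hN hQ hF
    have h2 := AA_card_le (p := p) hQ ((le_nrm Q).trans (nrm_le_nrm_W Q))
    have h3 := count_T (G := G) (Nat.Coprime.coprime_dvd_right hN P.coprime)
    have h4 := count_T (G := nrm (W Q)) (Nat.Coprime.coprime_dvd_right (hdv.trans hN) P.coprime)
    omega
end OddP

/-! ### Traces of `3 × 3` matrices of finite order -/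

namespace OddP
open Subgroup

/-- The Cayley–Hamilton theorem for `3 × 3` matrices, in terms of traces. -/
theorem ch3 (A : Matrix (Fin 3) (Fin 3) ℂ) :
    A ^ 3 = A.trace • A ^ 2 - ((A.trace ^ 2 - (A ^ 2).trace) / 2) • A + A.det • 1 := by
  ext i j
  fin_cases i <;> fin_cases j <;>
  · simp [pow_succ, Matrix.mul_apply, Fin.sum_univ_three, Matrix.trace_fin_three, Matrix.det_fin_three, Matrix.one_apply]
    ring

/-- An idempotent `E` commuting with an invertible `X` vanishes if `E X`, `E X²`, `E X³` have trace
zero: `E X` is then nilpotent. -/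
theorem idem_zero {E X Y : Matrix (Fin 3) (Fin 3) ℂ} (hE : E * E = E) (hc : Commute E X) (hY : X * Y = 1)
    (h1 : (E * X).trace = 0) (h2 : (E * X ^ 2).trace = 0) (h3 : (E * X ^ 3).trace = 0) : E = 0 := by
  have e2 : (E * X) ^ 2 = E * X ^ 2 := by rw [hc.mul_pow, pow_two E, hE]
  have e3 : (E * X) ^ 3 = E * X ^ 3 := by rw [hc.mul_pow, pow_succ E, pow_two E, hE, hE]
  have h := ch3 (E * X)
  rw [e2, e3, h1, h2] at h
  simp only [zero_smul, zero_pow two_ne_zero, sub_zero, zero_div, zero_add] at h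
  have hd : (E * X).det = 0 := by
    have := congrArg Matrix.trace h
    rw [h3, Matrix.trace_smul, Matrix.trace_one, Fintype.card_fin, smul_eq_mul] at this
    simpa using this.symm
  rw [hd, zero_smul] at h
  have hYX : Y * X = 1 := mul_eq_one_comm.1 hY
  have h4 : X ^ 3 * Y ^ 3 = 1 := by
    have hcm : Commute X Y := by rw [Commute, SemiconjBy, hY, hYX]
    rw [← hcm.mul_pow, hY, one_pow]
  calc E = E * X ^ 3 * Y ^ 3 := by rw [mul_assoc, h4, mul_one]
    _ = 0 := by rw [h, zero_mul]

/-- If `B` has finite order and commutes with the invertible `X`, and multiplying `X`, `X²`, `X³` by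
powers of `B` does not change traces, then `B = 1`. -/
theorem eq_one_of_traces {X Y B : Matrix (Fin 3) (Fin 3) ℂ} {n : ℕ} (hn : 0 < n) (hB : B ^ n = 1)
    (hc : Commute X B) (hY : X * Y = 1)
    (h : ∀ i, 0 < i → i ≤ 3 → ∀ l, (X ^ i * B ^ l).trace = (X ^ i).trace) : B = 1 := by
  have hn0 : (n : ℂ) ≠ 0 := by exact_mod_cast hn.ne'
  set F : Matrix (Fin 3) (Fin 3) ℂ := (n : ℂ)⁻¹ • ∑ l ∈ Finset.range n, B ^ l with hF
  have hBF : B * F = F := by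
    have h1 := mul_geom_sum B n
    rw [hB, sub_self, sub_mul, one_mul, sub_eq_zero] at h1
    rw [hF, mul_smul_comm, h1]
  have hpF : ∀ l : ℕ, B ^ l * F = F := by
    intro l
    induction l with
    | zero => simp
    | succ l ih => rw [pow_succ, mul_assoc, hBF, ih]
  have hFF : F * F = F := by
    nth_rewrite 1 [hF]
    rw [smul_mul_assoc, Finset.sum_mul, Finset.sum_congr rfl fun l _ => hpF l, Finset.sum_const, Finset.card_range,
      ← Nat.cast_smul_eq_nsmul ℂ, smul_smul, inv_mul_cancel₀ hn0, one_smul]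
  have hXF : Commute X F := by
    rw [hF]
    exact (Commute.sum_right _ _ _ fun l _ => hc.pow_right l).smul_right _
  have htr : ∀ i, 0 < i → i ≤ 3 → ((1 - F) * X ^ i).trace = 0 := by
    intro i h0 h3
    rw [sub_mul, one_mul, Matrix.trace_sub, sub_eq_zero, ← (hXF.pow_left i).eq, hF, mul_smul_comm, Finset.mul_sum,
      Matrix.trace_smul, Matrix.trace_sum, Finset.sum_congr rfl fun l _ => h i h0 h3 l, Finset.sum_const,
      Finset.card_range, nsmul_eq_mul, smul_eq_mul, ← mul_assoc, inv_mul_cancel₀ hn0, one_mul]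
  have h0 : 1 - F = 0 := by
    refine idem_zero (X := X) (Y := Y) ?_ ((Commute.one_left X).sub_left hXF.symm) hY ?_ (htr 2 (by norm_num) (by norm_num)) (htr 3 (by norm_num) le_rfl)
    · rw [mul_sub, sub_mul, sub_mul, hFF]; simp
    · simpa using htr 1 (by norm_num) (by norm_num)
  have hF1 : F = 1 := (sub_eq_zero.1 h0).symm
  rw [hF1, mul_one] at hBF
  exact hBF

theorem unip {A : Matrix (Fin 3) (Fin 3) ℂ} {n : ℕ} (hn : 0 < n) (hA : A ^ n = 1) (h : (A - 1) ^ 3 = 0) : A = 1 := by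
  have hn0 : (n : ℂ) ≠ 0 := by exact_mod_cast hn.ne'
  have hg : (∑ i ∈ Finset.range n, A ^ i) * (A - 1) = 0 := by rw [geom_sum_mul, hA, sub_self]
  have key : ∀ M : Matrix (Fin 3) (Fin 3) ℂ, (A - 1) * M = 0 → (∑ i ∈ Finset.range n, A ^ i) * M = 0 → M = 0 := by
    intro M h1 h2
    have h3 : A * M = M := by rwa [sub_mul, one_mul, sub_eq_zero] at h1
    have h4 : ∀ l : ℕ, A ^ l * M = M := by
      intro l
      induction l with
      | zero => simp
      | succ l ih => rw [pow_succ, mul_assoc, h3, ih]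
    rw [Finset.sum_mul, Finset.sum_congr rfl fun l _ => h4 l, Finset.sum_const, Finset.card_range,
      ← Nat.cast_smul_eq_nsmul ℂ] at h2
    exact (smul_eq_zero.1 h2).resolve_left hn0
  have h2 : (A - 1) ^ 2 = 0 := key _ (by rw [← pow_succ', h]) (by rw [pow_two, ← mul_assoc, hg, zero_mul])
  exact sub_eq_zero.1 (key _ (by rw [← pow_two, h2]) hg)

/-- A finite-order `3 × 3` matrix whose square, fourth power and inverse have the same trace as the
matrix itself is the identity or has trace zero. -/
theorem trace_zero_or_one {A Y : Matrix (Fin 3) (Fin 3) ℂ} {n : ℕ} (hn : 0 < n) (hA : A ^ n = 1) (hY : A * Y = 1)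
    (h2 : (A ^ 2).trace = A.trace) (h4 : (A ^ 4).trace = A.trace) (hi : Y.trace = A.trace) : A.trace = 0 ∨ A = 1 := by
  by_cases h0 : A.trace = 0
  · exact Or.inl h0
  right
  have h := ch3 A
  set t := A.trace with ht
  set δ := A.det with hδ
  rw [h2] at h
  have hδn : δ ^ n = 1 := by rw [hδ, ← Matrix.det_pow, hA, Matrix.det_one]
  have hδ1 : ‖δ‖ = 1 := Complex.norm_eq_one_of_pow_eq_one hδn hn.ne'
  have e1 : A ^ 2 = t • A - ((t ^ 2 - t) / 2) • (1 : Matrix (Fin 3) (Fin 3) ℂ) + δ • Y := by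
    have := congrArg (· * Y) h
    simp only [add_mul, sub_mul, smul_mul_assoc, one_mul, hY] at this
    rw [pow_succ, mul_assoc, hY, mul_one, pow_two, mul_assoc, hY, mul_one] at this
    rw [pow_two]; exact this
  have e2 : A ^ 4 = t • A ^ 3 - ((t ^ 2 - t) / 2) • A ^ 2 + δ • A := by
    have := congrArg (· * A) h
    simp only [add_mul, sub_mul, smul_mul_assoc, one_mul, ← pow_succ] at this
    rw [pow_two A]; exact this
  have t1 := congrArg Matrix.trace e1
  have t2 := congrArg Matrix.trace e2
  have t3 := congrArg Matrix.trace h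
  simp only [Matrix.trace_add, Matrix.trace_sub, Matrix.trace_smul, Matrix.trace_one, Fintype.card_fin, smul_eq_mul,
    h2, h4, hi, ← ht] at t1 t2 t3
  push_cast at t1 t3
  have d1 : δ = (t - 1) / 2 := by
    apply mul_right_cancel₀ h0
    linear_combination -t1
  rw [t3, d1] at t2
  have d2 : t * ((t - 1) * (t - 3) * (t + 2)) = 0 := by linear_combination 2 * t2
  rcases mul_eq_zero.1 ((mul_eq_zero.1 d2).resolve_left h0) with d3 | d3
  · rcases mul_eq_zero.1 d3 with d4 | d4
    · rw [d1, d4] at hδ1; simp at hδ1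
    · have ht3 : t = 3 := by linear_combination d4
      apply unip hn hA
      have hd : δ = 1 := by rw [d1, ht3]; norm_num
      rw [ht3, hd] at h
      have : (A - 1) ^ 3 = A ^ 3 - (3 : ℂ) • A ^ 2 + (3 : ℂ) • A - 1 := by
        have e3 : (3 : ℂ) • A ^ 2 = A ^ 2 + A ^ 2 + A ^ 2 := by
          rw [show (3 : ℂ) = 1 + 1 + 1 by norm_num, add_smul, add_smul, one_smul]
        have e4 : (3 : ℂ) • A = A + A + A := by
          rw [show (3 : ℂ) = 1 + 1 + 1 by norm_num, add_smul, add_smul, one_smul]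
        rw [e3, e4]
        noncomm_ring
      rw [this, h, show ((3 : ℂ) ^ 2 - 3) / 2 = 3 by norm_num, one_smul]
      abel
  · have ht3 : t = -2 := by linear_combination d3
    rw [d1, ht3] at hδ1
    norm_num at hδ1
end OddP

/-! ### Schur's lemma, Galois invariance and linear constituents -/

namespace OddP
open Subgroup

section Schur
open CategoryTheory

theorem schur {G : Type} [Group G] (V : FDRep ℂ G) [Simple V] (f : V →ₗ[ℂ] V)
    (hf : ∀ g, V.ρ g ∘ₗ f = f ∘ₗ V.ρ g) : ∃ c : ℂ, f = c • LinearMap.id := by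
  let F : V ⟶ V :=
    { hom := ConcreteCategory.ofHom f
      comm := fun g => by
        ext x
        exact (DFunLike.congr_fun (hf g) x).symm }
  obtain ⟨c, hc⟩ := endomorphism_simple_eq_smul_id ℂ F
  refine ⟨c, ?_⟩
  have h1 : F.hom = c • 𝟙 _ := by rw [← hc]; rfl
  ext x
  have := congrArg (fun φ : V.V ⟶ V.V => φ x) h1
  exact this

/-- A matrix representation affording `χ ∈ Irr G`, together with Schur's lemma for it. -/
theorem exists_matrix_schur {G : Type} [Group G] {χ : G → ℂ} (h : χ ∈ Irr G) :
    ∃ d : ℕ, ∃ ρ : G →* Matrix (Fin d) (Fin d) ℂ, (∀ g, χ g = (ρ g).trace) ∧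
      ∀ E, (∀ g, ρ g * E = E * ρ g) → ∃ c : ℂ, E = c • 1 := by
  obtain ⟨V, hV, rfl⟩ := h
  let b := Module.finBasis ℂ V
  let Φ := LinearMap.toMatrixAlgEquiv b
  refine ⟨_, Φ.toAlgHom.toRingHom.toMonoidHom.comp V.ρ, fun g => ?_, fun E hE => ?_⟩
  · exact LinearMap.trace_eq_matrix_trace ℂ b (V.ρ g)
  · obtain ⟨c, hc⟩ := schur V (Φ.symm E) (fun g => by
      apply Φ.injective
      have h1 := hE g
      change Φ (V.ρ g * Φ.symm E) = Φ (Φ.symm E * V.ρ g)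
      rw [map_mul, map_mul, AlgEquiv.apply_symm_apply]
      exact h1)
    refine ⟨c, ?_⟩
    have h2 := congrArg Φ hc
    rw [AlgEquiv.apply_symm_apply, map_smul] at h2
    rw [h2]
    congr 1
    exact map_one Φ
end Schur

variable {G : Type} [Group G] [Fintype G] {p a m t : ℕ}

theorem irr_inv {χ : G → ℂ} (h : χ ∈ Irr G) (g : G) : χ g⁻¹ = starRingEnd ℂ (χ g) := by
  have h0 : 0 < Nat.card G := Nat.card_pos
  have hζ := Complex.isPrimitiveRoot_exp _ h0.ne'
  set ζ := Complex.exp (2 * Real.pi * Complex.I / (Nat.card G : ℕ)) with hz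
  have h1 : ζ ^ Nat.card G = 1 := hζ.pow_eq_one
  have h2 : starRingEnd ℂ ζ = ζ ^ (Nat.card G - 1) := by
    have h3 : ‖ζ‖ = 1 := Complex.norm_eq_one_of_pow_eq_one h1 h0.ne'
    have h4 : starRingEnd ℂ ζ = ζ⁻¹ := by
      rw [Complex.inv_def, Complex.normSq_eq_norm_sq, h3]; simp
    rw [h4]
    have h5 : ζ ^ (Nat.card G - 1) * ζ = 1 := by rw [← pow_succ, Nat.sub_add_cancel h0, h1]
    exact (eq_inv_of_mul_eq_one_left h5).symm
  rw [sigma_char dvd_rfl h0 hζ h (starRingEnd ℂ) h2]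
  congr 1
  have : g ^ (Nat.card G - 1) * g = 1 := by rw [← pow_succ, Nat.sub_add_cancel h0, pow_card_eq_one']
  exact (eq_inv_of_mul_eq_one_left this).symm

/-- Galois invariance on `p`-elements. -/
theorem irrK_pel (P : Par p a m t) (hN : Nat.card G ∣ p ^ a * m) {χ : G → ℂ} (hχ : χ ∈ IrrK G (Qzeta p)) {g : G}
    (hg : g ^ p ^ a = 1) {s : ℕ} (hs : s ≡ 1 [MOD p]) : χ (g ^ s) = χ g := by
  obtain ⟨s', h1, h2⟩ := Nat.chineseRemainder (P.hc.pow_left a) s 1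
  have h3 : s' ≡ 1 [MOD p] := (h1.of_dvd (dvd_pow_self p P.ha.ne')).trans hs
  rw [← irrK_pow hN P.pos (P.p_dvd) (s := s') ?_ h3 hχ g]
  · congr 1
    exact pow_congr_mod hg h1.symm
  · apply Nat.Coprime.mul_right
    · apply Nat.Coprime.pow_right
      rw [Nat.coprime_iff_gcd_eq_one, Nat.ModEq.gcd_eq h3]
      simp
    · rw [Nat.coprime_iff_gcd_eq_one, Nat.ModEq.gcd_eq h2]
      simp

/-- Galois invariance on `p'`-elements. -/
theorem irrK_p'el (P : Par p a m t) (hN : Nat.card G ∣ p ^ a * m) {χ : G → ℂ} (hχ : χ ∈ IrrK G (Qzeta p)) {g : G}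
    (hg : g ^ m = 1) {s : ℕ} (hs : s.Coprime m) : χ (g ^ s) = χ g := by
  obtain ⟨s', h1, h2⟩ := Nat.chineseRemainder (P.hc.pow_left a) 1 s
  have h3 : s' ≡ 1 [MOD p] := h1.of_dvd (dvd_pow_self p P.ha.ne')
  rw [← irrK_pow hN P.pos (P.p_dvd) (s := s') ?_ h3 hχ g]
  · congr 1
    exact pow_congr_mod hg h2.symm
  · apply Nat.Coprime.mul_right
    · apply Nat.Coprime.pow_right
      rw [Nat.coprime_iff_gcd_eq_one, Nat.ModEq.gcd_eq h3]
      simp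
    · rw [Nat.coprime_iff_gcd_eq_one, Nat.ModEq.gcd_eq h2]
      exact hs

/-- The restriction of `χ` to an abelian subgroup has a linear constituent. -/
theorem exists_constituent {S : Subgroup G} (hab : ∀ x ∈ S, ∀ y ∈ S, x * y = y * x) {χ : G → ℂ} (h1 : χ 1 ≠ 0) [Fintype S] :
    ∃ l : S →* ℂˣ, ∑ s : S, ((l s⁻¹ : ℂˣ) : ℂ) * χ s ≠ 0 := by
  classical
  by_contra hc
  push Not at hc
  letI : CommGroup S := { (inferInstance : Group S) with
    mul_comm := fun x y => Subtype.ext (hab x x.2 y y.2) }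
  letI : Fintype (S →* ℂˣ) := Fintype.ofFinite _
  have hz : ∀ s : S, s ≠ 1 → ∑ l : S →* ℂˣ, ((l s : ℂˣ) : ℂ) = 0 := by
    intro s hs
    obtain ⟨l0, h0⟩ := CommGroup.exists_apply_ne_one_of_hasEnoughRootsOfUnity S ℂ hs
    have h2 : ((l0 s : ℂˣ) : ℂ) * ∑ l : S →* ℂˣ, ((l s : ℂˣ) : ℂ) = ∑ l : S →* ℂˣ, ((l s : ℂˣ) : ℂ) := by
      rw [Finset.mul_sum]
      refine Fintype.sum_equiv (Equiv.mulLeft l0) _ _ fun l => ?_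
      simp
    have h3 : ((l0 s : ℂˣ) : ℂ) - 1 ≠ 0 := fun h => h0 (Units.ext (sub_eq_zero.1 h))
    apply (mul_eq_zero.1 (_ : (((l0 s : ℂˣ) : ℂ) - 1) * _ = 0)).resolve_left h3
    rw [sub_mul, one_mul, h2, sub_self]
  have h2 : ∑ l : S →* ℂˣ, ∑ s : S, ((l s⁻¹ : ℂˣ) : ℂ) * χ s = 0 := Finset.sum_eq_zero fun l _ => hc l
  rw [Finset.sum_comm, Finset.sum_eq_single (1 : S)] at h2
  · simp only [inv_one, map_one, Units.val_one, one_mul, OneMemClass.coe_one, Finset.sum_const, nsmul_eq_mul] at h2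
    rcases mul_eq_zero.1 h2 with h3 | h3
    · exact (Nat.cast_ne_zero.2 (Fintype.card_ne_zero)) h3
    · exact h1 h3
  · intro s _ hs
    rw [← Finset.sum_mul, hz s⁻¹ (inv_ne_one.2 hs), zero_mul]
  · intro h; exact absurd (Finset.mem_univ _) h
end OddP

/-! ### Groups with a faithful `ℚ(ζ_p)`-valued character of degree `3` -/

namespace OddP
open Subgroup

variable {G : Type} [Group G] [Fintype G] {p a m t : ℕ} {χ : G → ℂ} {ρ : G →* Matrix (Fin 3) (Fin 3) ℂ}

theorem exists_inv_mod (hp : p.Prime) (h5 : 5 ≤ p) {i : ℕ} (h0 : 0 < i) (h3 : i ≤ 3) (a : ℕ) :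
    ∃ j, i * j ≡ 1 [MOD p ^ a] := by
  have hc : i.Coprime (p ^ a) := by
    apply Nat.Coprime.pow_right
    exact (Nat.coprime_of_lt_prime h0.ne' (by omega) hp).symm
  obtain ⟨j, _, hj⟩ := Nat.exists_mul_mod_eq_of_coprime 1 hc (pow_pos hp.pos _).ne'
  exact ⟨j, hj⟩

/-- The `p`-elements have order dividing `p`: multiplying `g`, `g²`, `g³` by the powers of `g ^ p` does not change
the traces. -/
theorem faithful_pel (P : Par p a m t) (hN : Nat.card G ∣ p ^ a * m) (h5 : 5 ≤ p) (hχ : χ ∈ IrrK G (Qzeta p))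
    (hρ : ∀ g, χ g = (ρ g).trace) (hinj : ∀ g, ρ g = 1 → g = 1) {g : G} (hg : g ^ p ^ a = 1) : g ^ p = 1 := by
  apply hinj
  apply eq_one_of_traces (X := ρ g) (Y := ρ g⁻¹) (n := p ^ a) (pow_pos P.hp.pos _)
  · rw [← map_pow, ← pow_mul, mul_comm, pow_mul, hg, one_pow, map_one]
  · rw [map_pow]; exact Commute.self_pow _ _
  · rw [← map_mul, mul_inv_cancel, map_one]
  · intro i hi hi3 l
    rw [← map_pow, ← map_pow, ← map_mul, ← hρ, ← hρ]
    obtain ⟨j, hj⟩ := exists_inv_mod P.hp h5 hi hi3 a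
    rw [← irrK_pel P hN hχ (g := g ^ i) (s := 1 + p * (l * j))]
    · congr 1
      rw [← pow_mul, ← pow_mul, ← pow_add]
      apply pow_congr_mod hg
      have : i * (1 + p * (l * j)) = i + p * l * (i * j) := by ring
      rw [this]
      simpa using (Nat.ModEq.mul_left (p * l) hj.symm).add_left i
    · rw [← pow_mul, mul_comm, pow_mul, hg, one_pow]
    · simp [Nat.ModEq]

/-- `χ` vanishes at the nontrivial `p'`-elements: it takes the same value at `g`, `g²`, `g⁴` and `g⁻¹`, so that
`trace_zero_or_one` applies. -/
theorem faithful_p' (P : Par p a m t) (hN : Nat.card G ∣ p ^ a * m) (hχ : χ ∈ IrrK G (Qzeta p))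
    (hρ : ∀ g, χ g = (ρ g).trace) (hinj : ∀ g, ρ g = 1 → g = 1) {g : G} (hg : g ^ m = 1) : χ g = 0 ∨ g = 1 := by
  have h2 : Nat.Coprime 2 m := Nat.coprime_two_left.2 P.hm
  suffices h : (ρ g).trace = 0 ∨ ρ g = 1 by
    rcases h with h | h
    · left; rw [hρ, h]
    · right; exact hinj g h
  apply trace_zero_or_one (A := ρ g) (Y := ρ g⁻¹) (n := m) P.hm.pos
  · rw [← map_pow, hg, map_one]
  · rw [← map_mul, mul_inv_cancel, map_one]
  · rw [← map_pow, ← hρ, ← hρ, irrK_p'el P hN hχ hg h2]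
  · rw [← map_pow, ← hρ, ← hρ, irrK_p'el P hN hχ hg (Nat.Coprime.pow_left 2 h2)]
  · rw [← hρ, ← hρ]
    have h3 : g⁻¹ = g ^ (m - 1) := by
      apply inv_eq_of_mul_eq_one_right
      rw [← pow_succ', Nat.sub_add_cancel P.hm.pos, hg]
    rw [h3, irrK_p'el P hN hχ hg]
    have h4 := P.hm.pos
    have := (Nat.coprime_self_sub_left (m := 1) (n := m) h4).2 (by simp)
    exact this

/-- A `p'`-subgroup has order dividing `3`: averaging over it gives an idempotent of trace `3 / |R|`. -/
theorem faithful_p'_card (P : Par p a m t) (hN : Nat.card G ∣ p ^ a * m) (hχ : χ ∈ IrrK G (Qzeta p))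
    (hρ : ∀ g, χ g = (ρ g).trace) (hinj : ∀ g, ρ g = 1 → g = 1) (R : Subgroup G) (hR : ∀ r ∈ R, r ^ m = 1) :
    Nat.card R ∣ 3 := by
  classical
  have hc : (Nat.card R : ℂ) ≠ 0 := card_ne R
  obtain ⟨k, hk⟩ := trace_idem ((Nat.card R : ℂ)⁻¹ • ∑ r : R, ρ r) (by
    rw [smul_mul_smul_comm, Finset.sum_mul_sum]
    have h1 : ∀ r : R, ∑ s : R, ρ r * ρ s = ∑ s : R, ρ s := by
      intro r
      refine Fintype.sum_equiv (Equiv.mulLeft r) _ _ fun s => ?_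
      simp
    rw [Finset.sum_congr rfl (fun r _ => h1 r)]
    rw [Finset.sum_const, Finset.card_univ, ← Nat.card_eq_fintype_card, ← Nat.cast_smul_eq_nsmul ℂ, smul_smul, mul_assoc, inv_mul_cancel₀ hc, mul_one])
  rw [Matrix.trace_smul, Matrix.trace_sum, Finset.sum_eq_single (1 : R)] at hk
  · simp only [OneMemClass.coe_one, map_one, Matrix.trace_one, Fintype.card_fin, smul_eq_mul] at hk
    refine ⟨k, ?_⟩
    have : (3 : ℂ) = Nat.card R * k := by
      rw [← hk, ← mul_assoc, mul_inv_cancel₀ hc, one_mul]; norm_num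
    exact_mod_cast this
  · intro r _ hr
    rw [← hρ]
    exact (faithful_p' P hN hχ hρ hinj (hR r r.2)).resolve_right (fun h => hr (Subtype.ext h))
  · intro h; exact absurd (Finset.mem_univ _) h


/-- The Sylow `p`-subgroups have index `1` or `3`. -/
theorem faithful_index [Fact p.Prime] (P : Par p a m t) (hN : Nat.card G ∣ p ^ a * m) (hχ : χ ∈ IrrK G (Qzeta p))
    (hρ : ∀ g, χ g = (ρ g).trace) (hinj : ∀ g, ρ g = 1 → g = 1) {S : Subgroup G} (hS : ¬ p ∣ S.index) :
    S.index ∣ 3 := by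
  rw [Nat.dvd_iff_prime_pow_dvd_dvd]
  intro q k hq hd
  rcases Nat.eq_zero_or_pos k with rfl | hk
  · simp
  have hqp : q ≠ p := by
    rintro rfl
    exact hS ((dvd_pow_self q hk.ne').trans hd)
  haveI : Fact q.Prime := ⟨hq⟩
  obtain ⟨R, hR⟩ := Sylow.exists_subgroup_card_pow_prime (G := G) q (hd.trans S.index_dvd_card)
  rw [← hR]
  apply faithful_p'_card P hN hχ hρ hinj R
  intro r hr
  have h1 : q ^ k ∣ m := by
    apply Nat.Coprime.dvd_of_dvd_mul_left _ ((hd.trans S.index_dvd_card).trans hN)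
    exact Nat.Coprime.pow _ _ ((Nat.coprime_primes hq P.hp).2 hqp)
  apply orderOf_dvd_iff_pow_eq_one.1
  refine dvd_trans ?_ h1
  rw [← hR]
  exact R.orderOf_dvd_natCard hr

theorem faithful_normal (hG : Odd (Nat.card G)) {S : Subgroup G} (hS : S.index ∣ 3) : S.Normal := by
  rcases (Nat.dvd_prime Nat.prime_three).1 hS with h | h
  · rw [Subgroup.index_eq_one] at h
    rw [h]; infer_instance
  · apply Subgroup.normal_of_index_eq_minFac_card
    rw [h]
    have h3 : 3 ∣ Nat.card G := h ▸ S.index_dvd_card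
    have h1 := Nat.minFac_le_of_dvd (by norm_num) h3
    have h2 : (Nat.card G).minFac.Prime := Nat.minFac_prime (fun h => by rw [h] at h3; norm_num at h3)
    have h4 : (Nat.card G).minFac ≠ 2 := fun h => by
      have := (Nat.minFac_eq_two_iff _).1 h
      exact (Nat.not_even_iff_odd.2 hG) (even_iff_two_dvd.2 this)
    have := h2.two_le
    omega

theorem pg_pow [Fact p.Prime] (P : Par p a m t) (hN : Nat.card G ∣ p ^ a * m) {S : Subgroup G} (hS : IsPGroup p S)
    {z : G} (hz : z ∈ S) : z ^ p ^ a = 1 := by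
  obtain ⟨k, hk⟩ := IsPGroup.iff_orderOf.1 hS ⟨z, hz⟩
  rw [← Subgroup.orderOf_coe] at hk
  apply orderOf_dvd_iff_pow_eq_one.1
  refine Nat.Coprime.dvd_of_dvd_mul_right ?_ ((orderOf_dvd_natCard z).trans hN)
  rw [hk]
  exact P.hc.pow_left k

/-- The `p`-subgroups are abelian. Otherwise some `x` in a `p`-subgroup has a conjugate `z x` with
`z ≠ 1` central in it, and conjugating by powers shows that multiplication by the powers of `z` does not change the
traces of `x`, `x²`, `x³`. -/
theorem faithful_comm [Fact p.Prime] (P : Par p a m t) (hN : Nat.card G ∣ p ^ a * m) (h5 : 5 ≤ p) (hχ : χ ∈ IrrK G (Qzeta p))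
    (hρ : ∀ g, χ g = (ρ g).trace) (hinj : ∀ g, ρ g = 1 → g = 1) {S : Subgroup G} (hS : IsPGroup p S) :
    ∀ x ∈ S, ∀ y ∈ S, x * y = y * x := by
  by_contra hc
  push Not at hc
  obtain ⟨x0, hx0, y0, hy0, hxy0⟩ := hc
  have hne : Nontrivial (S ⧸ center S) := by
    rw [QuotientGroup.nontrivial_iff]
    intro h
    apply hxy0
    have : (⟨y0, hy0⟩ : S) ∈ center S := by rw [h]; trivial
    exact congrArg Subtype.val (Subgroup.mem_center_iff.1 this ⟨x0, hx0⟩)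
  have hq : IsPGroup p (S ⧸ center S) := hS.to_quotient _
  haveI := hq.center_nontrivial
  obtain ⟨⟨c, hc⟩, hc1⟩ := exists_ne (1 : center (S ⧸ center S))
  obtain ⟨x, rfl⟩ := QuotientGroup.mk_surjective c
  have hxZ : x ∉ center S := by
    intro h
    apply hc1
    exact Subtype.ext ((QuotientGroup.eq_one_iff x).2 h)
  rw [Subgroup.mem_center_iff] at hxZ
  push Not at hxZ
  obtain ⟨s, hs⟩ := hxZ
  set z := s * x * s⁻¹ * x⁻¹ with hz
  have hzZ : z ∈ center S := by
    rw [← QuotientGroup.eq_one_iff]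
    have := Subgroup.mem_center_iff.1 hc (s : S ⧸ center S)
    rw [hz]
    change (s : S ⧸ center S) * x * (s : S ⧸ center S)⁻¹ * (x : S ⧸ center S)⁻¹ = 1
    rw [this]; group
  have hzc : ∀ y, Commute z y := fun y => (Subgroup.mem_center_iff.1 hzZ y).symm
  have e1 : s * x * s⁻¹ = z * x := by rw [hz]; group
  have e2 : ∀ i : ℕ, s * x ^ i * s⁻¹ = z ^ i * x ^ i := by
    intro i
    rw [← (hzc x).mul_pow, ← e1, conj_pow]
  have e3 : ∀ i k : ℕ, s ^ k * x ^ i * (s ^ k)⁻¹ = z ^ (i * k) * x ^ i := by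
    intro i k
    induction k with
    | zero => simp
    | succ k ih =>
      have : s ^ (k+1) * x ^ i * (s ^ (k+1))⁻¹ = s * (s ^ k * x ^ i * (s ^ k)⁻¹) * s⁻¹ := by
        rw [pow_succ']; group
      rw [this, ih]
      have h2 : s * (z ^ (i * k) * x ^ i) * s⁻¹ = z ^ (i * k) * (s * x ^ i * s⁻¹) := by
        rw [← mul_assoc, ← ((hzc s).pow_left (i * k)).eq]; group
      rw [h2, e2, ← mul_assoc, ← pow_add, mul_add_one]
  have hza : (z : G) ^ p ^ a = 1 := pg_pow P hN hS z.2
  have : (z : G) = 1 := by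
    apply hinj
    apply eq_one_of_traces (X := ρ x) (Y := ρ (x : G)⁻¹) (n := p ^ a) (pow_pos P.hp.pos _)
    · rw [← map_pow, hza, map_one]
    · exact Commute.map (Commute.map (hzc x).symm S.subtype) ρ
    · rw [← map_mul, mul_inv_cancel, map_one]
    · intro i hi hi3 l
      rw [← map_pow, ← map_pow, ← map_mul, ← hρ, ← hρ]
      obtain ⟨j, hj⟩ := exists_inv_mod P.hp h5 hi hi3 a
      rw [← irr_conj hχ.1 ((x : G) ^ i) ((s : G) ^ (l * j))]
      congr 1
      have h1 := congrArg (Subtype.val) (e3 i (l * j))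
      push_cast at h1
      rw [h1]
      have h2 : (z : G) ^ (i * (l * j)) = (z : G) ^ l := by
        apply pow_congr_mod hza
        have : i * (l * j) = l * (i * j) := by ring
        rw [this]
        simpa using Nat.ModEq.mul_left l hj
      rw [h2]
      have h3 := congrArg Subtype.val (((hzc x).pow_pow l i).eq)
      push_cast at h3
      exact h3.symm
  have h1 : z = 1 := Subtype.ext this
  apply hs
  rw [h1, one_mul] at e1
  exact mul_inv_eq_iff_eq_mul.1 e1

end OddP

/-! ### A normal subgroup of index `3` -/

namespace OddP
open Subgroup

variable {G : Type} [Group G] [Fintype G] {p a m t : ℕ} {χ : G → ℂ} {ρ : G →* Matrix (Fin 3) (Fin 3) ℂ}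

/-- A character of degree `3` is not a multiple of a linear character on a subgroup of index at most `3`. -/
theorem not_scalar (hχ : χ ∈ Irr G) {S : Subgroup G} (hS : S.index ∣ 3)
    (h : ∀ s ∈ S, χ s * χ s⁻¹ = 9) : False := by
  classical
  have h1 := irr_norm hχ
  have h2 : ∀ g, χ g * χ g⁻¹ = ((Complex.normSq (χ g) : ℝ) : ℂ) := fun g => by
    rw [irr_inv hχ, Complex.mul_conj]
  have h3 : ∑ g : G, Complex.normSq (χ g) = Nat.card G := by
    simp only [h2] at h1
    exact_mod_cast h1
  have h4 : ∑ g ∈ Finset.univ.filter (· ∈ S), Complex.normSq (χ g) ≤ ∑ g : G, Complex.normSq (χ g) :=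
    Finset.sum_le_sum_of_subset_of_nonneg (Finset.filter_subset _ _) fun _ _ _ => Complex.normSq_nonneg _
  have h5 : ∑ g ∈ Finset.univ.filter (· ∈ S), Complex.normSq (χ g) = 9 * Nat.card S := by
    rw [Finset.sum_congr rfl (g := fun _ => (9 : ℝ))]
    · rw [Finset.sum_const, nsmul_eq_mul, mul_comm, Nat.card_eq_fintype_card, Fintype.card_subtype]
    · intro g hg
      have := h g (by simpa using hg)
      rw [h2] at this
      exact_mod_cast this
  rw [h5, h3] at h4
  have h6 : 9 * Nat.card S ≤ Nat.card G := by exact_mod_cast h4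
  have h7 := Nat.le_of_dvd (by norm_num) hS
  have h8 := S.card_mul_index
  have h9 : 0 < Nat.card S := Nat.card_pos
  nlinarith

/-- The conclusion of `deg3` for a faithful representation: the subgroup is the Sylow `p`-subgroup. -/
theorem deg3_faithful [Fact p.Prime] (P : Par p a m t) (hN : Nat.card G ∣ p ^ a * m) (h5 : 5 ≤ p)
    (hχ : χ ∈ IrrK G (Qzeta p)) (hρ : ∀ g, χ g = (ρ g).trace)
    (hsc : ∀ E, (∀ g, ρ g * E = E * ρ g) → ∃ c : ℂ, E = c • 1) (hinj : ∀ g, ρ g = 1 → g = 1) :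
    ∃ (S : Subgroup G) (hSn : S.Normal), S.index = 3 ∧ ∃ l : S →* ℂˣ, (∀ s, l s ^ p = 1) ∧
      ∃ (g : G) (s : S), l ⟨g * s * g⁻¹, hSn.conj_mem s s.2 g⟩ ≠ l s := by
  classical
  have hG : Odd (Nat.card G) := Odd.of_dvd_nat P.odd hN
  obtain ⟨S, -, hS⟩ := exists_syl (p := p) (bot_le : (⊥ : Subgroup G) ≤ ⊤) IsPGroup.of_bot
  have hi : ¬ p ∣ S.index := by rw [← Subgroup.relIndex_top_right]; exact hS.not_dvd
  have hi3 := faithful_index P hN hχ hρ hinj hi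
  have hSn := faithful_normal hG hi3
  have hab := faithful_comm P hN h5 hχ hρ hinj hS.pg
  have hχ1 : χ 1 = 3 := by rw [hρ, map_one, Matrix.trace_one]; simp
  obtain ⟨l, hl⟩ := exists_constituent hab (χ := χ) (by rw [hχ1]; norm_num)
  set E : Matrix (Fin 3) (Fin 3) ℂ := ∑ s : S, ((l s⁻¹ : ℂˣ) : ℂ) • ρ s with hE
  have hEt : E.trace ≠ 0 := by
    rw [hE, Matrix.trace_sum]
    simpa only [Matrix.trace_smul, smul_eq_mul, ← hρ] using hl
  have hsE : ∀ s : S, ρ s * E = ((l s : ℂˣ) : ℂ) • E := by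
    intro s
    rw [hE, Finset.mul_sum, Finset.smul_sum]
    refine Fintype.sum_equiv (Equiv.mulLeft s) _ _ fun r => ?_
    simp only [Equiv.coe_mulLeft, mul_inv_rev, map_mul, map_inv, Units.val_mul, Subgroup.coe_mul, smul_smul, mul_smul_comm]
    congr 1
    rw [mul_left_comm, Units.mul_inv, mul_one]
  -- an invariant constituent would make `S` act by scalars
  have hninv : ¬ ∀ (g : G) (s : S), l ⟨g * s * g⁻¹, hSn.conj_mem s s.2 g⟩ = l s := by
    intro hinv
    obtain ⟨c, hc⟩ := hsc E (fun g => by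
      have h1 : ρ g * E * ρ g⁻¹ = E := by
        rw [hE, Finset.mul_sum, Finset.sum_mul]
        refine Fintype.sum_equiv (MulAut.conjNormal g).toEquiv _ _ fun s => ?_
        have h2 : l (MulAut.conjNormal g s)⁻¹ = l s⁻¹ := by
          rw [map_inv, map_inv, ← hinv g s]
          rfl
        change _ = ((l (MulAut.conjNormal g s)⁻¹ : ℂˣ) : ℂ) • ρ (MulAut.conjNormal g s : S)
        rw [h2, MulAut.conjNormal_apply, map_mul, map_mul, mul_smul_comm, smul_mul_assoc]
      calc ρ g * E = ρ g * E * ρ g⁻¹ * ρ g := by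
            rw [mul_assoc, ← map_mul, inv_mul_cancel, map_one, mul_one]
        _ = E * ρ g := by rw [h1])
    have hc0 : c ≠ 0 := by
      rintro rfl
      apply hEt; rw [hc]; simp
    have hsl : ∀ s : S, ρ s = ((l s : ℂˣ) : ℂ) • 1 := by
      intro s
      have := hsE s
      rw [hc, mul_smul_comm, mul_one, smul_comm] at this
      exact smul_right_injective _ hc0 this
    apply not_scalar hχ.1 hi3
    intro s hs
    have h1 := hsl ⟨s, hs⟩
    have h2 := hsl ⟨s, hs⟩⁻¹
    simp only [Subgroup.coe_inv] at h1 h2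
    rw [hρ, hρ, h1, h2, Matrix.trace_smul, Matrix.trace_smul, Matrix.trace_one, map_inv]
    simp only [Fintype.card_fin, smul_eq_mul]
    have h3 := Units.mul_inv (l ⟨s, hs⟩)
    linear_combination 9 * h3
  have hidx : S.index = 3 := by
    rcases (Nat.dvd_prime Nat.prime_three).1 hi3 with h | h
    · exfalso
      rw [Subgroup.index_eq_one] at h
      apply hninv
      intro g s
      congr 1
      apply Subtype.ext
      change g * (s : G) * g⁻¹ = s
      rw [hab g (by rw [h]; trivial) s s.2]; group
    · exact h
  refine ⟨S, hSn, hidx, l, ?_, ?_⟩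
  · intro s
    have : s ^ p = 1 := Subtype.ext (faithful_pel P hN h5 hχ hρ hinj (pg_pow P hN hS.pg s.2))
    rw [← map_pow, this, map_one]
  · push Not at hninv
    exact hninv

end OddP

namespace OddP
open Subgroup

variable {G : Type} [Group G] [Fintype G] {p a m t : ℕ} {χ : G → ℂ}

/-- A character of degree `3` with values in `ℚ(ζ_p)` produces a normal subgroup of index `3` with a non-invariant linear
character of order `p`. -/
theorem deg3 [Fact p.Prime] (P : Par p a m t) (hN : Nat.card G ∣ p ^ a * m) (h5 : 5 ≤ p)
    (hχ : χ ∈ IrrK G (Qzeta p)) (h3 : χ 1 = 3) :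
    ∃ (S : Subgroup G) (hSn : S.Normal), S.index = 3 ∧ ∃ l : S →* ℂˣ, (∀ s, l s ^ p = 1) ∧
      ∃ (g : G) (s : S), l ⟨g * s * g⁻¹, hSn.conj_mem s s.2 g⟩ ≠ l s := by
  classical
  obtain ⟨d, ρ, hρ, hsc⟩ := exists_matrix_schur hχ.1
  have hd : d = 3 := by
    have := hρ 1
    rw [h3, map_one, Matrix.trace_one, Fintype.card_fin] at this
    exact_mod_cast this.symm
  subst hd
  set K := ρ.ker with hK
  let ρ' : G ⧸ K →* Matrix (Fin 3) (Fin 3) ℂ := QuotientGroup.lift K ρ (fun g hg => hg)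
  have hρ' : ∀ g : G, ρ' (QuotientGroup.mk' K g) = ρ g := fun g => rfl
  letI : Fintype (G ⧸ K) := Fintype.ofFinite _
  have hirr : (fun q => (ρ' q).trace) ∈ Irr (G ⧸ K) := by
    apply irr_of_matrix
    have h1 := sum_quotient K (fun q => (ρ' q).trace * (ρ' q⁻¹).trace)
    simp only [← map_inv, hρ', ← hρ] at h1
    rw [irr_norm hχ.1, K.card_eq_card_quotient_mul_card_subgroup] at h1
    have h2 := card_ne K
    apply mul_left_cancel₀ h2
    rw [← h1]; push_cast; ring
  have hk : ∀ q, (ρ' q).trace ∈ Qzeta p := by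
    intro q
    obtain ⟨g, rfl⟩ := QuotientGroup.mk'_surjective K q
    rw [hρ', ← hρ]; exact hχ.2 g
  obtain ⟨S, hSn, hidx, l, hl, g, s, hgs⟩ := deg3_faithful (G := G ⧸ K) P ((Subgroup.card_quotient_dvd_card K).trans hN) h5
    (χ := fun q => (ρ' q).trace) (ρ := ρ') ⟨hirr, hk⟩ (fun _ => rfl)
    (fun E hE => hsc E fun g => hE (QuotientGroup.mk' K g))
    (fun q hq => by
      obtain ⟨g, rfl⟩ := QuotientGroup.mk'_surjective K q
      exact (QuotientGroup.eq_one_iff g).2 hq)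
  obtain ⟨g, rfl⟩ := QuotientGroup.mk'_surjective K g
  obtain ⟨s, hs⟩ := s
  obtain ⟨s, rfl⟩ := QuotientGroup.mk'_surjective K s
  refine ⟨S.comap (QuotientGroup.mk' K), hSn.comap _, ?_, l.comp ((QuotientGroup.mk' K).subgroupComap S), ?_, g, ⟨s, hs⟩, hgs⟩
  · rw [Subgroup.index_comap_of_surjective _ (QuotientGroup.mk'_surjective K), hidx]
  · intro x; exact hl _

end OddP

/-! ### The form `x² - xy + y²` -/

namespace OddP
open Subgroup

/-- As `p ≡ 2 (mod 3)`, the form `x² - xy + y²` is anisotropic over `𝔽_p`. -/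
theorem aniso {p : ℕ} [hp : Fact p.Prime] (hmod : p % 3 = 2) (h5 : 5 ≤ p) {x y : ZMod p} (h : x ^ 2 - x * y + y ^ 2 = 0) :
    x = 0 ∧ y = 0 := by
  have key : y = 0 := by
    by_contra hy
    have h1 : (-(x / y)) ^ 3 = 1 := by
      field_simp
      linear_combination -(x + y) * h
    have h2 : (-(x / y)) ^ (p - 1) = 1 := by
      apply ZMod.pow_card_sub_one_eq_one
      intro h0
      rw [h0] at h1; simp at h1
    have h3 : -(x / y) = 1 := by
      have hc : Nat.gcd 3 (p - 1) = 1 := by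
        rw [← Nat.coprime_iff_gcd_eq_one, Nat.Prime.coprime_iff_not_dvd Nat.prime_three]
        omega
      have := pow_gcd_eq_one.2 ⟨h1, h2⟩
      rwa [hc, pow_one] at this
    have h4 : x = -y := by
      field_simp at h3
      linear_combination -h3
    rw [h4] at h
    have h6 : (3 : ZMod p) * y ^ 2 = 0 := by linear_combination h
    rcases mul_eq_zero.1 h6 with h7 | h7
    · have : ((3 : ℕ) : ZMod p) = 0 := by exact_mod_cast h7
      rw [ZMod.natCast_eq_zero_iff] at this
      have := Nat.le_of_dvd (by norm_num) this
      omega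
    · exact hy (pow_eq_zero_iff two_ne_zero |>.1 h7)
  refine ⟨?_, key⟩
  rw [key] at h
  exact pow_eq_zero_iff two_ne_zero |>.1 (by linear_combination h)

section Abstract
variable {A : Type*} [CommGroup A] {θ : A →* A} {ν : A} {p : ℕ}

/-- `ν` and `θ ν` are independent over `𝔽_p` when `1 + θ + θ²` kills `ν`, which has order `p`. -/
theorem indep [hp : Fact p.Prime] (hmod : p % 3 = 2) (h5 : 5 ≤ p) (hν : ν ^ p = 1) (h1 : ν ≠ 1)
    (hθ : ν * θ ν * θ (θ ν) = 1) {x y : ℤ} (h : ν ^ x * θ ν ^ y = 1) : (x : ZMod p) = 0 ∧ (y : ZMod p) = 0 := by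
  have e : θ (θ ν) = ν⁻¹ * (θ ν)⁻¹ := by
    rw [← mul_inv, eq_inv_iff_mul_eq_one, mul_comm, hθ]
  have h2 : ν ^ (-y) * θ ν ^ (x - y) = 1 := by
    have := congrArg θ h
    rw [map_mul, map_zpow, map_zpow, map_one, e] at this
    rw [← this, mul_zpow, zpow_sub, zpow_neg, inv_zpow, inv_zpow]
    simp only [mul_comm, mul_left_comm, mul_assoc]
  have h3 : ν ^ (x ^ 2 - x * y + y ^ 2) = 1 := by
    have e1 : (ν ^ x * θ ν ^ y) ^ (x - y) * ((ν ^ (-y) * θ ν ^ (x - y)) ^ y)⁻¹ = 1 := by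
      rw [h, h2]; simp
    rw [mul_zpow, mul_zpow, ← zpow_mul, ← zpow_mul, ← zpow_mul, ← zpow_mul, mul_inv, ← zpow_neg, ← zpow_neg, mul_mul_mul_comm, ← zpow_add, ← zpow_add] at e1
    have e2 : y * (x - y) + -((x - y) * y) = 0 := by ring
    rw [e2, zpow_zero, mul_one] at e1
    rw [← e1]; congr 1; ring
  have ho : orderOf ν = p := orderOf_eq_prime hν h1
  have h4 := orderOf_dvd_iff_zpow_eq_one.2 h3
  rw [ho, ← ZMod.intCast_zmod_eq_zero_iff_dvd] at h4
  push_cast at h4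
  exact aniso hmod h5 h4

/-- `θ` has no nontrivial fixed point in `⟨ν, θ ν⟩`. -/
theorem fixed_zero [hp : Fact p.Prime] (hmod : p % 3 = 2) (h5 : 5 ≤ p) (hν : ν ^ p = 1) (h1 : ν ≠ 1)
    (hθ : ν * θ ν * θ (θ ν) = 1) {x y : ℤ} (h : θ (ν ^ x * θ ν ^ y) = ν ^ x * θ ν ^ y) :
    (x : ZMod p) = 0 ∧ (y : ZMod p) = 0 := by
  have e : θ (θ ν) = ν⁻¹ * (θ ν)⁻¹ := by
    rw [← mul_inv, eq_inv_iff_mul_eq_one, mul_comm, hθ]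
  rw [map_mul, map_zpow, map_zpow, e] at h
  have h2 : ν ^ (x + y) * θ ν ^ (2 * y - x) = 1 := by
    have h3 : ν ^ x * θ ν ^ y * (θ ν ^ x * (ν⁻¹ * (θ ν)⁻¹) ^ y)⁻¹ = 1 := by rw [h, mul_inv_cancel]
    rw [← h3]
    generalize θ ν = μ
    rw [mul_zpow, inv_zpow, inv_zpow, mul_inv, mul_inv, inv_inv, inv_inv, zpow_add, two_mul, zpow_sub, zpow_add]
    simp only [mul_comm, mul_left_comm, mul_assoc]
  obtain ⟨h3, h4⟩ := indep hmod h5 hν h1 hθ h2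
  push_cast at h3 h4
  have h6 : (3 : ZMod p) * y = 0 := by linear_combination h3 + h4
  have h7 : (y : ZMod p) = 0 := by
    rcases mul_eq_zero.1 h6 with h7 | h7
    · have : ((3 : ℕ) : ZMod p) = 0 := by exact_mod_cast h7
      rw [ZMod.natCast_eq_zero_iff] at this
      have := Nat.le_of_dvd (by norm_num) this
      omega
    · exact h7
  exact ⟨by linear_combination h3 - h7, h7⟩
end Abstract
end OddP

/-! ### Conjugation and induction of linear characters from index `3` -/

namespace OddP
open Subgroup

variable {G : Type} [Group G] {p : ℕ} (U : Subgroup G) [hU : U.Normal]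

/-- Conjugation by `g` on the linear characters of the normal subgroup `U`. -/
noncomputable def cjh (g : G) : (U →* ℂˣ) →* (U →* ℂˣ) :=
  (MulAut.conjNormal g : MulAut U).toMonoidHom.compHom'

variable {U}

theorem cjh_apply (g : G) (l : U →* ℂˣ) (u : U) :
    cjh U g l u = l ⟨g * u * g⁻¹, hU.conj_mem u u.2 g⟩ := rfl

theorem cjh_one (l : U →* ℂˣ) : cjh U 1 l = l := by
  ext u
  rw [cjh_apply]
  simp

theorem cjh_mul (g h : G) (l : U →* ℂˣ) : cjh U (g * h) l = cjh U h (cjh U g l) := by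
  ext u
  rw [cjh_apply, cjh_apply, cjh_apply]
  congr 2
  simp [mul_assoc]

theorem cjh_mem {g : G} (hg : g ∈ U) (l : U →* ℂˣ) : cjh U g l = l := by
  ext u
  rw [cjh_apply]
  have : (⟨g * u * g⁻¹, hU.conj_mem u u.2 g⟩ : U) = ⟨g, hg⟩ * u * ⟨g, hg⟩⁻¹ := rfl
  rw [this, map_mul, map_mul, map_inv, mul_inv_cancel_comm]

theorem cjh_pow {g : G} {l : U →* ℂˣ} (h : cjh U g l = l) (k : ℕ) : cjh U (g ^ k) l = l := by
  induction k with
  | zero => rw [pow_zero, cjh_one]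
  | succ k ih => rw [pow_succ, cjh_mul, ih, h]

theorem idx3 (h3 : U.index = 3) {x : G} (hx : x ∉ U) (g : G) : ∃ k < 3, ∃ u ∈ U, g = u * x ^ k := by
  haveI : Fact (Nat.Prime 3) := ⟨Nat.prime_three⟩
  have h1 : (x : G ⧸ U) ≠ 1 := fun h => hx ((QuotientGroup.eq_one_iff x).1 h)
  haveI : Finite (G ⧸ U) := Nat.finite_of_card_ne_zero (by change U.index ≠ 0; rw [h3]; norm_num)
  have h2 : (g : G ⧸ U) ∈ Subgroup.zpowers (x : G ⧸ U) := mem_zpowers_of_prime_card (p := 3) h3 h1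
  rw [← mem_powers_iff_mem_zpowers] at h2
  obtain ⟨k, hk⟩ := h2
  have h4 : (x : G ⧸ U) ^ (k % 3) = g := by
    have h6 : (x : G ⧸ U) ^ 3 = 1 := by
      have : Nat.card (G ⧸ U) = 3 := h3
      rw [← this]; exact pow_card_eq_one'
    rw [← pow_eq_pow_mod k h6]; exact hk
  refine ⟨k % 3, Nat.mod_lt _ (by norm_num), g * (x ^ (k % 3))⁻¹, ?_, by group⟩
  rw [← QuotientGroup.eq_one_iff]
  change (g : G ⧸ U) * ((x : G ⧸ U) ^ (k % 3))⁻¹ = 1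
  rw [h4, mul_inv_cancel]

/-- A linear character of `U` that is not `G`-invariant has stabilizer `U`. -/
theorem cjh_fixed (h3 : U.index = 3) {l : U →* ℂˣ} {γ x : G} (hγ : cjh U γ l ≠ l) (h : cjh U x l = l) : x ∈ U := by
  by_contra hx
  obtain ⟨k, -, u, hu, rfl⟩ := idx3 h3 hx γ
  apply hγ
  rw [cjh_mul, cjh_mem hu, cjh_pow h]

theorem cjh_orbit (h3 : U.index = 3) {γ : G} (hγ : γ ∉ U) (l : U →* ℂˣ) (x : G) :
    cjh U x l = l ∨ cjh U x l = cjh U γ l ∨ cjh U x l = cjh U γ (cjh U γ l) := by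
  obtain ⟨k, hk, u, hu, rfl⟩ := idx3 h3 hγ x
  rw [cjh_mul, cjh_mem hu]
  interval_cases k
  · left; rw [pow_zero, cjh_one]
  · right; left; rw [pow_one]
  · right; right; rw [pow_two, cjh_mul]

open Classical in
/-- A linear character of `U`, extended by zero to `G`. -/
noncomputable def ext0 (l : U →* ℂˣ) (g : G) : ℂ := if h : g ∈ U then ((l ⟨g, h⟩ : ℂˣ) : ℂ) else 0

theorem ext0_mem (l : U →* ℂˣ) {g : G} (h : g ∈ U) : ext0 l g = l ⟨g, h⟩ := dif_pos h

theorem ext0_lin (l : U →* ℂˣ) : IsLin U (ext0 l) where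
  zero g hg := dif_neg hg
  mul g hg h := by
    unfold ext0
    by_cases hh : h ∈ U
    · rw [dif_pos (U.mul_mem hg hh), dif_pos hg, dif_pos hh, ← Units.val_mul, ← map_mul]; rfl
    · rw [dif_neg hh, dif_neg (fun h' => hh ((Subgroup.mul_mem_cancel_left _ hg).1 h')), mul_zero]
  one := by
    rw [ext0_mem l U.one_mem]
    change ((l 1 : ℂˣ) : ℂ) = 1
    rw [map_one]; rfl

theorem ext0_conj (l : U →* ℂˣ) (x g : G) : ext0 l (x * g * x⁻¹) = ext0 (cjh U x l) g := by
  by_cases hg : g ∈ U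
  · rw [ext0_mem _ hg, ext0_mem _ (hU.conj_mem g hg x), cjh_apply]
  · rw [(ext0_lin _).zero _ hg, (ext0_lin _).zero]
    intro h
    apply hg
    have := hU.conj_mem _ h x⁻¹
    simpa [mul_assoc] using this

theorem ext0_stab (h3 : U.index = 3) {l : U →* ℂˣ} {γ : G} (hγ : cjh U γ l ≠ l) (x : G)
    (h : ∀ n ∈ U, ext0 l (x * n * x⁻¹) = ext0 l n) : x ∈ U := by
  apply cjh_fixed h3 hγ
  ext u
  have := h u u.2
  rwa [ext0_conj, ext0_mem _ u.2, ext0_mem _ u.2] at this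

variable [Fintype G]

theorem ind_ext0 (h3 : U.index = 3) {l : U →* ℂˣ} {γ : G} (hγ : cjh U γ l ≠ l) (hl : l ∈ AA p U) :
    ind U (ext0 l) ∈ IrrK G (Qzeta p) ∧ ind U (ext0 l) 1 = 3 := by
  refine ⟨⟨ind_irr (ext0_lin l) hU le_rfl (ext0_stab h3 hγ), ind_mem fun g => ?_⟩, ?_⟩
  · by_cases hg : g ∈ U
    · rw [ext0_mem _ hg]
      apply root_mem_Qzeta
      rw [← Units.val_pow_eq_pow_val, mem_AA.1 hl, Units.val_one]
    · rw [(ext0_lin l).zero g hg]; exact zero_mem _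
  · rw [ind_one (ext0_lin l), h3]; norm_num

theorem sum_hom_zero {S : Type} [Group S] [Fintype S] {l l' : S →* ℂˣ} (h : l ≠ l') :
    ∑ s : S, ((l' s⁻¹ : ℂˣ) : ℂ) * ((l s : ℂˣ) : ℂ) = 0 := by
  have h1 : ∃ s, l s ≠ l' s := by
    by_contra hc
    push Not at hc
    exact h (MonoidHom.ext hc)
  obtain ⟨r, hr⟩ := h1
  have h2 : (((l' r⁻¹ * l r : ℂˣ) : ℂ)) * ∑ s : S, ((l' s⁻¹ : ℂˣ) : ℂ) * ((l s : ℂˣ) : ℂ) =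
      ∑ s : S, ((l' s⁻¹ : ℂˣ) : ℂ) * ((l s : ℂˣ) : ℂ) := by
    rw [Finset.mul_sum]
    refine Fintype.sum_equiv (Equiv.mulLeft r) _ _ fun s => ?_
    simp only [Equiv.coe_mulLeft, mul_inv_rev, map_mul, Units.val_mul]
    ring
  have h3 : ((l' r⁻¹ * l r : ℂˣ) : ℂ) - 1 ≠ 0 := fun h => by
    apply hr
    have : l' r⁻¹ * l r = 1 := Units.ext (sub_eq_zero.1 h)
    rw [map_inv, inv_mul_eq_one] at this
    exact this.symm
  apply (mul_eq_zero.1 (_ : (((l' r⁻¹ * l r : ℂˣ) : ℂ) - 1) * _ = 0)).resolve_left h3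
  rw [sub_mul, one_mul, h2, sub_self]

/-- Linear characters of `U` inducing the same character of `G` are conjugate. -/
theorem ind_ext0_eq (h3 : U.index = 3) {l l' : U →* ℂˣ} {γ : G} (hγ : cjh U γ l' ≠ l')
    (h : ind U (ext0 l) = ind U (ext0 l')) : ∃ x, l' = cjh U x l := by
  classical
  by_contra hc
  push Not at hc
  have h1 := ind_E (ext0_lin l') hU le_rfl (ext0_stab h3 hγ) U.one_mem
  rw [(ext0_lin l').one, ← h] at h1
  have h2 : ∑ n : U, ext0 l' (n : G)⁻¹ * ind U (ext0 l) (n * 1) = 0 := by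
    unfold ind
    simp only [mul_one, Finset.mul_sum]
    rw [Finset.sum_comm]
    refine Finset.sum_eq_zero fun x _ => ?_
    have h4 := sum_hom_zero (hc x).symm
    have h6 : ∀ n : U, ext0 l' (n : G)⁻¹ * ((Nat.card U : ℂ)⁻¹ * ext0 l (x * n * x⁻¹)) =
        (Nat.card U : ℂ)⁻¹ * (((l' n⁻¹ : ℂˣ) : ℂ) * ((cjh U x l n : ℂˣ) : ℂ)) := by
      intro n
      rw [ext0_conj, ext0_mem _ n.2, ext0_mem _ (U.inv_mem n.2)]
      rw [mul_left_comm]; rfl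
    rw [Finset.sum_congr rfl fun n _ => h6 n, ← Finset.mul_sum, h4, mul_zero]
  rw [h2, mul_zero] at h1
  exact zero_ne_one h1

end OddP

/-! ### Counting characters of degree `3` -/

namespace OddP
open Subgroup

theorem telescope {A : Type*} [CommGroup A] {θ : A →* A} {l : A} (h : θ (θ (θ l)) = l) :
    (θ l / l) * θ (θ l / l) * θ (θ (θ l / l)) = 1 := by
  simp only [map_div, h]
  rw [mul_comm (θ l / l), div_mul_div_cancel, div_mul_div_cancel, div_self']

theorem ratio_eq {A : Type*} [CommGroup A] {ν μ x y : A} {i i' j j' : ℕ}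
    (h : ν ^ i * μ ^ j * x = ν ^ i' * μ ^ j' * y) : ν ^ ((i : ℤ) - i') * μ ^ ((j : ℤ) - j') = y / x := by
  rw [zpow_sub, zpow_sub, ← div_eq_mul_inv, ← div_eq_mul_inv, div_mul_div_comm, div_eq_div_iff_mul_eq_mul]
  simp only [zpow_natCast]
  rw [h, mul_comm]

variable {G : Type} [Group G] {p : ℕ} {U : Subgroup G} [hU : U.Normal]

theorem cjh_res (g : G) (μ : G →* ℂˣ) : cjh U g (μ.comp U.subtype) = μ.comp U.subtype := by
  ext u
  rw [cjh_apply]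
  simp

/-- Restriction to a subgroup of index `3` is injective on characters with values in the `p`-th roots of
unity, `p ≥ 5`. -/
theorem res_inj [Fact p.Prime] (h5 : 5 ≤ p) (h3 : U.index = 3) {μ μ' : G →* ℂˣ} (hμ : μ ∈ AA p G) (hμ' : μ' ∈ AA p G)
    (h : μ.comp U.subtype = μ'.comp U.subtype) : μ = μ' := by
  rw [← div_eq_one]
  have h1 := (AA p G).div_mem hμ hμ'
  ext1 g
  have h2 : (μ / μ') g ^ p = 1 := mem_AA.1 h1 g
  have h4 : (μ / μ') g ^ 3 = 1 := by
    have hm := U.pow_index_mem g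
    rw [h3] at hm
    have := DFunLike.congr_fun h ⟨g ^ 3, hm⟩
    rw [← map_pow, MonoidHom.div_apply, div_eq_one]
    exact this
  have h6 := pow_gcd_eq_one.2 ⟨h2, h4⟩
  have hc : Nat.gcd p 3 = 1 := (Nat.coprime_primes Fact.out Nat.prime_three).2 (by omega)
  rw [hc, pow_one] at h6
  exact h6

variable [Fintype G]

/-- With `θ` the conjugation by `γ` and `ν = θ l / l`, the products of `ν ^ i (θ ν) ^ j`, where
`(i, j) ≠ (0, 0)` modulo `p`, with the restrictions of the members of `AA p G` are `(p² - 1) |AA p G|` distinct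
non-invariant linear characters of `U`. Each induces a `ℚ(ζ_p)`-valued irreducible character of degree `3`, and at
most three of them induce the same one. -/
theorem count3 [hp : Fact p.Prime] (hmod : p % 3 = 2) (h5 : 5 ≤ p) (h3 : U.index = 3) {l : U →* ℂˣ} (hl : l ∈ AA p U)
    {γ : G} (hγ : cjh U γ l ≠ l) :
    (p ^ 2 - 1) * Nat.card (AA p G) ≤ 3 * {χ ∈ IrrK G (Qzeta p) | χ 1 = 3}.ncard := by
  classical
  have hγU : γ ∉ U := fun h => hγ (cjh_mem h l)
  set θ := cjh U γ with hθd
  have hθ3 : ∀ x, θ (θ (θ x)) = x := by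
    intro x
    rw [hθd, ← cjh_mul, ← cjh_mul]
    apply cjh_mem
    have := U.pow_index_mem γ
    rw [h3] at this
    rwa [pow_succ', pow_two] at this
  have hθA : ∀ x ∈ AA p U, θ x ∈ AA p U := by
    intro x hx
    rw [mem_AA] at hx ⊢
    exact fun u => hx _
  set ν := θ l / l with hν
  have hνA : ν ∈ AA p U := (AA p U).div_mem (hθA l hl) hl
  have hνp : ν ^ p = 1 := by
    ext1 u; exact mem_AA.1 hνA u
  have hν1 : ν ≠ 1 := fun h => hγ (div_eq_one.1 h)
  have hsum : ν * θ ν * θ (θ ν) = 1 := telescope (hθ3 l)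
  letI : Fintype (AA p G) := Fintype.ofFinite _
  let Ψ : (ZMod p × ZMod p) × AA p G → (U →* ℂˣ) := fun q =>
    ν ^ q.1.1.val * θ ν ^ q.1.2.val * (q.2 : G →* ℂˣ).comp U.subtype
  have hcast : ∀ x : ZMod p, ((x.val : ℤ) : ZMod p) = x := fun x => by
    rw [Int.cast_natCast, ZMod.natCast_zmod_val]
  have hΨ : Function.Injective Ψ := by
    rintro ⟨⟨i, j⟩, μ, hμ⟩ ⟨⟨i', j'⟩, μ', hμ'⟩ h
    simp only [Ψ] at h
    have h1 : ν ^ ((i.val : ℤ) - i'.val) * θ ν ^ ((j.val : ℤ) - j'.val) = (μ' / μ).comp U.subtype := by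
      exact ratio_eq (A := U →* ℂˣ) (ν := ν) (μ := θ ν) (x := μ.comp U.subtype) (y := μ'.comp U.subtype)
        (i := i.val) (i' := i'.val) (j := j.val) (j' := j'.val) h
    obtain ⟨h2, h4⟩ := fixed_zero hmod h5 hνp hν1 hsum (x := (i.val : ℤ) - i'.val) (y := (j.val : ℤ) - j'.val)
      (by rw [h1]; exact cjh_res γ _)
    rw [Int.cast_sub, hcast, hcast, sub_eq_zero] at h2 h4
    subst h2; subst h4
    have h6 : μ = μ' := res_inj h5 h3 hμ hμ' (mul_left_cancel h)
    subst h6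
    rfl
  set X : Finset (U →* ℂˣ) := ((Finset.univ.erase (0 : ZMod p × ZMod p)) ×ˢ (Finset.univ : Finset (AA p G))).image Ψ with hX
  have hXc : X.card = (p ^ 2 - 1) * Nat.card (AA p G) := by
    rw [hX, Finset.card_image_of_injective _ hΨ, Finset.card_product, Finset.card_erase_of_mem (Finset.mem_univ _),
      Finset.card_univ, Finset.card_univ, Fintype.card_prod, ZMod.card, Nat.card_eq_fintype_card, pow_two]
  have hXm : ∀ x ∈ X, x ∈ AA p U ∧ θ x ≠ x := by
    intro x hx
    rw [hX, Finset.mem_image] at hx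
    obtain ⟨⟨⟨i, j⟩, μ, hμ⟩, hq, rfl⟩ := hx
    rw [Finset.mem_product, Finset.mem_erase] at hq
    refine ⟨?_, fun hf => hq.1.1 ?_⟩
    · refine (AA p U).mul_mem ((AA p U).mul_mem ((AA p U).pow_mem hνA _) ((AA p U).pow_mem (hθA _ hνA) _)) ?_
      rw [mem_AA]
      exact fun u => mem_AA.1 hμ u
    · simp only [Ψ] at hf
      rw [map_mul θ, show θ (μ.comp U.subtype) = μ.comp U.subtype from cjh_res γ μ] at hf
      obtain ⟨h2, h4⟩ := fixed_zero hmod h5 hνp hν1 hsum (x := (i.val : ℤ)) (y := (j.val : ℤ))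
        (by simp only [zpow_natCast]; exact mul_right_cancel hf)
      rw [hcast] at h2 h4
      exact Prod.ext h2 h4
  rw [← hXc]
  have hfib := Finset.card_le_mul_card_image (f := fun x : U →* ℂˣ => ind U (ext0 x)) X 3 (by
    intro χ hχ
    obtain ⟨x, hx, rfl⟩ := Finset.mem_image.1 hχ
    refine le_trans (Finset.card_le_card (t := {x, θ x, θ (θ x)}) ?_) Finset.card_le_three
    intro y hy
    rw [Finset.mem_filter] at hy
    obtain ⟨g, rfl⟩ := ind_ext0_eq h3 (hXm y hy.1).2 hy.2.symm
    simp only [Finset.mem_insert, Finset.mem_singleton]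
    exact cjh_orbit h3 hγU x g)
  refine hfib.trans (Nat.mul_le_mul_left 3 ?_)
  rw [← Set.ncard_coe_finset]
  apply Set.ncard_le_ncard
  · intro χ hχ
    obtain ⟨x, hx, rfl⟩ := Finset.mem_image.1 (Finset.mem_coe.1 hχ)
    exact ind_ext0 h3 (hXm x hx).2 (hXm x hx).1
  · exact irr_finite.subset fun χ h => h.1.1

end OddP

/-! ### The degree sum -/

namespace OddP
open Subgroup

/-- Comparing the degree sum of `IrrK G k` with `x + y·[χ(1) = 1] + z·[χ(1) = 3]` termwise. -/
theorem deg_sum_ge {G : Type} [Group G] [Fintype G] {k : Subfield ℂ} {x y z : ℝ}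
    (h : ∀ χ ∈ IrrK G k, x + (if χ 1 = 1 then y else 0) + (if χ 1 = 3 then z else 0) ≤ (χ 1).re) :
    x * Nat.card (IrrK G k) + y * {χ ∈ IrrK G k | χ 1 = 1}.ncard + z * {χ ∈ IrrK G k | χ 1 = 3}.ncard
      ≤ ∑ᶠ χ ∈ IrrK G k, (χ 1).re := by
  classical
  have hf : (IrrK G k).Finite := irr_finite.subset fun χ h => h.1
  rw [finsum_mem_eq_finite_toFinset_sum _ hf]
  have h1 := Finset.sum_le_sum (s := hf.toFinset) (fun χ hχ => h χ (hf.mem_toFinset.1 hχ))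
  refine le_trans (le_of_eq ?_) h1
  have hn : ∀ c : ℂ, {χ ∈ IrrK G k | χ 1 = c}.ncard = (hf.toFinset.filter (fun χ => χ 1 = c)).card := by
    intro c
    rw [← Set.ncard_coe_finset]
    congr 1
    ext χ; simp
  rw [Finset.sum_add_distrib, Finset.sum_add_distrib, ← Finset.sum_filter, ← Finset.sum_filter, Finset.sum_const,
    Finset.sum_const, Finset.sum_const, hn, hn, nsmul_eq_mul, nsmul_eq_mul, nsmul_eq_mul, ← Set.ncard_eq_toFinset_card _ hf,
    Nat.card_coe_set_eq]
  ring
end OddP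
open OddP
theorem average_degree_Qp_p_nilpotent_two_mod_three_even
    (G : Type) [Group G] [Fintype G] (hG : Odd (Nat.card G))
    (p : ℕ) (hp : p.Prime) (hpodd : Odd p) (hmod : p % 3 = 2)
    (heven : Even ((p - 1) / 2))
    (h : acdK G (Qzeta p) < 3 * (p : ℝ) ^ 2 / ((p : ℝ) ^ 2 + 2)) :
    HasNormalPComplement G p := by
  haveI : Fact p.Prime := ⟨hp⟩
  have h5 : 5 ≤ p := by
    obtain ⟨k, hk⟩ := hpodd
    omega
  obtain ⟨a, m, t, P, hN⟩ := exists_par hp hpodd hG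
  have hdeg : ∀ χ ∈ IrrK G (Qzeta p), ∃ d : ℕ, χ 1 = d ∧ Odd d := fun χ hχ => by
    obtain ⟨d, hd, -⟩ := irr_deg hχ.1
    exact ⟨d, hd, irr_deg_odd hG hχ.1 hd⟩
  have hpos : 0 < Nat.card (IrrK G (Qzeta p)) := by
    haveI : Finite (IrrK G (Qzeta p)) := (irr_finite.subset fun χ h => h.1)
    haveI : Nonempty (IrrK G (Qzeta p)) := ⟨⟨lin 1, lin_irrK (AA p G).one_mem⟩⟩
    exact Nat.card_pos
  have hn1 : {χ ∈ IrrK G (Qzeta p) | χ 1 = 1}.ncard = Nat.card (AA p G) := by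
    rw [← irrT_eq P hN, lin_ncard P hN]
  have hp2 : (0 : ℝ) < (p : ℝ) ^ 2 + 2 := by positivity
  unfold acdK at h
  have hposR : (0 : ℝ) < Nat.card (IrrK G (Qzeta p)) := by exact_mod_cast hpos
  rw [div_lt_div_iff₀ hposR hp2] at h
  by_cases h3 : ∃ χ ∈ IrrK G (Qzeta p), χ 1 = 3
  · -- the degree `3` characters outweigh the linear ones
    exfalso
    obtain ⟨χ, hχ, hχ3⟩ := h3
    obtain ⟨U, hU, hidx, l, hl, γ, s, hγ⟩ := deg3 P hN h5 hχ hχ3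
    have hc := count3 hmod h5 hidx (l := l) (mem_AA.2 hl) (γ := γ) (fun e => hγ (DFunLike.congr_fun e s))
    have hcR : ((p : ℝ) ^ 2 - 1) * Nat.card (AA p G) ≤ 3 * {χ ∈ IrrK G (Qzeta p) | χ 1 = 3}.ncard := by
      have h1 : 1 ≤ p ^ 2 := Nat.one_le_pow _ _ hp.pos
      have := (Nat.cast_le (α := ℝ)).2 hc
      push_cast [h1] at this
      exact this
    set c : ℝ := 3 * (p : ℝ) ^ 2 / ((p : ℝ) ^ 2 + 2) with hcd
    have hcm : c * ((p : ℝ) ^ 2 + 2) = 3 * (p : ℝ) ^ 2 := div_mul_cancel₀ _ hp2.ne'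
    have hs := deg_sum_ge (G := G) (k := Qzeta p) (x := c) (y := 1 - c) (z := 3 - c) (fun χ hχ => by
      obtain ⟨d, hd, hodd⟩ := hdeg χ hχ
      have hc5 : c ≤ 5 := by nlinarith
      rw [hd]
      by_cases h1 : d = 1
      · subst h1; norm_num
      · by_cases h3 : d = 3
        · subst h3; norm_num
        · have h6 : 5 ≤ d := by obtain ⟨k, hk⟩ := hodd; omega
          have e1 : (d : ℂ) ≠ 1 := by exact_mod_cast h1
          have e3 : (d : ℂ) ≠ 3 := by exact_mod_cast h3
          rw [if_neg e1, if_neg e3]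
          have h7 : (5 : ℝ) ≤ d := by exact_mod_cast h6
          simp only [Complex.natCast_re]
          linarith)
    rw [hn1] at hs
    have h6 := mul_le_mul_of_nonneg_right hs hp2.le
    have h7 : (c * (Nat.card (IrrK G (Qzeta p)) : ℝ) + (1 - c) * Nat.card (AA p G) + (3 - c) * {χ ∈ IrrK G (Qzeta p) | χ 1 = 3}.ncard) * ((p : ℝ) ^ 2 + 2)
        = 3 * (p : ℝ) ^ 2 * Nat.card (IrrK G (Qzeta p)) + 2 * (3 * {χ ∈ IrrK G (Qzeta p) | χ 1 = 3}.ncard - ((p : ℝ) ^ 2 - 1) * Nat.card (AA p G)) := by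
      linear_combination ((Nat.card (IrrK G (Qzeta p)) : ℝ) - Nat.card (AA p G) - {χ ∈ IrrK G (Qzeta p) | χ 1 = 3}.ncard) * hcm
    linarith
  · -- fewer than half of the characters are nonlinear
    apply claim P _ G rfl hN
    have hs := deg_sum_ge (G := G) (k := Qzeta p) (x := 5) (y := -4) (z := 0) (fun χ hχ => by
      obtain ⟨d, hd, hodd⟩ := hdeg χ hχ
      have h3' : d ≠ 3 := fun e => h3 ⟨χ, hχ, by rw [hd, e]; norm_num⟩
      rw [hd]
      by_cases h1 : d = 1
      · subst h1; norm_num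
      · have h6 : 5 ≤ d := by obtain ⟨k, hk⟩ := hodd; omega
        have e1 : (d : ℂ) ≠ 1 := by exact_mod_cast h1
        rw [if_neg e1, ite_self]
        have h7 : (5 : ℝ) ≤ d := by exact_mod_cast h6
        simp only [Complex.natCast_re]
        linarith)
    rw [hn1] at hs
    have h6 : ((Nat.card (IrrK G (Qzeta p)) : ℕ) : ℝ) < 2 * Nat.card (AA p G) := by
      have h7 := mul_le_mul_of_nonneg_right hs hp2.le
      by_contra hge
      push Not at hge
      nlinarith [mul_le_mul_of_nonneg_right hge hp2.le]
    rw [irrT_eq P hN, ← Nat.card_coe_set_eq]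
    exact_mod_cast h6
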